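/- arXiv:1703.02848 — 2 statements merged into one kernel-verified Lean document; each statement's English description precedes it below -/
import Mathlib

section
/- Let n = 63 and let x, y ∈ S_63 be the permutations given in the context, with z = (x·y)⁻¹. Then (x, y, z) is a nice triple; the cycle types of x, y, z are 7^9, 2^28 and 4^12·2^6 respectively; and the subgroup ⟨x, y⟩ of S_63 has cardinality 12096 (the order of Aut(PSU(3,3))). -/
/-- `permInd s` = (sum of the cycle type of `s`) − (number of entries of the cycle type of `s`),
i.e. `n` minus the number of cycles of `s` when fixed points are counted as cycles. -/
def permInd {n : ℕ} (s : Equiv.Perm (Fin n)) : ℕ :=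
  s.cycleType.sum - Multiset.card s.cycleType

/-- A `MulAction` is preprimitive if it is pretransitive and every block is trivial. -/
def IsPreprimitive (G : Type*) (X : Type*) [Group G] [MulAction G X] : Prop :=
  MulAction.IsPretransitive G X ∧
    ∀ B : Set X, MulAction.IsBlock G B → MulAction.IsTrivialBlock B

/-- A triple `(x, y, z)` of permutations in `S_n` is *nice*:
(i) `x * y * z = 1`; (ii) `G = ⟨x, y⟩` is neither the alternating nor the symmetric group;
(iii) `G` acts primitively on `Fin n` and is almost simple; (iv) the triple has genus 0;
(v) the triple is rigid in `G`; (vi) `x`, `y`, `z` lie in rational conjugacy classes of `G`. -/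
def IsNice {n : ℕ} (x y z : Equiv.Perm (Fin n)) : Prop :=
  x * y * z = 1 ∧
  (Subgroup.closure {x, y} ≠ alternatingGroup (Fin n) ∧
    Subgroup.closure {x, y} ≠ ⊤) ∧
  IsPreprimitive (Subgroup.closure {x, y}) (Fin n) ∧
  (∃ S : Subgroup (Subgroup.closure {x, y}), S.Normal ∧ IsSimpleGroup S ∧
    (∃ a b : S, a * b ≠ b * a) ∧
    Subgroup.centralizer (S : Set (Subgroup.closure {x, y})) = ⊥) ∧
  permInd x + permInd y + permInd z = 2 * (n - 1) ∧
  (∀ x' y' z' : Equiv.Perm (Fin n),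
    x' * y' * z' = 1 →
    Subgroup.closure {x', y'} = Subgroup.closure {x, y} →
    (∃ g ∈ Subgroup.closure {x, y}, g * x * g⁻¹ = x') →
    (∃ g ∈ Subgroup.closure {x, y}, g * y * g⁻¹ = y') →
    (∃ g ∈ Subgroup.closure {x, y}, g * z * g⁻¹ = z') →
    ∃ g ∈ Subgroup.closure {x, y},
      g * x * g⁻¹ = x' ∧ g * y * g⁻¹ = y' ∧ g * z * g⁻¹ = z') ∧
  ∀ g ∈ ({x, y, z} : Set (Equiv.Perm (Fin n))), ∀ k : ℤ,
    Int.gcd k (orderOf g) = 1 →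
    ∃ h ∈ Subgroup.closure {x, y}, h * g * h⁻¹ = g ^ k

/-- The permutation given by a list of (disjoint) cycles, each written as a list of points. -/
def permOfCycles {n : ℕ} (cs : List (List (Fin n))) : Equiv.Perm (Fin n) :=
  (cs.map List.formPerm).prod

def x : Equiv.Perm (Fin 63) := permOfCycles [
  [1, 43, 31, 39, 63, 35, 2],
  [3, 17, 24, 21, 20, 55, 53],
  [4, 29, 62, 11, 14, 45, 27],
  [5, 38, 23, 32, 48, 18, 51],
  [6, 13, 36, 47, 25, 8, 61],
  [7, 9, 15, 56, 34, 28, 42],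
  [10, 33, 59, 60, 44, 19, 37],
  [12, 26, 52, 30, 54, 49, 41],
  [16, 40, 57, 50, 22, 46, 58]]

def y : Equiv.Perm (Fin 63) := permOfCycles [
  [2, 53],
  [3, 9],
  [4, 38],
  [5, 29],
  [6, 51],
  [8, 25],
  [10, 19],
  [11, 20],
  [12, 44],
  [13, 43],
  [14, 21],
  [16, 40],
  [17, 32],
  [18, 39],
  [22, 62],
  [23, 30],
  [24, 26],
  [27, 59],
  [33, 54],
  [34, 63],
  [35, 56],
  [36, 55],
  [41, 49],
  [42, 48],
  [45, 60],
  [46, 61],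
  [47, 50],
  [57, 58]]

namespace NT
def NX : ℕ :=
  15264097789260684382490462541275015710080723018598481786722414871848499069620290848424228130206060725865779866349503084460301460357730144734264525230106931821360065006519519721748133558666314583368863189516310501053588653624374992339920083884056422164037289718781909922304799518094151602363299221469183916696818971707995698839805479110019240679868108121873685983591533714723964709876609492977979181681028946328991133886176999500594555983922659818473952412920748673721995954024585022095603883762330020333469942659948487380548360404638145469441283237727274456182355668228666010736253064748184831365173105223975469137533727519571753927141141032788478214475959016637966118368000102907749776403372757161315317131379361128550433378935232383885624768515861116979829977201125173916769862719949054581416000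

def NY : ℕ :=
  218652686997184125057907440997723251492222614741450298239805853306979262694502149534409911776215569960202886664290

def NC : ℕ :=
  7896638541785413597674970389054358809359551046963045637891130372086785509911974358591351298236519979397564075466205358867613161359999280955971893156186078894956627007300165898659028388925586387508942734297341317284504749166407154061789605356814842003480526794239414582882827093574335238688256840243010184998855567140204620160755227646681519977307734075660370690358885377669538831093187125743851846491189488767483102110792666879950308860193643846638008470885778232973472762441377377676321530035938413274354578602424794698295054105639808606702884186893876470299849765752687749211377879995290246649145235990303580702287550231407387168106570676822052328566904185845718523646747346157606161215466439282125067828710079764349145278320413346629661472203374609226330699061352775180650639845571650737734892718850429522995454968974795736490022703440609258605549475468868722258429812655109280264830552375806174251937478954603569315997829437995134261806526879103201334413875857198237429458061419257715077634218159157369134592192068279282775478779602300853173531824654101397534448766582833162828454133439344827851531920526202667415359268081565187485581286006535342812793799716512496578145114765251354157588653133748518444204338548691467164024902253184413193674511286980601221208760161650900584811349121215148477078637714341680640740314685778982553761379466681120006012360344017576899673242649484968664685918690757880452850719962099259816574722698153737593277017757299209694433154806216713130688203247701819234457624217262838287493740173222489681856070316169075202634097817326479630740595627816976177067571598121506680126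817122915163255390444400767595544375680834984503687864966563069203189874724074121324722426792456117466176815678317100470356632220338607921781833724478633710956803853967987996557714657763307876566968035312108875259384167963054197783772591983691380298962166080679600725545004403491879703781198096519754965789940565706446497476990973019297023670859634500006638165594973421510953370453001913697259888417916295904438435819483157158755801414531346953188763379403639823962500398703856562869197201576678866625558202334585309670527113043619223036809143821779471252277669038273885348265104683893702404118824974346935339869735638825937680015623654017165249480180021790268575099290508049357353458655282915539199589762259156287668784567852221811056433557695852088313867648544807252482141851067812

def base : List ℕ := [0,1,5,15]

def F1 : List ℕ := [0,1,5,15,54,25]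

def T0 : List (List ℕ) := [[], [0,3], [0,2], [4,0], [3,6], [0,3,2,0], [1,6], [3,0], [3,4], [1,2],
  [1,6,3,2], [5,2], [0,6,3,2], [1,3], [4,2], [5,0], [0,2,5,4], [5,6], [1,5], [3,6,3,2], [0,3,5,6],
  [0,2,5,6], [0,6,5,4], [0,3,6,4], [0,2,4,0], [4,4], [3,2], [0,2,4,2], [1,0], [2,6], [4,6], [0,5],
  [2,2], [1,3,6,4], [2,5], [0,1], [6,2], [2,6,3,2], [0,2,6,4], [0,6], [0,3,5,4], [0,3,4,6], [6,6],
  [0,4], [1,2,4,6], [0,2,5,2], [5,4], [0,2,6,5], [2,0], [0,2,4,6], [2,4], [6,4], [0,6,4,6], [4,5],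
  [0,3,3,2], [1,4], [3,5], [0,4,5,4], [1,2,5,4], [2,2,5,6], [1,2,5,6], [0,2,4,4], [0,5,4,2]]

def O0 : List ℕ :=
  [0,1,2,3,4,5,6,7,8,9,10,11,12,13,14,15,16,17,18,19,20,21,22,23,24,25,26,27,28,29,30,31,32,33,34,35,36,37,38,39,40,41,42,43,44,45,46,47,48,49,50,51,52,53,54,55,56,57,58,59,60,61,62]

def T1 : List (List ℕ) := [[], [2,6,1], [0,4,2,6,0], [2,4,5,3,0], [6,5,3,0], [2,5,4,3],
  [0,4,3,6,1,0], [2,6,3,5], [5,5,6,4], [0,6,3,4,1], [5,6,3,3], [2,2,3,0], [4,4,3,5], [0,6,5,1,0],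
  [0,4,3], [1,5,3], [0,2,4,6,0], [0,2,5], [4,3,0], [2,6,5,3], [0,4,5,2,3], [1,3,5], [2,2,4,1],
  [4,4,1], [2,4,1,0], [2,4,2,1], [4,2,2,1], [6,1,0], [4,3,4,3], [1,1], [2,2,4,3,5], [6,2,1]]

def O1 : List ℕ :=
  [1,4,5,8,9,11,12,14,17,18,19,20,21,22,23,26,27,28,30,35,37,39,40,43,46,47,50,51,52,55,57,58]

def T2 : List (List ℕ) := [[], [2,5,2,5], [6,4,3,6,4,2]]

def O2 : List ℕ := [5,26,28]

def T3 : List (List ℕ) := [[], [1,3,4,3,3,0]]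

def O3 : List ℕ := [15,45]

def SG : List (List ℕ) := [[1,1], [2,6,3,5]]

def RW : List (List ℕ) := [[], [], [], [2,2,4,1], [], [4,3,2,5], [1,3,2,3], [5,6,1,5], [4,3,4,3],
  [4,2,1,0], [2,5,2,5,1,1], [2,2,3,0], [5,6,3,3], [1,1], [1,4,3,3,1,3], [], [1,4,1,3,2,2],
  [2,4,1,0], [2,2,4,1], [0,4,3,6,1,0], [0,2,2,3], [3,2,1,4], [3,2,5,4,1,3], [3,2,1,4],
  [0,4,3,3,1,2], [6,2,5,3], [0,2,2,3], [2,5,2,5], [2,6,3,5], [0,3,4,4,1,3], [5,6,3,3], [5,6,3,3],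
  [6,4,1,2], [4,2,1,0], [2,4,1,0], [4,2,2,1], [1,3,4,2,1,2], [5,6,1,5], [4,2,2,1], [0,4,3,6,2,1],
  [1,3,2,3], [2,5,2,5], [0,2,2,3], [2,2,3,0], [2,4,2,1], [2,6,3,5], [6,2,5,3], [2,6,3,5],
  [1,3,2,3], [3,2,1,4], [4,6,1,2], [4,4,3,5], [2,4,2,1], [1,1], [2,4,1,0], [1,1], [2,6,3,5],
  [2,2,5,4,1,0], [2,4,1,0], [4,4,3,5], [4,3,2,5], [3,2,1,4], [6,2,3,5]]

def RP : List ℕ := [1,2,4,15]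

def TB : List (List ℕ) := [[0,3], [0,2], [3,6], [5,0]]

def TR : List (List (ℕ × ℕ)) := [[(0,2), (1,0), (1,1), (1,2), (55,1), (55,2), (14,0), (14,1),
  (14,2), (39,0), (39,1), (39,2), (20,0), (20,1), (20,2), (17,0), (12,1), (12,2), (47,0), (47,2),
  (4,1), (28,2), (51,0), (51,1), (51,2), (2,0), (2,1), (2,2), (50,2), (19,2), (3,0), (3,2),
  (52,2), (11,1), (30,1), (30,2), (46,2), (61,0), (61,2), (27,2), (9,2), (22,1), (22,2), (26,2),
  (13,2), (6,1), (58,1), (58,2), (33,0), (33,1), (33,2), (42,1), (42,2), (21,2), (36,2), (62,1),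
  (62,2), (34,0), (43,1), (16,1), (54,1), (32,1)], [(0,2), (2,0), (2,1), (2,2), (13,1), (13,2),
  (6,0), (6,1), (6,2), (43,0), (43,1), (43,2), (62,1), (62,2), (47,0), (47,1), (47,2), (31,1),
  (56,2), (36,1), (36,2), (18,1), (18,2), (37,1), (39,1), (39,2), (7,0), (7,2), (14,0), (14,2),
  (46,1), (46,2), (1,0), (8,1), (3,0), (3,1), (3,2), (28,1), (33,0), (33,1), (33,2), (25,1),
  (57,1), (5,2), (51,1), (35,0), (32,1), (15,0), (15,1), (15,2), (12,1), (12,2), (27,2), (21,1),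
  (55,1), (60,2), (41,1), (30,2), (9,1), (48,1), (52,2), (40,2)], [(0,2), (4,1), (4,2), (27,0),
  (27,1), (27,2), (10,0), (10,1), (30,1), (28,0), (28,2), (37,1), (37,2), (41,1), (41,2), (36,0),
  (36,1), (36,2), (18,0), (18,1), (18,2), (39,1), (39,2), (1,0), (1,1), (1,2), (22,2), (45,2),
  (44,0), (44,1), (44,2), (52,0), (62,1), (33,0), (34,0), (34,1), (34,2), (57,0), (57,2), (55,1),
  (55,2), (14,0), (14,2), (26,0), (26,2), (46,1), (46,2), (2,1), (54,1), (5,2), (7,0), (7,2),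
  (38,1), (48,2), (53,1), (8,1), (59,1), (9,0), (21,1), (6,0), (29,0), (42,0)], [(0,2), (15,0),
  (15,1), (15,2), (53,1), (53,2), (48,1), (7,0), (7,1), (7,2), (49,2), (34,2), (45,2), (32,1),
  (32,2), (13,1), (28,0), (28,1), (28,2), (33,0), (33,1), (33,2), (31,0), (31,1), (31,2), (54,0),
  (54,1), (54,2), (59,1), (59,2), (2,2), (62,0), (62,2), (39,1), (39,2), (4,1), (35,0), (35,1),
  (38,1), (38,2), (10,0), (6,1), (3,1), (1,0), (1,1), (44,1), (24,1), (37,1), (42,2), (21,1),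
  (11,2), (58,1), (17,1), (27,2), (16,2), (60,2), (41,2), (56,2), (61,2), (22,1), (40,1), (5,1)]]

def CW : List (List ℕ) := [[0], [1,2,1], [1,6,0], [2,2,3], [2,3,2], [2,5,0], [3,2,2], [3,3,3],
  [3,4,0], [4,3,0], [5,2,0], [1,2,2,2,0], [1,2,3,1,0], [1,2,5,6,0], [1,3,2,1,0], [1,3,4,6,0],
  [1,4,2,3,1], [1,4,3,4,1], [1,4,3,6,0], [1,4,4,3,0], [1,5,2,2,2], [1,5,2,6,0], [1,5,6,5,0],
  [2,2,4,3,4], [2,2,4,6,1], [2,3,3,2,1], [2,4,3,5,0], [2,4,4,2,0], [2,5,4,3,0], [2,5,6,4,0],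
  [2,6,4,5,1], [4,2,5,3,0], [4,6,5,2,0], [1,2,6,5,2,3,1], [1,3,4,3,2,1,0], [2,3,4,3,3,2,1]]

def CT : List (List (ℕ × ℕ)) := [[(0,0), (0,2), (0,5), (0,8), (0,9), (0,10), (1,1)], [(1,2),
  (6,0), (0,22), (0,29), (4,16), (1,20), (4,11)], [(1,0), (0,1), (2,11), (1,24), (6,16), (0,32),
  (1,13)], [(2,4), (0,11), (6,11), (0,6), (3,15), (5,28), (5,21)], [(2,6), (0,12), (0,3), (2,16),
  (3,27), (3,28), (3,6)], [(2,0), (0,13), (6,13), (2,18), (0,31), (5,5), (1,15)], [(3,3), (0,14),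
  (0,4), (6,4), (0,28), (4,27), (1,16)], [(3,7), (2,7), (1,7), (0,7), (0,19), (0,27), (1,17)],
  [(3,0), (0,15), (4,22), (3,17), (4,8), (1,31), (1,18)], [(4,0), (0,18), (0,26), (3,9), (5,19),
  (4,13), (1,21)], [(5,0), (0,21), (2,10), (1,26), (6,18), (2,22), (1,22)], [(1,3), (6,12), (2,2),
  (3,11), (6,1), (1,14), (2,3)], [(1,4), (6,14), (5,14), (1,33), (3,24), (2,24), (1,11)], [(1,5),
  (6,2), (2,13), (6,32), (5,9), (1,34), (2,5)], [(1,6), (5,11), (0,20), (6,20), (4,33), (2,12),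
  (1,12)], [(1,8), (6,5), (6,31), (4,3), (0,16), (0,24), (2,29)], [(4,15), (6,6), (3,4), (4,21),
  (4,1), (4,25), (4,2)], [(1,19), (6,7), (2,31), (3,8), (4,35), (4,30), (2,19)], [(1,9), (6,8),
  (3,5), (0,34), (4,18), (6,35), (4,10)], [(4,7), (0,17), (6,17), (0,23), (2,34), (4,9), (6,26)],
  [(2,14), (5,1), (3,21), (5,30), (3,35), (2,35), (3,14)], [(1,10), (6,9), (5,32), (2,20), (3,16),
  (6,3), (2,26)], [(2,1), (6,10), (5,10), (5,35), (2,8), (1,29), (6,22)], [(3,19), (3,30), (2,30),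
  (1,30), (6,25), (3,29), (6,24)], [(5,15), (3,2), (5,12), (4,12), (4,34), (3,34), (6,23)],
  [(1,25), (0,25), (0,30), (1,32), (5,16), (6,29), (4,23)], [(2,9), (3,10), (6,21), (4,28),
  (2,27), (1,27), (6,19)], [(5,7), (5,26), (4,26), (4,4), (5,6), (4,31), (3,31)], [(4,6), (2,28),
  (1,28), (5,4), (3,26), (5,3), (5,31)], [(3,1), (5,22), (6,15), (5,23), (5,29), (4,29), (5,25)],
  [(2,25), (3,23), (2,23), (1,23), (5,17), (3,20), (4,32)], [(4,5), (5,8), (2,17), (6,27), (5,27),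
  (6,28), (2,15)], [(5,2), (3,25), (3,32), (2,32), (6,30), (2,21), (3,13)], [(5,34), (3,12),
  (3,33), (2,33), (4,14), (1,35), (6,33)], [(3,18), (5,13), (4,19), (5,24), (4,24), (0,33),
  (0,35)], [(6,34), (5,33), (5,20), (4,20), (4,17), (3,22), (5,18)]]

def HX : List ℕ := [5,4,2,6,5,2,0]

def HZ : List ℕ := [1,2,2,1]

def ZC : List (List (Fin 63)) := [[0,28,42,18], [1,43,36,53], [2,3,15,56], [4,23,54,59],
  [5,62,46,6], [7,9,17,48], [10,37], [11,55,47,22], [12,19,33,49], [13,31,39,51], [14,20],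
  [16,57], [21,45,44,26], [24,52,30,32], [25,61,58,50], [27,60], [29,38], [34,35]]
/-- table of `x ^ a` -/
def tx (a p : ℕ) : ℕ := Nat.mod (Nat.shiftRight NX (Nat.mul 6 (Nat.add (Nat.mul 63 (Nat.mod a 7)) p))) 64
/-- table of `y` -/
def ty (p : ℕ) : ℕ := Nat.mod (Nat.shiftRight NY (Nat.mul 6 p)) 64
/-- orbital colour -/
def col (p q : ℕ) : ℕ := Nat.mod (Nat.shiftRight NC (Nat.mul 2 (Nat.add (Nat.mul 63 p) q))) 4
/-- evaluate a word at a point -/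
def ev (l : List ℕ) (p : ℕ) : ℕ := l.foldr (fun a q => ty (tx a q)) p

def pts : List ℕ := O0

def all2 (f : ℕ → ℕ → Bool) : Bool := pts.all fun p => pts.all fun q => f p q

theorem pts_mem (p : Fin 63) : p.val ∈ pts := by
  revert p; decide +kernel

theorem all_pts {f : ℕ → Bool} (h : pts.all f = true) (p : Fin 63) : f p.val = true :=
  (List.all_eq_true.mp h) _ (pts_mem p)

theorem all2_pts {f : ℕ → ℕ → Bool} (h : all2 f = true) (p q : Fin 63) :
    f p.val q.val = true := all_pts (all_pts (f := fun p => pts.all fun q => f p q) h p) q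

theorem x_tab1 : ∀ p : Fin 63, (x p).val = tx 1 p.val := by decide +kernel
theorem y_tab : ∀ p : Fin 63, (y p).val = ty p.val := by decide +kernel

theorem chk_x : ([0,1,2,3,4,5].all fun a => pts.all fun p =>
    Nat.beq (tx (a+1) p) (tx 1 (tx a p))) = true := by decide +kernel
theorem chk_x0 : (pts.all fun p => Nat.beq (tx 0 p) p && Nat.beq (tx 1 (tx 6 p)) p &&
    Nat.beq (ty (ty p)) p) = true := by
  decide +kernel
theorem chk_col : all2 (fun p q => Nat.beq (col (tx 1 p) (tx 1 q)) (col p q) &&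
    Nat.beq (col (ty p) (ty q)) (col p q)) = true := by decide +kernel

/-- `p` is determined by its colours relative to `F` -/
def det (F : List ℕ) (p : ℕ) : Bool :=
  pts.all fun q => Nat.beq p q || F.any fun f => !(Nat.beq (col f p) (col f q))

theorem chk_det1 : (F1.all fun p => det base p) = true := by decide +kernel
theorem chk_det2 : (pts.all fun p => det F1 p) = true := by decide +kernel

def tvs (O : List ℕ) (T : List (List ℕ)) (F : List ℕ) (b : ℕ) : Bool :=
  (O.zip T).all fun t => Nat.beq (ev t.2 b) t.1 && F.all fun f => Nat.beq (ev t.2 f) f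

def sup (O : List ℕ) (F : List ℕ) (b : ℕ) : Bool :=
  pts.all fun q => O.elem q || F.any fun f => !(Nat.beq (col f b) (col f q))

theorem chk_T : (tvs O0 T0 [] 0 && tvs O1 T1 [0] 1 && tvs O2 T2 [0,1] 5 &&
    tvs O3 T3 [0,1,5] 15) = true := by decide +kernel
theorem chk_O : (sup O0 [] 0 && sup O1 [0] 1 && sup O2 [0,1] 5 && sup O3 [0,1,5] 15) = true := by
  decide +kernel

def evn (l : List ℕ) : Bool := Nat.beq (Nat.mod l.length 2) 0

theorem chk_even : (T0.all evn && SG.all evn && RW.all evn && TB.all evn) = true := by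
  decide +kernel

theorem chk_R : ((pts.zip RW).all fun t => Nat.beq (ev t.2 0) 0 &&
    (Nat.beq t.1 0 || RP.elem (ev t.2 t.1))) = true := by decide +kernel

def walk (gs : List (List ℕ)) : List ℕ → List (ℕ × ℕ) → List ℕ
  | L, [] => L
  | L, (p, k) :: t => if L.elem p then walk gs (ev (gs.getD k []) p :: L) t else []

theorem chk_walk : ((RP.zip (TB.zip TR)).all fun t => Nat.beq (ev t.2.1 0) t.1 &&
    pts.all fun p => (walk (SG ++ [t.2.1]) [0] t.2.2).elem p) = true := by decide +kernel
theorem chk_SG : (SG.all fun g => Nat.beq (ev g 0) 0) = true := by decide +kernel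
/-- `0` is the only common fixed point -/
theorem chk_fix : (pts.all fun p => Nat.beq p 0 || SG.any fun g => !(Nat.beq (ev g p) p)) = true := by
  decide +kernel

def beqW (u v : List ℕ) : Bool := base.all fun b => Nat.beq (ev u b) (ev v b)
def cj (i : ℕ) (c : List ℕ) : List ℕ := 0 :: i :: (c ++ [0, 7 - i])

theorem chk_C : ((CW.zip CT).all fun t => ([0,1,2,3,4,5,6].zip t.2).all fun s =>
    beqW (0 :: (cj s.1 t.1 ++ [0])) (cj s.2.1 (CW.getD s.2.2 [0]))) = true := by
  decide +kernel
def pw (u : List ℕ) : ℕ → List ℕ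
  | 0 => []
  | n + 1 => u ++ pw u n
theorem chk_rig : (CW.all fun c => beqW c [0] || !(beqW (pw (0 :: 1 :: c) 4) []) ||
    beqW (pw (0 :: 1 :: c) 2) []) = true := by decide +kernel
theorem chk_h : (beqW (HX ++ [0,1]) (0 :: 3 :: HX) && beqW (0 :: 1 :: 0 :: HZ ++ [0,1,0]) HZ
    && !(beqW (pw [0,1,0] 2) []) && beqW (pw [0,1,0] 4) []) = true := by decide +kernel
theorem xy_tab : x * y = permOfCycles ZC := by
  apply Equiv.ext; decide +kernel

abbrev P := Equiv.Perm (Fin 63)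
abbrev GG : Subgroup P := Subgroup.closure {x, y}
abbrev SS : Subgroup P := Subgroup.closure {x, y * x * y}

theorem x_mem : x ∈ GG := Subgroup.subset_closure (by simp)
theorem y_mem : y ∈ GG := Subgroup.subset_closure (by simp)
theorem x_memS : x ∈ SS := Subgroup.subset_closure (by simp)
theorem y2 : y * y = 1 := by
  apply Equiv.ext; intro p; apply Fin.ext
  have := all_pts chk_x0 p
  simp only [Bool.and_eq_true, Nat.beq_eq] at this
  rw [Equiv.Perm.mul_apply, y_tab, y_tab, this.2]; rfl

theorem yinv : y⁻¹ = y := inv_eq_of_mul_eq_one_left y2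

theorem x_tab_lt (a : ℕ) (ha : a < 7) (p : Fin 63) : ((x ^ a) p).val = tx a p.val := by
  induction a with
  | zero =>
    have := all_pts chk_x0 p
    simp only [Bool.and_eq_true, Nat.beq_eq] at this
    rw [this.1.1]; rfl
  | succ a ih =>
    have h := (List.all_eq_true.mp chk_x) a (by
      have : a < 6 := by omega
      interval_cases a <;> simp)
    have := all_pts h p
    simp only [Nat.beq_eq] at this
    rw [this, pow_succ', Equiv.Perm.mul_apply, x_tab1, ih (by omega)]

theorem x7 : x ^ 7 = 1 := by
  apply Equiv.ext; intro p; apply Fin.ext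
  have := all_pts chk_x0 p
  simp only [Bool.and_eq_true, Nat.beq_eq] at this
  rw [pow_succ', Equiv.Perm.mul_apply, x_tab1, x_tab_lt 6 (by norm_num), this.1.2]; rfl

theorem x_tab (a : ℕ) (p : Fin 63) : ((x ^ a) p).val = tx a p.val := by
  have h : x ^ a = x ^ (a % 7) := pow_eq_pow_mod a x7
  rw [h, x_tab_lt _ (Nat.mod_lt _ (by norm_num))]
  have : Nat.mod (a % 7) 7 = Nat.mod a 7 := Nat.mod_mod a 7
  simp only [tx, this]

def W (l : List ℕ) : P := l.foldr (fun a g => y * x ^ a * g) 1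

theorem W_nil : W [] = 1 := rfl
theorem W_cons (a : ℕ) (l : List ℕ) : W (a :: l) = y * x ^ a * W l := rfl
theorem W_append (u v : List ℕ) : W (u ++ v) = W u * W v := by
  induction u with
  | nil => simp [W_nil]
  | cons a u ih => simp [W_cons, ih, mul_assoc]

theorem W_val (l : List ℕ) (p : Fin 63) : (W l p).val = ev l p.val := by
  induction l with
  | nil => rfl
  | cons a l ih =>
    rw [W_cons, Equiv.Perm.mul_apply, Equiv.Perm.mul_apply, y_tab, x_tab, ih]; rfl

theorem W_mem (l : List ℕ) : W l ∈ GG := by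
  induction l with
  | nil => exact GG.one_mem
  | cons a l ih => exact GG.mul_mem (GG.mul_mem y_mem (GG.pow_mem x_mem a)) ih

theorem yxy_pow (a : ℕ) : (y * x * y) ^ a = y * x ^ a * y := by
  have := conj_pow (a := y) (b := x) (i := a)
  rwa [yinv] at this

theorem W_memS_aux : ∀ (n : ℕ) (l : List ℕ), l.length = 2 * n → W l ∈ SS := by
  intro n
  induction n with
  | zero =>
    intro l hl
    have : l = [] := List.length_eq_zero_iff.mp (by simpa using hl)
    rw [this]; exact SS.one_mem
  | succ n ih =>
    intro l hl
    match l, hl with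
    | [], hl => simp at hl
    | [a], hl => simp at hl; omega
    | a :: b :: l, hl =>
      have h1 := ih l (by simp at hl; omega)
      rw [W_cons, W_cons]
      have : y * x ^ a * (y * x ^ b * W l) = (y * x * y) ^ a * (x ^ b * W l) := by
        rw [yxy_pow]; group
      rw [this]
      exact SS.mul_mem (SS.pow_mem (Subgroup.subset_closure (by simp)) a)
        (SS.mul_mem (SS.pow_mem x_memS b) h1)

theorem W_memS {l : List ℕ} (h : evn l = true) : W l ∈ SS := by
  simp only [evn, Nat.beq_eq] at h
  have h : l.length % 2 = 0 := h
  exact W_memS_aux (l.length / 2) l (by omega)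

theorem SS_le : SS ≤ GG := by
  rw [Subgroup.closure_le]
  rintro g (rfl | rfl)
  · exact x_mem
  · exact GG.mul_mem (GG.mul_mem y_mem x_mem) y_mem

theorem col_inv {g : P} (hg : g ∈ GG) : ∀ p q : Fin 63,
    col (g p).val (g q).val = col p.val q.val := by
  induction hg using Subgroup.closure_induction with
  | mem g hg =>
    intro p q
    have := all2_pts chk_col p q
    simp only [Bool.and_eq_true, Nat.beq_eq] at this
    rcases hg with rfl | rfl
    · rw [x_tab1, x_tab1, this.1]
    · rw [y_tab, y_tab, this.2]
  | one => intro p q; rfl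
  | mul a b _ _ ha hb => intro p q; rw [Equiv.Perm.mul_apply, Equiv.Perm.mul_apply, ha, hb]
  | inv a _ ha =>
    intro p q
    have := ha (a⁻¹ p) (a⁻¹ q)
    simpa using this.symm

theorem det_fix {g : P} (hg : g ∈ GG) {F : List ℕ} {p : Fin 63} (hF63 : ∀ f ∈ F, f < 63)
    (hF : ∀ f : Fin 63, f.val ∈ F → g f = f) (hd : det F p.val = true) : g p = p := by
  have h := all_pts hd (g p)
  simp only [Bool.or_eq_true, Nat.beq_eq, List.any_eq_true, Bool.not_eq_true'] at h
  rcases h with h | ⟨f, hf, h⟩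
  · exact (Fin.ext h).symm
  · exfalso
    have h1 := col_inv hg ⟨f, hF63 f hf⟩ p
    rw [hF ⟨f, hF63 f hf⟩ hf] at h1
    rw [h1] at h
    have h2 : Nat.beq (col f p.val) (col f p.val) = true := by simp
    simp at h

theorem base_fix {g : P} (hg : g ∈ GG) (hb : ∀ f : Fin 63, f.val ∈ base → g f = f) : g = 1 := by
  apply Equiv.ext; intro p
  have h1 : ∀ f : Fin 63, f.val ∈ F1 → g f = f := fun f hf =>
    det_fix hg (by decide) hb ((List.all_eq_true.mp chk_det1) _ hf)
  exact det_fix hg (by decide) h1 (all_pts chk_det2 p)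

theorem base_eq {g h : P} (hg : g ∈ GG) (hh : h ∈ GG)
    (hb : ∀ f : Fin 63, f.val ∈ base → g f = h f) : g = h := by
  have : h⁻¹ * g = 1 := base_fix (GG.mul_mem (GG.inv_mem hh) hg) (by
    intro f hf
    rw [Equiv.Perm.mul_apply, hb f hf]; simp)
  rw [inv_mul_eq_one] at this
  exact this.symm

theorem W_eq_iff (u v : List ℕ) : beqW u v = true ↔ W u = W v := by
  constructor
  · intro h
    refine base_eq (W_mem u) (W_mem v) fun f hf => Fin.ext ?_
    have := (List.all_eq_true.mp h) _ hf
    rw [W_val, W_val]; simpa using this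
  · intro h
    apply List.all_eq_true.mpr
    intro f hf
    have h63 : f < 63 := (show ∀ f ∈ base, f < 63 by decide) f hf
    have := congrArg (fun g : P => (g ⟨f, h63⟩).val) h
    simp only [W_val] at this
    simpa using this

theorem W_pw (u : List ℕ) (n : ℕ) : W (pw u n) = W u ^ n := by
  induction n with
  | zero => rfl
  | succ n ih => rw [pw, W_append, ih, pow_succ']

theorem W_x (a : ℕ) (l : List ℕ) : W (0 :: a :: l) = x ^ a * W l := by
  rw [W_cons, W_cons, pow_zero, mul_one, ← mul_assoc, ← mul_assoc, y2, one_mul]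
theorem W_y (l : List ℕ) : W (0 :: l) = y * W l := by
  rw [W_cons, pow_zero, mul_one]

/-! ### Cardinality -/

def stab (K : Subgroup P) (b : Fin 63) : Subgroup P where
  carrier := {g | g ∈ K ∧ g b = b}
  one_mem' := ⟨K.one_mem, rfl⟩
  mul_mem' := by
    rintro a c ⟨h1, h2⟩ ⟨h3, h4⟩
    exact ⟨K.mul_mem h1 h3, by rw [Equiv.Perm.mul_apply, h4, h2]⟩
  inv_mem' := by
    rintro a ⟨h1, h2⟩
    exact ⟨K.inv_mem h1, by rw [Equiv.Perm.inv_eq_iff_eq]; exact h2.symm⟩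

theorem mem_stab {K : Subgroup P} {b : Fin 63} {g : P} : g ∈ stab K b ↔ g ∈ K ∧ g b = b := Iff.rfl

theorem card_stab (K : Subgroup P) (b : Fin 63) (O : List ℕ) (hO : O.Nodup)
    (_h63 : ∀ o ∈ O, o < 63)
    (h1 : ∀ g ∈ K, (g b).val ∈ O) (h2 : ∀ o ∈ O, ∃ g ∈ K, (g b).val = o) :
    Nat.card K = O.length * Nat.card (stab K b) := by
  have e1 := Nat.card_congr (MulAction.orbitProdStabilizerEquivGroup K b)
  rw [Nat.card_prod] at e1
  have e2 : Nat.card (MulAction.stabilizer K b) = Nat.card (stab K b) := by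
    refine Nat.card_congr ⟨fun g => ⟨g.1.1, g.1.2, g.2⟩, fun g => ⟨⟨g.1, g.2.1⟩, g.2.2⟩, ?_, ?_⟩
    · intro g; rfl
    · intro g; rfl
  have e3 : Nat.card (MulAction.orbit K b) = O.length := by
    have : Nat.card (MulAction.orbit K b) = Nat.card (O.toFinset : Finset ℕ) := by
      refine Nat.card_congr (Equiv.ofBijective
        (fun t => ⟨t.1.val, ?_⟩) ⟨?_, ?_⟩)
      · obtain ⟨t, ⟨g, hg⟩⟩ := t
        subst hg
        exact List.mem_toFinset.mpr (h1 g.1 g.2)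
      · intro s t h
        exact Subtype.ext (Fin.ext (by simpa using h))
      · rintro ⟨o, ho⟩
        obtain ⟨g, hg, h⟩ := h2 o (List.mem_toFinset.mp ho)
        exact ⟨⟨g b, ⟨⟨g, hg⟩, rfl⟩⟩, Subtype.ext h⟩
    rw [this, Nat.card_eq_fintype_card, Fintype.card_coe, List.toFinset_card_of_nodup hO]
  rw [← e2, ← e3]
  exact e1.symm

theorem tvs_spec {O : List ℕ} {T : List (List ℕ)} {F : List ℕ} {b : Fin 63}
    (h : tvs O T F b.val = true) (hl : O.length = T.length) (o : ℕ) (ho : o ∈ O) :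
    ∃ l ∈ T, (W l b).val = o ∧ ∀ f : Fin 63, f.val ∈ F → W l f = f := by
  obtain ⟨i, hi, rfl⟩ := List.mem_iff_getElem.mp ho
  have hm : (O[i], T[i]'(hl ▸ hi)) ∈ O.zip T := by
    rw [List.mem_iff_getElem]
    exact ⟨i, by simp [← hl, hi], by simp⟩
  have := (List.all_eq_true.mp h) _ hm
  simp only [Bool.and_eq_true, Nat.beq_eq, List.all_eq_true] at this
  refine ⟨_, List.getElem_mem (hl ▸ hi), by rw [W_val, this.1], fun f hf => Fin.ext ?_⟩
  rw [W_val, this.2 _ hf]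

theorem sup_spec {O F : List ℕ} {b : Fin 63} (h : sup O F b.val = true)
    (h63 : ∀ f ∈ F, f < 63) {g : P} (hg : g ∈ GG)
    (hF : ∀ f : Fin 63, f.val ∈ F → g f = f) : (g b).val ∈ O := by
  have h := all_pts h (g b)
  simp only [Bool.or_eq_true, List.elem_eq_mem, decide_eq_true_eq, List.any_eq_true,
    Bool.not_eq_true'] at h
  rcases h with h | ⟨f, hf, h⟩
  · exact h
  · exfalso
    have h1 := col_inv hg ⟨f, h63 f hf⟩ b
    rw [hF ⟨f, h63 f hf⟩ hf] at h1
    rw [h1] at h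
    simp at h

theorem card_GG : Nat.card GG = 12096 := by
  have hT := chk_T
  have hO := chk_O
  simp only [Bool.and_eq_true] at hT hO
  obtain ⟨⟨⟨t0, t1⟩, t2⟩, t3⟩ := hT
  obtain ⟨⟨⟨o0, o1⟩, o2⟩, o3⟩ := hO
  have c0 := card_stab GG 0 O0 (by decide) (by decide)
    (fun g hg => sup_spec (b := 0) o0 (by decide) hg (by simp))
    (fun o ho => by
      obtain ⟨l, -, h, -⟩ := tvs_spec (b := 0) t0 (by decide) o ho
      exact ⟨_, W_mem l, h⟩)
  have f1 : ∀ g : P, (∀ f : Fin 63, f.val ∈ [0] → g f = f) ↔ g 0 = 0 := by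
    intro g
    constructor
    · intro h; exact h 0 (by decide)
    · intro h f hf
      have : f = 0 := by revert hf; revert f; decide +kernel
      rw [this, h]
  have f2 : ∀ g : P, (∀ f : Fin 63, f.val ∈ [0,1] → g f = f) ↔ g 0 = 0 ∧ g 1 = 1 := by
    intro g
    constructor
    · intro h; exact ⟨h 0 (by decide), h 1 (by decide)⟩
    · rintro ⟨h, h'⟩ f hf
      have : f = 0 ∨ f = 1 := by revert hf; revert f; decide +kernel
      rcases this with rfl | rfl <;> assumption
  have f3 : ∀ g : P, (∀ f : Fin 63, f.val ∈ [0,1,5] → g f = f) ↔ g 0 = 0 ∧ g 1 = 1 ∧ g 5 = 5 := by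
    intro g
    constructor
    · intro h; exact ⟨h 0 (by decide), h 1 (by decide), h 5 (by decide)⟩
    · rintro ⟨h, h', h''⟩ f hf
      have : f = 0 ∨ f = 1 ∨ f = 5 := by revert hf; revert f; decide +kernel
      rcases this with rfl | rfl | rfl <;> assumption
  have f4 : ∀ g : P, g 0 = 0 → g 1 = 1 → g 5 = 5 → g 15 = 15 →
      (∀ f : Fin 63, f.val ∈ base → g f = f) := by
    intro g h h' h'' h3 f hf
    have : f = 0 ∨ f = 1 ∨ f = 5 ∨ f = 15 := by revert hf; revert f; decide +kernel
    rcases this with rfl | rfl | rfl | rfl <;> assumption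
  have c1 := card_stab (stab GG 0) 1 O1 (by decide) (by decide)
    (fun g hg => sup_spec (b := 1) o1 (by decide) hg.1 ((f1 g).mpr hg.2))
    (fun o ho => by
      obtain ⟨l, -, h, h'⟩ := tvs_spec (b := 1) t1 (by decide) o ho
      exact ⟨_, ⟨W_mem l, (f1 _).mp h'⟩, h⟩)
  have c2 := card_stab (stab (stab GG 0) 1) 5 O2 (by decide) (by decide)
    (fun g hg => sup_spec (b := 5) o2 (by decide) hg.1.1 ((f2 g).mpr ⟨hg.1.2, hg.2⟩))
    (fun o ho => by
      obtain ⟨l, -, h, h'⟩ := tvs_spec (b := 5) t2 (by decide) o ho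
      have := (f2 _).mp h'
      exact ⟨_, ⟨⟨W_mem l, this.1⟩, this.2⟩, h⟩)
  have c3 := card_stab (stab (stab (stab GG 0) 1) 5) 15 O3 (by decide) (by decide)
    (fun g hg => sup_spec (b := 15) o3 (by decide) hg.1.1.1
      ((f3 g).mpr ⟨hg.1.1.2, hg.1.2, hg.2⟩))
    (fun o ho => by
      obtain ⟨l, -, h, h'⟩ := tvs_spec (b := 15) t3 (by decide) o ho
      have := (f3 _).mp h'
      exact ⟨_, ⟨⟨⟨W_mem l, this.1⟩, this.2.1⟩, this.2.2⟩, h⟩)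
  have c4 : stab (stab (stab (stab GG 0) 1) 5) 15 = ⊥ := by
    rw [Subgroup.eq_bot_iff_forall]
    intro g hg
    exact base_fix hg.1.1.1.1 (f4 g hg.1.1.1.2 hg.1.1.2 hg.1.2 hg.2)
  rw [c0, c1, c2, c3, c4]
  simp [O0, O1, O2, O3]

/-! ### Primitivity -/

theorem T0_even {l : List ℕ} (h : l ∈ T0) : W l ∈ SS := by
  have := chk_even
  simp only [Bool.and_eq_true] at this
  exact W_memS ((List.all_eq_true.mp this.1.1.1) _ h)
theorem SG_even {l : List ℕ} (h : l ∈ SG) : W l ∈ SS := by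
  have := chk_even
  simp only [Bool.and_eq_true] at this
  exact W_memS ((List.all_eq_true.mp this.1.1.2) _ h)
theorem RW_even {l : List ℕ} (h : l ∈ RW) : W l ∈ SS := by
  have := chk_even
  simp only [Bool.and_eq_true] at this
  exact W_memS ((List.all_eq_true.mp this.1.2) _ h)
theorem TB_even {l : List ℕ} (h : l ∈ TB) : W l ∈ SS := by
  have := chk_even
  simp only [Bool.and_eq_true] at this
  exact W_memS ((List.all_eq_true.mp this.2) _ h)

theorem T0_spec (p : Fin 63) : ∃ l ∈ T0, W l 0 = p := by
  have hT := chk_T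
  simp only [Bool.and_eq_true] at hT
  obtain ⟨l, hl, h, -⟩ := tvs_spec (b := 0) hT.1.1.1 (by decide) p.val (pts_mem p)
  exact ⟨l, hl, Fin.ext h⟩

theorem walk_spec {gs : List (List ℕ)} {B : Set (Fin 63)}
    (hgs : ∀ g ∈ gs, ∀ q ∈ B, W g q ∈ B) : ∀ (t : List (ℕ × ℕ)) (L : List ℕ),
    (∀ p : Fin 63, p.val ∈ L → p ∈ B) → (∀ q ∈ L, q < 63) →
    ∀ p : Fin 63, p.val ∈ walk gs L t → p ∈ B := by
  intro t
  induction t with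
  | nil => intro L hL _ p hp; exact hL p hp
  | cons a t ih =>
    obtain ⟨p, k⟩ := a
    intro L hL h63 q hq
    rw [walk] at hq
    split at hq
    · rename_i hp
      have hp : p ∈ L := by simpa using hp
      have hv : ev (gs.getD k []) p = (W (gs.getD k []) ⟨p, h63 p hp⟩).val := (W_val _ ⟨p, _⟩).symm
      refine ih _ ?_ ?_ q hq
      · intro r hr
        rw [List.mem_cons, hv] at hr
        rcases hr with hr | hr
        · rw [Fin.ext hr]
          by_cases hk : k < gs.length
          · have : gs.getD k [] = gs[k] := by simp [List.getD, hk]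
            rw [this]
            exact hgs _ (List.getElem_mem hk) _ (hL _ hp)
          · have : gs.getD k [] = [] := by simp [List.getD]; simp [List.getElem?_eq_none (not_lt.mp hk)]
            rw [this, W_nil]
            exact hL _ hp
        · exact hL r hr
      · intro r hr
        rw [List.mem_cons, hv] at hr
        rcases hr with hr | hr
        · rw [hr]; exact Fin.isLt _
        · exact h63 r hr
    · simp at hq

theorem zip_mem {α β : Type*} {L : List α} {M : List β} {a : α} (h : a ∈ L)
    (hl : L.length = M.length) : ∃ b ∈ M, (a, b) ∈ L.zip M := by
  obtain ⟨i, hi, rfl⟩ := List.mem_iff_getElem.mp h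
  refine ⟨M[i]'(hl ▸ hi), List.getElem_mem _, ?_⟩
  rw [List.mem_iff_getElem]
  exact ⟨i, by simp [← hl, hi], by simp⟩

theorem S_block {B : Set (Fin 63)}
    (hB : ∀ s ∈ SS, (∃ p ∈ B, s p ∈ B) → ∀ q ∈ B, s q ∈ B) (h0 : 0 ∈ B)
    {b : Fin 63} (hb : b ∈ B) (hb0 : b ≠ 0) : B = Set.univ := by
  obtain ⟨w, hw, hz⟩ := zip_mem (M := RW) (pts_mem b) (by decide)
  have h1 := (List.all_eq_true.mp chk_R) _ hz
  simp only [Bool.and_eq_true, Bool.or_eq_true, Nat.beq_eq, List.elem_eq_mem,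
    decide_eq_true_eq] at h1
  obtain ⟨h1, h2⟩ := h1
  have h2 : ev w b.val ∈ RP := by
    rcases h2 with h2 | h2
    · exact absurd (Fin.ext h2) hb0
    · exact h2
  have w0 : W w 0 = 0 := Fin.ext (by rw [W_val]; exact h1)
  have hc : W w b ∈ B := hB _ (RW_even hw) ⟨0, h0, by rw [w0]; exact h0⟩ _ hb
  obtain ⟨⟨t, tr⟩, htm, hz⟩ := zip_mem (M := TB.zip TR) h2 (by decide)
  have ht : t ∈ TB := (List.of_mem_zip htm).1
  have h3 := (List.all_eq_true.mp chk_walk) _ hz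
  simp only [Bool.and_eq_true, Nat.beq_eq] at h3
  obtain ⟨h3, h4⟩ := h3
  have t0 : W t 0 = W w b := Fin.ext (by rw [W_val, W_val]; exact h3)
  apply Set.eq_univ_of_forall
  intro p
  have h5 := all_pts h4 p
  simp only [List.elem_eq_mem, decide_eq_true_eq] at h5
  refine walk_spec (gs := SG ++ [t]) ?_ tr [0] ?_ (by simp) p h5
  · intro g hg
    rw [List.mem_append, List.mem_singleton] at hg
    rcases hg with hg | rfl
    · refine hB _ (SG_even hg) ⟨0, h0, ?_⟩
      have := (List.all_eq_true.mp chk_SG) _ hg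
      simp only [Nat.beq_eq] at this
      have : W g 0 = 0 := Fin.ext (by rw [W_val]; exact this)
      rw [this]; exact h0
    · exact hB _ (TB_even ht) ⟨0, h0, by rw [t0]; exact hc⟩
  · intro q hq
    have : q = 0 := by revert hq; revert q; decide +kernel
    rw [this]; exact h0

open scoped Pointwise in
instance S_prim : MulAction.IsPreprimitive SS (Fin 63) where
  exists_smul_eq p q := by
    obtain ⟨l, hl, h⟩ := T0_spec p
    obtain ⟨m, hm, h'⟩ := T0_spec q
    refine ⟨⟨W m * (W l)⁻¹, SS.mul_mem (T0_even hm) (SS.inv_mem (T0_even hl))⟩, ?_⟩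
    show (W m * (W l)⁻¹) p = q
    rw [← h, ← h']; simp
  isTrivialBlock_of_isBlock := by
    intro B hB
    by_cases hs : B.Subsingleton
    · exact Or.inl hs
    · right
      rw [Set.not_subsingleton_iff] at hs
      obtain ⟨p, hp, q, hq, hpq⟩ := hs
      obtain ⟨l, hl, h⟩ := T0_spec p
      let s : SS := ⟨W l, T0_even hl⟩
      have hs0 : s • (0 : Fin 63) = p := h
      have hB' := hB.translate s⁻¹
      have e : s⁻¹ • B = Set.univ := by
        refine S_block (b := s⁻¹ • q) ?_ ?_ ?_ ?_
        · intro g hg hex r hr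
          obtain ⟨a, ha, ha'⟩ := hex
          have := MulAction.isBlock_iff_smul_eq_of_mem.mp hB' (g := ⟨g, hg⟩) ha ha'
          have h2 := Set.smul_mem_smul_set (a := (⟨g, hg⟩ : SS)) hr
          rw [this] at h2
          exact h2
        · rw [Set.mem_inv_smul_set_iff, hs0]; exact hp
        · exact Set.smul_mem_smul_set hq
        · intro h
          apply hpq
          rw [inv_smul_eq_iff, hs0] at h
          exact h.symm
      have := congrArg (fun C : Set (Fin 63) => s • C) e
      simpa using this

theorem G_prim : IsPreprimitive GG (Fin 63) := by
  constructor
  · constructor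
    intro p q
    obtain ⟨s, hs⟩ := MulAction.exists_smul_eq SS p q
    exact ⟨⟨s.1, SS_le s.2⟩, hs⟩
  · intro B hB
    apply S_prim.isTrivialBlock_of_isBlock
    intro g h hgh
    exact hB (g₁ := ⟨g.1, SS_le g.2⟩) (g₂ := ⟨h.1, SS_le h.2⟩) hgh

theorem card_SS_dvd : Nat.card SS ∣ 12096 := by
  rw [← card_GG]; exact Subgroup.card_dvd_of_le SS_le

theorem mem_normal {N : Subgroup SS} [N.Normal] (h7 : 7 ∣ Nat.card N) {g : SS} (hg : g ^ 7 = 1) :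
    g ∈ N := by
  by_contra h
  have h1 : orderOf (g : SS ⧸ N) = 7 := by
    have : Fact (Nat.Prime 7) := ⟨by norm_num⟩
    apply orderOf_eq_prime
    · rw [← QuotientGroup.mk_pow, hg]; rfl
    · rwa [Ne, QuotientGroup.eq_one_iff]
  have h2 : 7 ∣ Nat.card (SS ⧸ N) := h1 ▸ orderOf_dvd_natCard _
  have h3 : 7 * 7 ∣ Nat.card SS := by
    rw [Subgroup.card_eq_card_quotient_mul_card_subgroup N]
    exact mul_dvd_mul h2 h7
  have := h3.trans card_SS_dvd
  norm_num at this

theorem S_normal_top (N : Subgroup SS) [hN : N.Normal] (hne : N ≠ ⊥) : N = ⊤ := by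
  have hf : MulAction.fixedPoints N (Fin 63) ≠ Set.univ := by
    intro h
    apply hne
    rw [Subgroup.eq_bot_iff_forall]
    intro n hn
    apply Subtype.ext
    apply Equiv.ext
    intro p
    have : p ∈ MulAction.fixedPoints N (Fin 63) := h ▸ Set.mem_univ p
    exact this ⟨n, hn⟩
  have ht : MulAction.IsPretransitive N (Fin 63) :=
    MulAction.IsQuasiPreprimitive.isPretransitive_of_normal hf
  have h7 : 7 ∣ Nat.card N := by
    have e1 := Nat.card_congr (MulAction.orbitProdStabilizerEquivGroup N (0 : Fin 63))
    rw [Nat.card_prod, MulAction.orbit_eq_univ, Nat.card_coe_set_eq, Set.ncard_univ] at e1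
    rw [← e1, Nat.card_eq_fintype_card, Fintype.card_fin]
    exact Dvd.dvd.mul_right (by norm_num) _
  have hx : (⟨x, x_memS⟩ : SS) ∈ N := mem_normal h7 (Subtype.ext x7)
  have hy : (⟨y * x * y, Subgroup.subset_closure (by simp)⟩ : SS) ∈ N :=
    mem_normal h7 (Subtype.ext (by
      show (y * x * y) ^ 7 = 1
      rw [yxy_pow, x7, mul_one, y2]))
  have hle : SS ≤ N.map SS.subtype := by
    rw [Subgroup.closure_le]
    rintro g (rfl | rfl)
    · exact ⟨_, hx, rfl⟩
    · exact ⟨_, hy, rfl⟩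
  rw [eq_top_iff]
  rintro ⟨s, hs⟩ -
  obtain ⟨n, hn, h⟩ := hle hs
  have : n = ⟨s, hs⟩ := Subtype.ext h
  exact this ▸ hn

theorem x_ne_one : x ≠ 1 := by
  intro h
  have := congrArg (fun g : P => g 1) h
  revert this
  decide +kernel

theorem SS_nontriv : Nontrivial SS := by
  rw [Subgroup.nontrivial_iff_exists_ne_one]
  exact ⟨x, x_memS, x_ne_one⟩

theorem SS_simple : IsSimpleGroup SS := by
  rw [isSimpleGroup_iff]
  refine ⟨SS_nontriv, ?_⟩
  intro N hN
  by_cases h : N = ⊥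
  · exact Or.inl h
  · exact Or.inr (S_normal_top N h)

theorem SS_noncomm : x * (y * x * y) ≠ (y * x * y) * x := by
  intro h
  have := congrArg (fun g : P => g 1) h
  revert this
  decide +kernel

theorem centr {c : P} (hc : ∀ s ∈ SS, s * c = c * s) : c = 1 := by
  have c0 : c 0 = 0 := by
    have h := all_pts chk_fix (c 0)
    simp only [Bool.or_eq_true, Nat.beq_eq, List.any_eq_true, Bool.not_eq_true'] at h
    rcases h with h | ⟨g, hg, h⟩
    · exact Fin.ext h
    · exfalso
      have h1 := (List.all_eq_true.mp chk_SG) _ hg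
      simp only [Nat.beq_eq] at h1
      have h1 : W g 0 = 0 := Fin.ext (by rw [W_val]; exact h1)
      have h2 := congrArg (fun f : P => f 0) (hc _ (SG_even hg))
      simp only [Equiv.Perm.mul_apply, h1] at h2
      rw [← W_val, h2] at h
      simp at h
  apply Equiv.ext
  intro p
  obtain ⟨l, hl, rfl⟩ := T0_spec p
  have h2 := congrArg (fun f : P => f 0) (hc _ (T0_even hl))
  simp only [Equiv.Perm.mul_apply, c0] at h2
  exact h2.symm

theorem SS_conj_y {s : P} (hs : s ∈ SS) : y * s * y ∈ SS := by
  induction hs using Subgroup.closure_induction with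
  | mem g hg =>
    rcases hg with rfl | rfl
    · exact Subgroup.subset_closure (by simp)
    · have : y * (y * x * y) * y = x := by
        rw [← mul_assoc, ← mul_assoc, y2, one_mul, mul_assoc, y2, mul_one]
      rw [this]; exact x_memS
  | one => rw [mul_one, y2]; exact SS.one_mem
  | mul a b _ _ ha hb =>
    have : y * (a * b) * y = (y * a * y) * (y * b * y) := by
      have : (y * a * y) * (y * b * y) = y * a * (y * y) * b * y := by group
      rw [this, y2]; group
    rw [this]; exact SS.mul_mem ha hb
  | inv a _ ha =>
    have : y * a⁻¹ * y = (y * a * y)⁻¹ := by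
      simp [mul_inv_rev, yinv, mul_assoc]
    rw [this]; exact SS.inv_mem ha

theorem SS_conj {g : P} (hg : g ∈ GG) : ∀ s ∈ SS, g * s * g⁻¹ ∈ SS := by
  have key : ∀ g ∈ Submonoid.closure ({x, y} ∪ ({x, y} : Set P)⁻¹), ∀ s ∈ SS, g * s * g⁻¹ ∈ SS := by
    intro g hg
    induction hg using Submonoid.closure_induction with
    | mem g hg =>
      intro s hs
      have hx : ∀ s ∈ SS, x * s * x⁻¹ ∈ SS := fun s hs =>
        SS.mul_mem (SS.mul_mem x_memS hs) (SS.inv_mem x_memS)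
      have hx' : ∀ s ∈ SS, x⁻¹ * s * x ∈ SS := fun s hs =>
        SS.mul_mem (SS.mul_mem (SS.inv_mem x_memS) hs) x_memS
      rcases hg with (rfl | rfl) | hg
      · exact hx s hs
      · rw [yinv]; exact SS_conj_y hs
      · rw [Set.mem_inv] at hg
        rcases hg with hg | hg
        · have : g = x⁻¹ := by rw [← hg, inv_inv]
          rw [this, inv_inv]; exact hx' s hs
        · have h1 : g⁻¹ = y := hg
          have : g = y := by rw [← yinv, ← h1, inv_inv]
          rw [h1, this]; exact SS_conj_y hs
    | one => intro s hs; simpa using hs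
    | mul a b _ _ ha hb =>
      intro s hs
      have : a * b * s * (a * b)⁻¹ = a * (b * s * b⁻¹) * a⁻¹ := by group
      rw [this]; exact ha _ (hb s hs)
  apply key
  rw [← Subgroup.closure_toSubmonoid]
  exact hg

theorem almost_simple : ∃ S : Subgroup GG, S.Normal ∧ IsSimpleGroup S ∧
    (∃ a b : S, a * b ≠ b * a) ∧ Subgroup.centralizer (S : Set GG) = ⊥ := by
  refine ⟨SS.subgroupOf GG, ⟨?_⟩, ?_, ?_, ?_⟩
  · intro s hs g
    exact SS_conj g.2 s.1 hs
  · have := SS_simple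
    exact (Subgroup.subgroupOfEquivOfLe SS_le).isSimpleGroup
  · refine ⟨⟨⟨x, x_mem⟩, x_memS⟩, ⟨⟨y * x * y, SS_le (Subgroup.subset_closure (by simp))⟩,
      show y * x * y ∈ SS from Subgroup.subset_closure (by simp)⟩, ?_⟩
    intro h
    exact SS_noncomm (congrArg (fun t => t.1.1) h)
  · rw [Subgroup.eq_bot_iff_forall]
    intro c hc
    rw [Subgroup.mem_centralizer_iff] at hc
    apply Subtype.ext
    apply centr
    intro s hs
    exact congrArg Subtype.val (hc ⟨s, SS_le hs⟩ hs)

/-! ### Cycle types -/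

theorem cycleType_cycles (cs : List (List (Fin 63)))
    (h : (∀ c ∈ cs, c.Nodup ∧ 2 ≤ c.length)) (hd : cs.Pairwise fun a b => ∀ v ∈ a, v ∉ b) :
    (permOfCycles cs).cycleType = ((cs.map List.length : List ℕ) : Multiset ℕ) := by
  unfold permOfCycles
  rw [Equiv.Perm.cycleType_eq (cs.map List.formPerm) rfl]
  · rw [List.map_map]
    congr 1
    apply List.map_congr_left
    intro c hc
    obtain ⟨h1, h2⟩ := h c hc
    simp only [Function.comp]
    rw [List.support_formPerm_of_nodup c h1 (by rintro a rfl; simp at h2),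
      List.toFinset_card_of_nodup h1]
  · intro s hs
    obtain ⟨c, hc, rfl⟩ := List.mem_map.mp hs
    exact List.isCycle_formPerm (h c hc).1 (h c hc).2
  · rw [List.pairwise_map]
    refine hd.imp_of_mem ?_
    intro a b ha hb hab
    exact (List.formPerm_disjoint_iff (h a ha).1 (h b hb).1 (h a ha).2 (h b hb).2).mpr
      (fun v h1 h2 => hab v h1 h2)

theorem ct_x : x.cycleType = Multiset.replicate 9 7 := by
  unfold x
  rw [cycleType_cycles]
  · decide +kernel
  · decide +kernel
  · decide +kernel
theorem ct_y : y.cycleType = Multiset.replicate 28 2 := by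
  unfold y
  rw [cycleType_cycles]
  · decide +kernel
  · decide +kernel
  · decide +kernel
theorem ct_z : ((x * y)⁻¹).cycleType = Multiset.replicate 12 4 + Multiset.replicate 6 2 := by
  rw [Equiv.Perm.cycleType_inv, xy_tab, cycleType_cycles]
  · decide +kernel
  · decide +kernel
  · decide +kernel

/-! ### Rationality -/

theorem rat_of_conj {g h : P} {n : ℕ} (hn : orderOf g = n) (k : ℤ) (m : ℕ) (hh : h ∈ GG)
    {r : ℕ} (hc : h * g * h⁻¹ = g ^ r) (hk : k ≡ ((r ^ m : ℕ) : ℤ) [ZMOD n]) :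
    ∃ h ∈ GG, h * g * h⁻¹ = g ^ k := by
  refine ⟨h ^ m, GG.pow_mem hh m, ?_⟩
  have e : g ^ k = g ^ (r ^ m) := by
    rw [← zpow_natCast, zpow_eq_zpow_iff_modEq, hn]; exact hk
  rw [e]
  clear e hk
  induction m with
  | zero => simp
  | succ m ih =>
    have : h ^ (m + 1) * g * (h ^ (m + 1))⁻¹ = h ^ m * (h * g * h⁻¹) * (h ^ m)⁻¹ := by
      rw [pow_succ]; group
    rw [this, hc, ← conj_pow, ih, ← pow_mul, pow_succ]

theorem chk_h' : W HX * x = x ^ 3 * W HX ∧ x * y * W HZ * (x * y) = W HZ ∧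
    (x * y) ^ 2 ≠ 1 ∧ (x * y) ^ 4 = 1 := by
  have h := chk_h
  simp only [Bool.and_eq_true, Bool.not_eq_true', W_eq_iff, ← Bool.not_eq_true] at h
  obtain ⟨⟨⟨h1, h2⟩, h3⟩, h4⟩ := h
  have e : W [0,1,0] = x * y := by
    rw [W_x, W_y, W_nil, pow_one, mul_one]
  rw [W_pw, e, W_nil] at h3 h4
  rw [W_append, W_x, W_x, W_nil, mul_one, pow_one] at h1
  have e2 : W (0 :: 1 :: 0 :: HZ ++ [0,1,0]) = x * y * W HZ * (x * y) := by
    rw [W_append, W_x, W_y, e, pow_one]; group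
  rw [e2] at h2
  exact ⟨h1, h2, h3, h4⟩

theorem order_x : orderOf x = 7 := by
  have : Fact (Nat.Prime 7) := ⟨by norm_num⟩
  exact orderOf_eq_prime x7 x_ne_one

theorem rat_x (k : ℤ) (hk : Int.gcd k (orderOf x) = 1) : ∃ h ∈ GG, h * x * h⁻¹ = x ^ k := by
  rw [order_x] at hk
  have hc : W HX * x * (W HX)⁻¹ = x ^ 3 := by rw [chk_h'.1]; group
  have hm : k % 7 ≠ 0 := by
    intro h
    have h7 : (7 : ℤ) ∣ k := Int.dvd_of_emod_eq_zero h
    have : ((7 : ℕ) : ℤ) ∣ (Int.gcd k (7 : ℕ) : ℤ) := Int.dvd_coe_gcd h7 (dvd_refl _)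
    rw [hk] at this
    norm_num at this
  have h1 : k % 7 = 1 ∨ k % 7 = 2 ∨ k % 7 = 3 ∨ k % 7 = 4 ∨ k % 7 = 5 ∨ k % 7 = 6 := by omega
  rcases h1 with h | h | h | h | h | h
  · exact rat_of_conj order_x k 0 (W_mem HX) hc (by rw [Int.ModEq]; push_cast; omega)
  · exact rat_of_conj order_x k 2 (W_mem HX) hc (by rw [Int.ModEq]; push_cast; omega)
  · exact rat_of_conj order_x k 1 (W_mem HX) hc (by rw [Int.ModEq]; push_cast; omega)
  · exact rat_of_conj order_x k 4 (W_mem HX) hc (by rw [Int.ModEq]; push_cast; omega)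
  · exact rat_of_conj order_x k 5 (W_mem HX) hc (by rw [Int.ModEq]; push_cast; omega)
  · exact rat_of_conj order_x k 3 (W_mem HX) hc (by rw [Int.ModEq]; push_cast; omega)

theorem order_y : orderOf y = 2 := by
  rw [← Equiv.Perm.lcm_cycleType, ct_y]; decide +kernel
theorem order_z : orderOf (x * y)⁻¹ = 4 := by
  rw [← Equiv.Perm.lcm_cycleType, ct_z]; decide +kernel

theorem odd_of_gcd {k : ℤ} {n : ℕ} (h2 : 2 ∣ n) (hk : Int.gcd k n = 1) : k % 2 = 1 := by
  by_contra h
  have h7 : (2 : ℤ) ∣ k := by omega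
  have : ((2 : ℕ) : ℤ) ∣ (Int.gcd k n : ℤ) := Int.dvd_coe_gcd h7 (by exact_mod_cast h2)
  rw [hk] at this
  norm_num at this

theorem rat_y (k : ℤ) (hk : Int.gcd k (orderOf y) = 1) : ∃ h ∈ GG, h * y * h⁻¹ = y ^ k := by
  rw [order_y] at hk
  have := odd_of_gcd (dvd_refl 2) hk
  exact rat_of_conj order_y k 0 GG.one_mem (r := 1) (by simp) (by rw [Int.ModEq]; push_cast; omega)

theorem z4 : ((x * y)⁻¹) ^ 3 = x * y := by
  have := chk_h'.2.2.2
  rw [inv_pow, inv_eq_iff_mul_eq_one, ← pow_succ, this]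

theorem rat_z (k : ℤ) (hk : Int.gcd k (orderOf (x * y)⁻¹) = 1) :
    ∃ h ∈ GG, h * (x * y)⁻¹ * h⁻¹ = ((x * y)⁻¹) ^ k := by
  rw [order_z] at hk
  have := odd_of_gcd (by norm_num) hk
  have hc : W HZ * (x * y)⁻¹ * (W HZ)⁻¹ = ((x * y)⁻¹) ^ 3 := by
    rw [z4, mul_inv_eq_iff_eq_mul, mul_inv_eq_iff_eq_mul]
    exact chk_h'.2.1.symm
  have h1 : k % 4 = 1 ∨ k % 4 = 3 := by omega
  rcases h1 with h | h
  · exact rat_of_conj order_z k 0 (W_mem HZ) hc (by rw [Int.ModEq]; push_cast; omega)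
  · exact rat_of_conj order_z k 1 (W_mem HZ) hc (by rw [Int.ModEq]; push_cast; omega)

/-! ### Rigidity -/

def InC (t : P) : Prop := ∃ i < 7, ∃ c ∈ CW, t = W (cj i c)

theorem W_cj (i : ℕ) (c : List ℕ) : W (cj i c) = x ^ i * W c * x ^ (7 - i) := by
  rw [cj, W_x, W_append, W_x, W_nil, mul_one, mul_assoc]

theorem xinv_pow {i : ℕ} (hi : i ≤ 7) : x ^ (7 - i) = (x ^ i)⁻¹ := by
  rw [eq_inv_iff_mul_eq_one, ← pow_add, Nat.sub_add_cancel hi, x7]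

theorem InC_x {t : P} (h : InC t) : InC (x * t * x⁻¹) := by
  obtain ⟨i, hi, c, hc, rfl⟩ := h
  have key : ∀ j ≤ 7, W (cj j c) = x ^ j * W c * (x ^ j)⁻¹ := by
    intro j hj; rw [W_cj, xinv_pow hj]
  have e : x * W (cj i c) * x⁻¹ = x ^ (i+1) * W c * (x ^ (i+1))⁻¹ := by
    rw [key i hi.le, pow_succ']; group
  rw [e]
  rcases Nat.lt_or_ge i 6 with h | h
  · exact ⟨i + 1, by omega, c, hc, (key _ (by omega)).symm⟩
  · have : i = 6 := by omega
    subst this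
    refine ⟨0, by omega, c, hc, ?_⟩
    rw [key 0 (by omega), x7, pow_zero]

theorem InC_y {t : P} (h : InC t) : InC (y * t * y) := by
  obtain ⟨i, hi, c, hc, rfl⟩ := h
  obtain ⟨ct, hct, hz⟩ := zip_mem (M := CT) hc (by decide)
  have h1 := (List.all_eq_true.mp chk_C) _ hz
  have hl : ([0,1,2,3,4,5,6] : List ℕ).length = ct.length :=
    (show ∀ r ∈ CT, ([0,1,2,3,4,5,6] : List ℕ).length = r.length by decide +kernel) ct hct
  obtain ⟨⟨i', j'⟩, hs, hz'⟩ := zip_mem (L := [0,1,2,3,4,5,6]) (a := i) (M := ct)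
    (by interval_cases i <;> simp) hl
  have h2 := (List.all_eq_true.mp h1) _ hz'
  have h3 := (W_eq_iff _ _).mp h2
  simp only at h3
  have hb := (show ∀ r ∈ CT, ∀ s ∈ r, s.1 < 7 ∧ CW.getD s.2 [0] ∈ CW by decide +kernel) ct hct _ hs
  refine ⟨i', hb.1, _, hb.2, ?_⟩
  rw [← h3, W_y, W_append, W_y, W_nil, mul_one, mul_assoc]

theorem InC_conj {g : P} (hg : g ∈ GG) : ∀ t, InC t → InC (g * t * g⁻¹) := by
  have hxp : ∀ (n : ℕ) t, InC t → InC (x ^ n * t * (x ^ n)⁻¹) := by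
    intro n
    induction n with
    | zero => intro t ht; simpa using ht
    | succ n ih =>
      intro t ht
      have : x ^ (n+1) * t * (x ^ (n+1))⁻¹ = x * (x ^ n * t * (x ^ n)⁻¹) * x⁻¹ := by
        rw [pow_succ']; group
      rw [this]; exact InC_x (ih t ht)
  have hx6 : x⁻¹ = x ^ 6 := by
    rw [inv_eq_iff_mul_eq_one, ← pow_succ', x7]
  have key : ∀ g ∈ Submonoid.closure ({x, y} ∪ ({x, y} : Set P)⁻¹), ∀ t, InC t →
      InC (g * t * g⁻¹) := by
    intro g hg
    induction hg using Submonoid.closure_induction with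
    | mem g hg =>
      intro t ht
      rcases hg with (rfl | rfl) | hg
      · exact InC_x ht
      · rw [yinv]; exact InC_y ht
      · rw [Set.mem_inv] at hg
        rcases hg with hg | hg
        · have : g = x ^ 6 := by rw [← hx6, ← hg, inv_inv]
          rw [this]; exact hxp 6 t ht
        · have h1 : g⁻¹ = y := hg
          have : g = y := by rw [← yinv, ← h1, inv_inv]
          rw [h1, this]; exact InC_y ht
    | one => intro t ht; simpa using ht
    | mul a b _ _ ha hb =>
      intro t ht
      have : a * b * t * (a * b)⁻¹ = a * (b * t * b⁻¹) * a⁻¹ := by group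
      rw [this]; exact ha _ (hb t ht)
  apply key
  rw [← Subgroup.closure_toSubmonoid]
  exact hg

theorem InC_self : InC y := by
  refine ⟨0, by omega, [0], by decide, ?_⟩
  rw [W_cj, W_y, W_nil, pow_zero, one_mul, mul_one, Nat.sub_zero, x7, mul_one]

theorem rig_core {t : P} (h : InC t) (h4 : (x * t) ^ 4 = 1) (h2 : (x * t) ^ 2 ≠ 1) :
    ∃ i : ℕ, t = x ^ i * y * (x ^ i)⁻¹ := by
  obtain ⟨i, hi, c, hc, rfl⟩ := h
  have e : x * W (cj i c) = x ^ i * (x * W c) * (x ^ i)⁻¹ := by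
    rw [W_cj, xinv_pow hi.le]
    have : x * x ^ i = x ^ i * x := (pow_succ' x i).symm.trans (pow_succ x i)
    rw [← mul_assoc, ← mul_assoc, this, ← mul_assoc]
  rw [e, conj_pow] at h4 h2
  have h4' : (x * W c) ^ 4 = 1 := by simpa using h4
  have h2' : (x * W c) ^ 2 ≠ 1 := fun h => h2 (by rw [h]; simp)
  have h := (List.all_eq_true.mp chk_rig) _ hc
  simp only [Bool.or_eq_true, Bool.not_eq_true', W_eq_iff, ← Bool.not_eq_true, W_pw, W_x, W_nil,
    pow_one] at h
  rcases h with (h | h) | h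
  · refine ⟨i, ?_⟩
    rw [W_cj, h, W_y, W_nil, mul_one, xinv_pow hi.le]
  · exact absurd h4' h
  · exact absurd h h2'

theorem rigid (x' y' z' : P) (hp : x' * y' * z' = 1)
    (hx : ∃ g ∈ GG, g * x * g⁻¹ = x') (hy : ∃ g ∈ GG, g * y * g⁻¹ = y')
    (hz : ∃ g ∈ GG, g * (x * y)⁻¹ * g⁻¹ = z') :
    ∃ g ∈ GG, g * x * g⁻¹ = x' ∧ g * y * g⁻¹ = y' ∧ g * (x * y)⁻¹ * g⁻¹ = z' := by
  obtain ⟨a, ha, hx⟩ := hx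
  obtain ⟨b, hb, hy⟩ := hy
  obtain ⟨c, hc, hz⟩ := hz
  have hzz : z' = (x' * y')⁻¹ := (inv_eq_of_mul_eq_one_right hp).symm
  have ht : InC (a⁻¹ * y' * a) := by
    have := InC_conj (GG.mul_mem (GG.inv_mem ha) hb) y InC_self
    have e : a⁻¹ * b * y * (a⁻¹ * b)⁻¹ = a⁻¹ * y' * a := by rw [← hy]; group
    rwa [e] at this
  have hxy : x * (a⁻¹ * y' * a) = (a⁻¹ * c) * (x * y) * (a⁻¹ * c)⁻¹ := by
    have e1 : x * (a⁻¹ * y' * a) = a⁻¹ * (x' * y') * a := by rw [← hx]; group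
    have e2 : x' * y' = c * (x * y) * c⁻¹ := by
      rw [← inv_inj, ← hzz, ← hz]; group
    rw [e1, e2]; group
  obtain ⟨i, hi⟩ := rig_core ht
    (by rw [hxy, conj_pow, chk_h'.2.2.2]; simp)
    (by
      rw [hxy, conj_pow]
      intro h
      exact chk_h'.2.2.1 (conj_eq_one_iff.mp h))
  have r1 : a * x ^ i * x * (a * x ^ i)⁻¹ = x' := by
    have : x ^ i * x = x * x ^ i := (pow_succ x i).symm.trans (pow_succ' x i)
    rw [mul_assoc a, this, ← hx]; group
  have r2 : a * x ^ i * y * (a * x ^ i)⁻¹ = y' := by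
    have : a * x ^ i * y * (a * x ^ i)⁻¹ = a * (x ^ i * y * (x ^ i)⁻¹) * a⁻¹ := by group
    rw [this, ← hi]; group
  refine ⟨a * x ^ i, GG.mul_mem ha (GG.pow_mem x_mem i), r1, r2, ?_⟩
  rw [hzz, ← r1, ← r2]; group

theorem card_S : Nat.card P = Nat.factorial 63 := by
  rw [Nat.card_eq_fintype_card, Fintype.card_perm, Fintype.card_fin]

theorem ne_top : GG ≠ ⊤ := by
  intro h
  have := card_GG
  rw [h, Subgroup.card_top, card_S] at this
  exact absurd this (by decide +kernel)

theorem ne_alt : GG ≠ alternatingGroup (Fin 63) := by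
  intro h
  have := card_GG
  have h2 : 2 * Nat.card (alternatingGroup (Fin 63)) = Nat.card P := two_mul_nat_card_alternatingGroup
  rw [← h, card_GG, card_S] at h2
  exact absurd h2 (by decide +kernel)

theorem prod_one (a b : P) : a * b * (a * b)⁻¹ = 1 := mul_inv_cancel _

theorem permInd_eq {s : P} {m : Multiset ℕ} (h : s.cycleType = m) :
    permInd s = m.sum - Multiset.card m := by
  rw [permInd, h]

theorem ind_sum {a b c a' b' c' : ℕ} (ha : a = a') (hb : b = b') (hc : c = c')
    (h : a' + b' + c' = 2 * (63 - 1)) : a + b + c = 2 * (63 - 1) := by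
  subst ha hb hc; exact h

theorem genus : permInd x + permInd y + permInd (x * y)⁻¹ = 2 * (63 - 1) :=
  ind_sum (permInd_eq ct_x) (permInd_eq ct_y) (permInd_eq ct_z) (by
    simp only [Multiset.sum_add, Multiset.card_add, Multiset.sum_replicate,
      Multiset.card_replicate, smul_eq_mul]
    norm_num)

theorem rat_all (g : P) (hg : g ∈ ({x, y, (x * y)⁻¹} : Set P)) (k : ℤ)
    (hk : Int.gcd k (orderOf g) = 1) : ∃ h ∈ GG, h * g * h⁻¹ = g ^ k := by
  rcases hg with h | h | h
  · rw [h] at hk ⊢; exact rat_x k hk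
  · rw [h] at hk ⊢; exact rat_y k hk
  · have h : g = (x * y)⁻¹ := h
    rw [h] at hk ⊢; exact rat_z k hk

end NT

theorem nice_triple_deg63_stmt6 :
    IsNice x y (x * y)⁻¹ ∧
    x.cycleType = Multiset.replicate 9 7 ∧
    y.cycleType = Multiset.replicate 28 2 ∧
    ((x * y)⁻¹).cycleType = Multiset.replicate 12 4 + Multiset.replicate 6 2 ∧
    Nat.card ↥(Subgroup.closure {x, y} : Subgroup (Equiv.Perm (Fin 63))) = 12096 := by
  refine ⟨⟨NT.prod_one x y, ⟨NT.ne_alt, NT.ne_top⟩, NT.G_prim, NT.almost_simple, NT.genus, ?_,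
    NT.rat_all⟩, NT.ct_x, NT.ct_y, NT.ct_z, NT.card_GG⟩
  intro x' y' z' hp _ hx hy hz
  exact NT.rigid x' y' z' hp hx hy hz
end

section
/- With p, q ∈ ℚ[X] as in the context (the Belyi map of degree 85 for PSp(4,4):2), the polynomial F = p − t·q ∈ K[X] has degree 85, is irreducible over K = ℚ(t), and its Galois group Polynomial.Gal F (the Galois group of the splitting field of F over K) has cardinality 1958400, the order of PSp(4,4):2. -/
open Polynomial

noncomputable section

def q : Polynomial ℚ :=
    X * (5 * X ^ 3 + 20 * X ^ 2 + 20 * X + 6) ^ 2 * (5 * X ^ 4 + 10 * X ^ 3 - 14 * X - 10) ^ 4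
    * (5 * X ^ 4 + 10 * X ^ 3 - 8 * X - 4) ^ 2 * (5 * X ^ 6 + 30 * X ^ 5 + 60 * X ^ 4 + 8 * X
    ^ 3 - 48 * X ^ 2 - 24 * X - 4) * (625 * X ^ 12 + 3750 * X ^ 11 + 7500 * X ^ 10 + 3500 * X
    ^ 9 - 3750 * X ^ 8 - 1500 * X ^ 7 + 2700 * X ^ 6 + 3000 * X ^ 5 + 2100 * X ^ 4 + 1040 * X
    ^ 3 + 240 * X ^ 2 - 8) ^ 4

def r : Polynomial ℚ :=
    -2 ^ 24 * (5 * X ^ 2 + 5 * X + 2) ^ 5 * (5 * X ^ 4 + 10 * X ^ 3 - 5 * X - 1) ^ 15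

def p : Polynomial ℚ := q + r

/-- `F = p − t·q ∈ K[X]` where `K = ℚ(t)` and `t = RatFunc.X`. -/
def F : Polynomial (RatFunc ℚ) :=
  p.map (algebraMap ℚ (RatFunc ℚ)) - Polynomial.C RatFunc.X * q.map (algebraMap ℚ (RatFunc ℚ))

end

namespace B85
def adjN : Nat :=
  3443778626795440648544044742770195828220787738237581116804888688028205837670978887116661423635015491399742618103366539864207148408003062202497595938562577451578476071368684277172719564170994483794421348212486012184465458714746009227245976748192247231676592163038968559390203611494233347115917668566796588627912347119903335583956649763038527152185734813186705868808254445088585529722240531037725529308876906808374908588852158546929623031909530007911409326400305542635559162959134583777322531860617776798280816650319586754003000201512988734091872631625637693329203239485930444609744482059730923485049110530099952217650011796191308154067188140679891301608546477137848950609636089890827409110203853533273461631617673877277182632789680313933502377744158226089610377224318092474525732303929887200944213139556203238434126287205783743518407428410035011977087700612436414171295247648436207392030881264017149602093059086153443608960296741628816864577065404057790675839782506563992745933356492472277342207853439534212157505311816485560181166266483088381995270674275794772410745089260617054459734463389014490006924735333910270061910631249431973418077720457572691706985916809210813112181271972604458486932702885208706864860063338237320054325929794348580862007229901157058594597403949214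390265552154574678579264327151191613741742873691726170649806048009426352399014201081419924778668587150974910044239046212032293945428380852470694287948786990255893329223887360122348641294415619969224949822431379972732568525356328319304102645143325144097659670685073665204338706911721320552570701071535388466909136305932359726043310144703887480553699015120622282817407857059829017412611691700997580131039596347122630555447017366652321668409683785806792724372504995027984281074954356672486492761807114364112749858470746391277519275403937197089768696080308964685343796775631687014877665843197017330779606613258221507431890350740673695069255317802469497374134081834899212928450383221849614844240739010248895439711698195271789203638205906074708589149493007307349042878701226555370411004574922211729259391743063319932408130923059022925189357540354446713746797147490418417151660500005565742726722623640352
def gN : Nat := 69558438206068764085986519637544426543115110896587582838823747740960266253269433316493947601556091362023048893061312233268628433595705161495029844261482603300084017556839355957505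
def gI : Nat := 84738464287939553333128175342753813479591077797408783721059130123331384757964184311931146633690742518816003305067692639788394765935222671791483347962350221574018854329234564857872
def kN : Nat := 81651218594863116629513299581801318841016525618037332191222432421241181482081779186536070148649030564359960984517061799947133841951027966152696537363108893396860153546558891510417
def kI : Nat := 69463029548621744304842631675645691627407660806753307010200651869618097380675954409592886885713931329721063410026890645541014353217693125030703425596540379763005459847867561150871
def gaN : Nat := 15497070934259547455869913186317533532112585230511839987705478278937853516643940326415083087461943527656260004914033996850339147067075509253118660818155798588197201266189282354228
def gaI : Nat := 11401659731943593781435283030282600058817760178337345909534106295603935862539990444296559253790210243058244844558862773800712099438598646730398469871695336976652111134467199816725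
def gbN : Nat := 51223190635008464406407835172633261249045529155249203400112730986160495825329855258293850395966810902668780662434482313051634977193783752958516778324629273141827026992886983512865
def gbI : Nat := 31881160280158904793256875529579904735377984555451587602000027461521018384722325801845773938752813896121610045923133161226818121387321428975822913704210279162877832036509140642088
def s0N : Nat := 85757185829236436726843951107157430246930339917805277426916128461756029737258360576437168210146431790778995537088964246692560186434194944601902616318405685855447347413484696682624
def s0I : Nat := 85757185829236436726843951107157430246930339917805277426916128461756029737258360576437168210146431790778995537088964246692560186434194944601902616318405685855447347413484696682624
def s1N : Nat := 24973291476094484164289641318621107203717191859533786693634100264826492680542056090625230808733315278881164014612825819407592593868824419366794010925804176254079398364584680308864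
def s1I : Nat := 24973291476094484164289641318621107203717191859533786693634100264826492680542056090625230808733315278881164014612825819407592593868824419366794010925804176254079398364584680308864
def s2N : Nat := 85464374161288711526979946446422897939481872887342190983214199968039028176030477337087661879594417797877674163443650546504406870396116592516416126127206965944521261015378015256704
def s2I : Nat := 85178741800043495555438670299049524851315763347462522630876759221746204174012374538540462534679582887626370441553799570328220494309259821576478026128545444578349980780754496897152
def s3N : Nat := 85150049915656731987172691968701591137855783560087812735415944633238693074572473270641764139015663841676119615894173164540133639922014042013655307086013987791491448312295555104896
def s3I : Nat := 85150049915656731987172691968701591137855783560087812735415944633238693074572473270641764139015663841676119615894173164540133639922014042013655307086013987791491448312295555104896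
def s4N : Nat := 85687466185104264742595813671426981439593324695278088904147591004564511930864442142394225010629923643031907305962546309255765211154240834650134675959313832816401142470445573324928
def s4I : Nat := 85687466185104264742595813671426981439593324695278088904147591004564511930864442142394225010629923643031907305962546309255765211154240834650134675959313832816401142470445573324928
def s5N : Nat := 56844727526298944898611202791065268682941864078801726467975449358923207215662228086439394408208593302969728226049670272575086651894712484576631210171871021019430652228176634371456
def s5I : Nat := 7333200317931548771198975863771090975139688372805659354882498445879058310490490065420753748376510030571192525441079240951439884273105637898745509267561074407744312383680614829440

def allB : Nat → (Nat → Bool) → Bool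
  | 0, _ => true
  | n+1, f => f n && allB n f

theorem allB_spec {n : Nat} {f : Nat → Bool} (h : allB n f = true) : ∀ i < n, f i = true := by
  induction n with
  | zero => intro i hi; omega
  | succ n ih =>
    simp only [allB, Bool.and_eq_true] at h
    intro i hi
    rcases Nat.lt_succ_iff_lt_or_eq.mp hi with h' | h'
    · exact ih h.2 i h'
    · rw [h']; exact h.1

def adjb (i j : Nat) : Bool := adjN.testBit (85 * i + j)
def pf (N i : Nat) : Nat := (N >>> (7 * i)) % 128
def isAut (N M : Nat) : Bool :=
  allB 85 fun i => Nat.blt (pf N i) 85 && Nat.beq (pf M (pf N i)) i &&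
    allB 85 fun j => (adjb (pf N i) (pf N j) == adjb i j)

def adj (i j : Fin 85) : Bool := adjb i j

def A : Subgroup (Equiv.Perm (Fin 85)) where
  carrier := {σ | ∀ i j, adj (σ i) (σ j) = adj i j}
  mul_mem' := by
    intro a b ha hb i j
    simp only [Set.mem_ofPred_eq] at ha hb
    rw [Equiv.Perm.mul_apply, Equiv.Perm.mul_apply, ha, hb]
  one_mem' := by intro i j; rfl
  inv_mem' := by
    intro a ha i j
    have := ha (a⁻¹ i) (a⁻¹ j)
    simpa using this.symm

theorem exists_perm {N M : Nat} (h : isAut N M = true) :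
    ∃ σ ∈ A, (∀ i : Fin 85, (σ i : Nat) = pf N i) ∧ ∀ i : Fin 85, (σ⁻¹ i : Nat) = pf M i := by
  have h1 := allB_spec h
  simp only [Bool.and_eq_true] at h1
  have hlt : ∀ i : Fin 85, pf N i < 85 := fun i => by
    have := (h1 i i.2).1.1
    simpa [Nat.blt_eq] using this
  let f : Fin 85 → Fin 85 := fun i => ⟨pf N i, hlt i⟩
  have hinj : Function.Injective f := by
    intro i j hij
    have e : pf N i = pf N j := by simpa [f] using hij
    have hi := Nat.eq_of_beq_eq_true (h1 i i.2).1.2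
    have hj := Nat.eq_of_beq_eq_true (h1 j j.2).1.2
    rw [e] at hi
    exact Fin.ext (hi.symm.trans hj)
  refine ⟨Equiv.ofBijective f (Finite.injective_iff_bijective.mp hinj), ?_, fun i => rfl, ?_⟩
  · intro i j
    have := allB_spec (h1 i i.2).2 j j.2
    exact eq_of_beq this
  · intro i
    obtain ⟨k, rfl⟩ := (Equiv.ofBijective f (Finite.injective_iff_bijective.mp hinj)).surjective i
    rw [Equiv.Perm.inv_def, Equiv.symm_apply_apply]
    exact (Nat.eq_of_beq_eq_true (h1 k k.2).1.2).symm

theorem aut_g : isAut gN gI = true := by decide +kernel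
theorem aut_k : isAut kN kI = true := by decide +kernel
theorem aut_ga : isAut gaN gaI = true := by decide +kernel
theorem aut_gb : isAut gbN gbI = true := by decide +kernel
theorem aut_s0 : isAut s0N s0I = true := by decide +kernel
theorem aut_s1 : isAut s1N s1I = true := by decide +kernel
theorem aut_s2 : isAut s2N s2I = true := by decide +kernel
theorem aut_s3 : isAut s3N s3I = true := by decide +kernel
theorem aut_s4 : isAut s4N s4I = true := by decide +kernel
theorem aut_s5 : isAut s5N s5I = true := by decide +kernel
def o0 : List Nat := [36, 81, 37, 10, 63, 9, 72, 25, 66, 62, 24, 45, 80, 20, 64, 82, 35, 74, 6, 43, 22, 69, 65, 70, 26, 67, 73, 75, 13, 42, 38, 21, 53, 48, 5, 47, 46, 33, 76, 84, 18, 8, 16, 56, 19, 71, 44, 54, 27, 49, 17, 61, 23, 32, 79, 57, 34, 83, 39, 68, 55, 29, 15, 12, 41, 40, 28, 52, 4, 51, 7, 14, 58, 78, 60, 31, 50, 30, 77, 11, 3, 59, 2, 1, 0]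
def o1 : List Nat := [81, 2, 70, 11, 30, 49, 55, 28, 83, 21, 17, 68, 60, 31, 57, 15, 50, 72, 37, 10, 52, 63, 65, 6, 13, 24, 25, 43, 77, 48, 38, 29, 79, 40, 3, 74, 22, 27, 26, 20, 23, 53, 4, 47, 46, 33, 76, 84, 18, 39, 16, 56, 19, 41, 71, 44, 54, 51, 7, 14, 58, 78, 59, 1]
def o2 : List Nat := [36, 62, 67, 35, 9]
def o3 : List Nat := [36, 62, 67, 35]
def o4 : List Nat := [45, 82, 34]
def o5 : List Nat := [64, 69, 32]
def o6 : List Nat := [82, 45]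
def rd0 : List Nat := [10, 43, 46, 51, 70, 76, 82, 83]
def rd1 : List Nat := [2, 3, 5, 6, 7, 8, 11, 12, 13, 15, 17, 18, 19, 21, 22, 23, 25, 26, 28, 29, 30, 31, 33, 36, 38, 39, 40, 42, 44, 47, 49, 50, 52, 53, 55, 57, 58, 60, 61, 62, 63, 65, 66, 67, 68, 73, 75, 77, 79, 80, 81]
def rd2 : List Nat := [4, 14, 16, 20, 24, 27, 37, 41, 48, 54, 56, 59, 64, 69, 71, 72, 74, 78, 84]

def St (l : List Nat) : Subgroup (Equiv.Perm (Fin 85)) where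
  carrier := {σ | σ ∈ A ∧ ∀ b : Fin 85, (b : Nat) ∈ l → σ b = b}
  mul_mem' := by
    intro a b ha hb
    exact ⟨A.mul_mem ha.1 hb.1, fun c hc => by rw [Equiv.Perm.mul_apply, hb.2 c hc, ha.2 c hc]⟩
  one_mem' := ⟨A.one_mem, fun _ _ => rfl⟩
  inv_mem' := by
    intro a ha
    exact ⟨A.inv_mem ha.1, fun c hc => by rw [Equiv.Perm.inv_eq_iff_eq]; exact (ha.2 c hc).symm⟩

theorem mem_St {l : List Nat} {σ : Equiv.Perm (Fin 85)} :
    σ ∈ St l ↔ σ ∈ A ∧ ∀ b : Fin 85, (b : Nat) ∈ l → σ b = b := Iff.rfl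

theorem card_step (H H' : Subgroup (Equiv.Perm (Fin 85))) (b : Fin 85) (O : Finset (Fin 85))
    (hH : ∀ σ, σ ∈ H' ↔ σ ∈ H ∧ σ b = b)
    (hub : ∀ σ ∈ H, σ b ∈ O) (hlb : ∀ o ∈ O, ∃ σ ∈ H, σ b = o) :
    Nat.card H = O.card * Nat.card H' := by
  have h1 := (MulAction.stabilizer H b).card_mul_index
  rw [MulAction.index_stabilizer] at h1
  have h2 : MulAction.orbit H b = (O : Set (Fin 85)) := by
    ext o
    constructor
    · rintro ⟨σ, rfl⟩
      exact hub σ σ.2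
    · intro ho
      obtain ⟨σ, hσ, h⟩ := hlb o ho
      exact ⟨⟨σ, hσ⟩, h⟩
  rw [h2, Set.ncard_coe_finset] at h1
  have h3 : Nat.card (MulAction.stabilizer H b) = Nat.card H' := by
    refine Nat.card_congr ⟨fun x => ⟨x.1.1, (hH _).2 ⟨x.1.2, x.2⟩⟩,
      fun y => ⟨⟨y.1, ((hH _).1 y.2).1⟩, ((hH _).1 y.2).2⟩, fun _ => rfl, fun _ => rfl⟩
  rw [← h1, h3, mul_comm]

def reach (b : Nat) (gs : List (Nat × Nat)) : List Nat → Bool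
  | [] => true
  | x :: l => (x == b || gs.any fun g => l.elem (pf g.2 x)) && reach b gs l

def levOK (pre : List Nat) (b : Nat) (gs : List (Nat × Nat)) (o : List Nat) : Bool :=
  Nat.blt b 85 && (gs.all fun g => pre.all fun x => pf g.1 x == x) && reach b gs o &&
  (o.all fun x => Nat.blt x 85) &&
  allB 85 fun w => pre.elem w || (pre.any fun x => adjb w x != adjb b x) || o.elem w

theorem reach_spec {pre : List Nat} {b : Fin 85} {gs : List (Nat × Nat)}
    (hg : ∀ g ∈ gs, isAut g.1 g.2 = true) (hf : ∀ g ∈ gs, ∀ x ∈ pre, pf g.1 x = x)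
    {o : List Nat} (ho : reach b gs o = true) :
    ∀ x : Fin 85, (x : Nat) ∈ o → ∃ σ ∈ St pre, σ b = x := by
  induction o with
  | nil => intro x hx; simp at hx
  | cons y l ih =>
    simp only [reach, Bool.and_eq_true, Bool.or_eq_true, beq_iff_eq, List.any_eq_true,
      List.elem_eq_mem, decide_eq_true_eq] at ho
    have ih := ih ho.2
    intro x hx
    rcases List.mem_cons.mp hx with h | h
    · rcases ho.1 with h' | ⟨g, hgm, hgl⟩
      · exact ⟨1, (St pre).one_mem, Fin.ext (by simp [h, h'])⟩
      · obtain ⟨τ, hτA, hτ, hτi⟩ := exists_perm (hg g hgm)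
        rw [← h, ← hτi] at hgl
        obtain ⟨σ, hσ, e⟩ := ih _ hgl
        refine ⟨τ * σ, (St pre).mul_mem ⟨hτA, fun c hc => ?_⟩ hσ, ?_⟩
        · exact Fin.ext (by rw [hτ, hf g hgm c hc])
        · rw [Equiv.Perm.mul_apply, e]; simp
    · exact ih x h

theorem lev_card {pre : List Nat} {b : Nat} {gs : List (Nat × Nat)} {o : List Nat}
    (hg : ∀ g ∈ gs, isAut g.1 g.2 = true) (h : levOK pre b gs o = true)
    (hp : ∀ x ∈ pre, x < 85) (hbp : b ∉ pre) (hnd : o.Nodup) :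
    Nat.card (St pre) = o.length * Nat.card (St (b :: pre)) := by
  simp only [levOK, Bool.and_eq_true, Nat.blt_eq, List.all_eq_true, beq_iff_eq] at h
  obtain ⟨⟨⟨⟨hb, hf⟩, hr⟩, ho⟩, ha⟩ := h
  have ha := allB_spec ha
  simp only [Bool.or_eq_true, List.elem_eq_mem, decide_eq_true_eq, List.any_eq_true, bne_iff_ne] at ha
  let O : Finset (Fin 85) := Finset.univ.filter fun x => (x : Nat) ∈ o
  have hO : O.card = o.length := by
    rw [← List.toFinset_card_of_nodup hnd, ← Finset.card_map Fin.valEmbedding]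
    congr 1
    ext x
    simp only [O, Finset.mem_map, Finset.mem_filter, Finset.mem_univ, true_and, List.mem_toFinset]
    constructor
    · rintro ⟨a, h, rfl⟩; exact h
    · intro hx; exact ⟨⟨x, ho x hx⟩, hx, rfl⟩
  rw [← hO]
  apply card_step (St pre) _ ⟨b, hb⟩ O
  · intro σ
    simp only [mem_St, List.mem_cons]
    constructor
    · rintro ⟨h1, h2⟩
      exact ⟨⟨h1, fun c hc => h2 c (Or.inr hc)⟩, h2 ⟨b, hb⟩ (Or.inl rfl)⟩
    · rintro ⟨⟨h1, h2⟩, h3⟩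
      refine ⟨h1, fun c hc => ?_⟩
      rcases hc with hc | hc
      · have : c = ⟨b, hb⟩ := Fin.ext hc
        rw [this]; exact h3
      · exact h2 c hc
  · intro σ hσ
    simp only [O, Finset.mem_filter, Finset.mem_univ, true_and]
    rcases ha _ (σ ⟨b, hb⟩).2 with (h | ⟨x, hx, h⟩) | h
    · exfalso
      have := hσ.2 _ h
      have := σ.injective this
      rw [this] at h
      exact hbp h
    · exfalso
      have h1 := hσ.1 ⟨b, hb⟩ ⟨x, hp x hx⟩
      rw [hσ.2 ⟨x, hp x hx⟩ hx] at h1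
      exact h h1
    · exact h
  · intro x hx
    simp only [O, Finset.mem_filter, Finset.mem_univ, true_and] at hx
    exact reach_spec (b := ⟨b, hb⟩) hg hf hr x hx

def rdOK (l rd : List Nat) : Bool :=
  rd.all fun z => allB 85 fun w => w == z || l.any fun x => adjb z x != adjb w x

theorem rd_spec {l rd : List Nat} (h : rdOK l rd = true) (hp : ∀ x ∈ l, x < 85)
    {σ : Equiv.Perm (Fin 85)} (hσ : σ ∈ St l) : σ ∈ St (l ++ rd) := by
  refine ⟨hσ.1, fun c hc => ?_⟩
  rcases List.mem_append.mp hc with hc | hc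
  · exact hσ.2 c hc
  · simp only [rdOK, List.all_eq_true] at h
    have h := allB_spec (h c hc) (σ c) (σ c).2
    simp only [Bool.or_eq_true, beq_iff_eq, List.any_eq_true, bne_iff_ne] at h
    rcases h with h | ⟨x, hx, h⟩
    · exact Fin.ext h
    · exfalso
      have h1 := hσ.1 c ⟨x, hp x hx⟩
      rw [hσ.2 ⟨x, hp x hx⟩ hx] at h1
      exact h h1.symm

theorem St_all {l : List Nat} (h : allB 85 (fun x => l.elem x) = true)
    {σ : Equiv.Perm (Fin 85)} (hσ : σ ∈ St l) : σ = 1 := by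
  ext x
  have := allB_spec h x x.2
  rw [hσ.2 x (by simpa using this)]; rfl

def gs0 : List (Nat × Nat) := [(s0N, s0I)]
def gs1 : List (Nat × Nat) := (s1N, s1I) :: gs0
def gs2 : List (Nat × Nat) := (s2N, s2I) :: gs1
def gs3 : List (Nat × Nat) := (s3N, s3I) :: gs2
def gs4 : List (Nat × Nat) := (s4N, s4I) :: gs3
def gs5 : List (Nat × Nat) := (s5N, s5I) :: gs4
def gs6 : List (Nat × Nat) := (gN, gI) :: gs5

theorem gs6_ok : ∀ g ∈ gs6, isAut g.1 g.2 = true := by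
  intro g hg
  simp only [gs6, gs5, gs4, gs3, gs2, gs1, gs0, List.mem_cons, List.not_mem_nil, or_false] at hg
  rcases hg with rfl | rfl | rfl | rfl | rfl | rfl | rfl
  · exact aut_g
  · exact aut_s5
  · exact aut_s4
  · exact aut_s3
  · exact aut_s2
  · exact aut_s1
  · exact aut_s0

theorem gs5_ok : ∀ g ∈ gs5, isAut g.1 g.2 = true := fun g hg => gs6_ok g (List.mem_cons_of_mem _ hg)
theorem gs4_ok : ∀ g ∈ gs4, isAut g.1 g.2 = true := fun g hg => gs5_ok g (List.mem_cons_of_mem _ hg)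
theorem gs3_ok : ∀ g ∈ gs3, isAut g.1 g.2 = true := fun g hg => gs4_ok g (List.mem_cons_of_mem _ hg)
theorem gs2_ok : ∀ g ∈ gs2, isAut g.1 g.2 = true := fun g hg => gs3_ok g (List.mem_cons_of_mem _ hg)
theorem gs1_ok : ∀ g ∈ gs1, isAut g.1 g.2 = true := fun g hg => gs2_ok g (List.mem_cons_of_mem _ hg)
theorem gs0_ok : ∀ g ∈ gs0, isAut g.1 g.2 = true := fun g hg => gs1_ok g (List.mem_cons_of_mem _ hg)

theorem St_base {σ : Equiv.Perm (Fin 85)} (h : σ ∈ St [45, 32, 34, 35, 9, 1, 0]) : σ = 1 :=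
  St_all (by decide +kernel) (rd_spec (rd := rd2) (by decide +kernel) (by decide +kernel)
    (rd_spec (rd := rd1) (by decide +kernel) (by decide +kernel)
      (rd_spec (rd := rd0) (by decide +kernel) (by decide +kernel) h)))

theorem A_eq : A = St [] := by
  ext σ; simp [mem_St]

theorem card_A : Nat.card A = 1958400 := by
  have h : St [45, 32, 34, 35, 9, 1, 0] = ⊥ := by
    rw [Subgroup.eq_bot_iff_forall]; exact fun σ => St_base
  rw [A_eq, lev_card gs6_ok (b := 0) (o := o0) (by decide +kernel) (by decide) (by decide)
      (by decide +kernel),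
    lev_card gs5_ok (b := 1) (o := o1) (by decide +kernel) (by decide) (by decide)
      (by decide +kernel),
    lev_card gs4_ok (b := 9) (o := o2) (by decide +kernel) (by decide) (by decide)
      (by decide +kernel),
    lev_card gs3_ok (b := 35) (o := o3) (by decide +kernel) (by decide) (by decide)
      (by decide +kernel),
    lev_card gs2_ok (b := 34) (o := o4) (by decide +kernel) (by decide) (by decide)
      (by decide +kernel),
    lev_card gs1_ok (b := 32) (o := o5) (by decide +kernel) (by decide) (by decide)
      (by decide +kernel),
    lev_card gs0_ok (b := 45) (o := o6) (by decide +kernel) (by decide) (by decide)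
      (by decide +kernel), h, Subgroup.card_bot]
  decide

section Abs

instance fact17 : Fact (Nat.Prime 17) := ⟨by norm_num⟩

theorem norm_card {H : Type*} [Group H] [Finite H] (P : Subgroup H) (hP : Nat.card P = 17)
    (hc : ∀ x y : H, orderOf x = 17 → x * y = y * x → y ∈ Subgroup.zpowers x) :
    ∃ d, d ∣ 16 ∧ Nat.card (Subgroup.normalizer (P : Set H)) = 17 * d := by
  have hcyc : IsCyclic P := isCyclic_of_prime_card hP
  obtain ⟨x, hx⟩ := (isCyclic_iff_exists_zpowers_eq_top (α := P)).mp hcyc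
  have hox : orderOf (x : H) = 17 := by
    rw [Subgroup.orderOf_coe, ← Nat.card_zpowers, hx, Subgroup.card_top, hP]
  have hzx : Subgroup.zpowers (x : H) = P := by
    have := congrArg (Subgroup.map P.subtype) hx
    rw [MonoidHom.map_zpowers, ← MonoidHom.range_eq_map, Subgroup.range_subtype] at this
    exact this
  have hcent : Subgroup.centralizer (P : Set H) = P := by
    apply le_antisymm
    · intro y hy
      rw [Subgroup.mem_centralizer_iff] at hy
      rw [← hzx]
      exact hc _ _ hox (hy x x.2)
    · intro y hy
      rw [Subgroup.mem_centralizer_iff]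
      intro h hh
      rw [← hzx] at hy hh
      obtain ⟨m, rfl⟩ := hy
      obtain ⟨n, rfl⟩ := hh
      exact (((Commute.refl (x : H)).zpow_zpow n m)).eq
  have h1 := P.normalizerMonoidHom.ker.card_mul_index
  rw [Subgroup.index_ker] at h1
  have hk : Nat.card P.normalizerMonoidHom.ker = 17 := by
    rw [Subgroup.normalizerMonoidHom_ker, hcent,
      Nat.card_congr (Subgroup.subgroupOfEquivOfLe Subgroup.le_normalizer).toEquiv, hP]
  refine ⟨_, ?_, by rw [← h1, hk]⟩
  have h2 := Subgroup.card_subgroup_dvd_card P.normalizerMonoidHom.range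
  rw [IsCyclic.card_mulAut, hP] at h2
  exact h2

theorem arith {h d n : ℕ} (h1 : h ∣ 1958400) (h2 : 1275 ∣ h) (h3 : 17 * d * n = h)
    (h4 : d ∣ 16) (h5 : n ≡ 1 [MOD 17]) : n = 14400 := by
  have hd : d ∈ Nat.divisors 16 := by simp [h4]
  have hn : n ∣ 115200 := by
    have : 17 * n ∣ 17 * 115200 := by
      refine dvd_trans ?_ h1
      exact ⟨d, by rw [← h3]; ring⟩
    exact Nat.dvd_of_mul_dvd_mul_left (by norm_num) this
  have h75 : 75 ∣ n := by
    have h6 : 17 * 75 ∣ 17 * (d * n) := by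
      rw [← mul_assoc, h3]; exact h2
    have h7 := Nat.dvd_of_mul_dvd_mul_left (by norm_num) h6
    refine Nat.Coprime.dvd_of_dvd_mul_left ?_ h7
    exact Nat.Coprime.coprime_dvd_right h4 (by norm_num)
  obtain ⟨m, rfl⟩ := h75
  have hm : m ∣ 1536 := Nat.dvd_of_mul_dvd_mul_left (show 0 < 75 by norm_num) (by simpa using hn)
  have hm' : m ∈ Nat.divisors 1536 := by simp [hm]
  have key : ∀ m ∈ Nat.divisors 1536, (75 * m) % 17 = 1 → m = 192 := by decide +kernel
  rw [key m hm' h5]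

theorem fact_one {h : ℕ} (h1 : h ∣ 1958400) (h2 : 17 ∣ h) : h.factorization 17 = 1 := by
  have h0 : h ≠ 0 := by rintro rfl; simp at h1
  apply le_antisymm
  · have h3 : h.factorization 17 ≤ (1958400 : ℕ).factorization 17 :=
      (Nat.factorization_le_iff_dvd h0 (by norm_num)).mpr h1 17
    refine h3.trans ?_
    by_contra hcon
    push Not at hcon
    have : 17 ^ 2 ∣ 1958400 :=
      (Nat.Prime.pow_dvd_iff_le_factorization (by norm_num) (by norm_num)).mpr hcon
    norm_num at this
  · exact (Nat.Prime.dvd_iff_one_le_factorization (by norm_num) h0).mp h2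

theorem sylow_count {H : Type*} [Group H] [Finite H] (h1 : Nat.card H ∣ 1958400)
    (h2 : 1275 ∣ Nat.card H)
    (hc : ∀ x y : H, orderOf x = 17 → x * y = y * x → y ∈ Subgroup.zpowers x) :
    Nat.card (Sylow 17 H) = 14400 := by
  have hf := fact_one h1 (dvd_trans (by norm_num) h2)
  let P : Sylow 17 H := default
  have hP : Nat.card P = 17 := by rw [P.card_eq_multiplicity, hf]; norm_num
  obtain ⟨d, hd, hN⟩ := norm_card P.1 hP hc
  have h3 := (Subgroup.normalizer (P.1 : Set H)).card_mul_index
  have h4 := P.card_eq_index_normalizer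
  rw [hN] at h3
  have h5 := card_sylow_modEq_one 17 H
  rw [h4] at h5 ⊢
  exact arith h1 h2 h3 hd h5

theorem abs_main {G : Type*} [Group G] [Finite G] (hG : Nat.card G = 1958400)
    (g k ga gb : G) (og : orderOf g = 17) (ok : orderOf k = 4) (oga : orderOf ga = 17)
    (ogb : orderOf gb = 17) (hk : k = ga * gb) (hkg : k * g * k⁻¹ = g ^ 4)
    (hcg : ∀ y, g * y = y * g → y ∈ Subgroup.zpowers g)
    (H : Subgroup G) (hH : 1275 ∣ Nat.card H) : 979200 ∣ Nat.card H := by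
  have hfG : (Nat.card G).factorization 17 = 1 := fact_one (by rw [hG]) (by rw [hG]; norm_num)
  have hz : ∀ x : G, orderOf x = 17 →
      Nat.card (Subgroup.zpowers x) = 17 ^ (Nat.card G).factorization 17 := by
    intro x hx; rw [Nat.card_zpowers, hx, hfG]; norm_num
  -- centralizers
  have hc : ∀ x y : G, orderOf x = 17 → x * y = y * x → y ∈ Subgroup.zpowers x := by
    intro x y hx hxy
    obtain ⟨c, hc⟩ := MulAction.exists_smul_eq G (Sylow.ofCard _ (hz g og)) (Sylow.ofCard _ (hz x hx))
    have hc' : ∀ z, z ∈ Subgroup.zpowers g → c * z * c⁻¹ ∈ Subgroup.zpowers x := by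
      intro z hz'
      have h1 : c * z * c⁻¹ ∈ (c • Sylow.ofCard _ (hz g og) : Sylow 17 G) := by
        have := Subgroup.smul_mem_pointwise_smul z (MulAut.conj c) (Subgroup.zpowers g) hz'
        exact this
      rw [hc] at h1
      exact h1
    obtain ⟨m, hm⟩ := hc' g (Subgroup.mem_zpowers g)
    have h2 : (c * g * c⁻¹) * y = y * (c * g * c⁻¹) := by
      rw [← hm]
      exact (Commute.zpow_left (show Commute x y from hxy) m).eq
    have h3 : g * (c⁻¹ * y * c) = (c⁻¹ * y * c) * g := by
      calc g * (c⁻¹ * y * c) = c⁻¹ * ((c * g * c⁻¹) * y) * c := by group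
        _ = c⁻¹ * (y * (c * g * c⁻¹)) * c := by rw [h2]
        _ = _ := by group
    have h4 := hc' _ (hcg _ h3)
    have : c * (c⁻¹ * y * c) * c⁻¹ = y := by group
    rwa [this] at h4
  have hcH : ∀ x y : H, orderOf x = 17 → x * y = y * x → y ∈ Subgroup.zpowers x := by
    intro x y hx hxy
    have h1 := hc x y (by rw [Subgroup.orderOf_coe, hx]) (by exact_mod_cast congrArg Subtype.val hxy)
    obtain ⟨m, hm⟩ := h1
    exact ⟨m, Subtype.ext (by simpa using hm)⟩
  have hHd : Nat.card H ∣ 1958400 := hG ▸ Subgroup.card_subgroup_dvd_card H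
  have nG : Nat.card (Sylow 17 G) = 14400 :=
    sylow_count (by rw [hG]) (by rw [hG]; norm_num) hc
  have nH : Nat.card (Sylow 17 H) = 14400 := sylow_count hHd hH hcH
  have hfH := fact_one hHd (dvd_trans (by norm_num) hH)
  -- all Sylows in H
  let φ : Sylow 17 H → Sylow 17 G := fun P => Sylow.ofCard (P.1.map H.subtype) (by
    rw [hfG, ← hfH, ← P.card_eq_multiplicity]
    exact Nat.card_congr (P.1.equivMapOfInjective H.subtype H.subtype_injective).symm.toEquiv)
  have hφi : Function.Injective φ := by
    intro P Q h
    have h1 : P.1.map H.subtype = Q.1.map H.subtype := congrArg (fun S : Sylow 17 G => S.1) h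
    exact Sylow.ext (Subgroup.map_injective H.subtype_injective h1)
  have hφs : Function.Surjective φ := by
    have : Finite (Sylow 17 G) := inferInstance
    exact ((Nat.bijective_iff_injective_and_card φ).mpr ⟨hφi, by rw [nG, nH]⟩).2
  have hmem : ∀ x : G, orderOf x = 17 → x ∈ H := by
    intro x hx
    obtain ⟨P, hP⟩ := hφs (Sylow.ofCard _ (hz x hx))
    have h1 : P.1.map H.subtype = Subgroup.zpowers x := congrArg (fun S : Sylow 17 G => S.1) hP
    have h2 : x ∈ P.1.map H.subtype := by rw [h1]; exact Subgroup.mem_zpowers x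
    obtain ⟨y, _, rfl⟩ := h2
    exact y.2
  have kH : k ∈ H := hk ▸ H.mul_mem (hmem ga oga) (hmem gb ogb)
  have gH : g ∈ H := hmem g og
  let g' : H := ⟨g, gH⟩
  let k' : H := ⟨k, kH⟩
  have og' : orderOf g' = 17 := by rw [← Subgroup.orderOf_coe]; exact og
  have ok' : orderOf k' = 4 := by rw [← Subgroup.orderOf_coe]; exact ok
  have hkg' : k' * g' * k'⁻¹ = g' ^ 4 := Subtype.ext hkg
  have hcard : Nat.card (Subgroup.zpowers g') = 17 := by rw [Nat.card_zpowers, og']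
  let P : Sylow 17 H := Sylow.ofCard (Subgroup.zpowers g') (by rw [hcard, hfH]; norm_num)
  have kN : k' ∈ Subgroup.normalizer ((Subgroup.zpowers g' : Subgroup H) : Set H) := by
    have hmap : (Subgroup.zpowers g').map (MulAut.conj k').toMonoidHom ≤ Subgroup.zpowers g' := by
      rw [MonoidHom.map_zpowers, Subgroup.zpowers_le]
      change k' * g' * k'⁻¹ ∈ _
      rw [hkg']
      exact Subgroup.pow_mem _ (Subgroup.mem_zpowers _) _
    have heq : (Subgroup.zpowers g').map (MulAut.conj k').toMonoidHom = Subgroup.zpowers g' := by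
      apply Subgroup.eq_of_le_of_card_ge hmap
      rw [Subgroup.card_map_of_injective (MulAut.conj k').injective]
    rw [Subgroup.mem_normalizer_iff]
    intro z
    constructor
    · intro hz'
      exact hmap ⟨z, hz', rfl⟩
    · intro hz'
      have : k' * z * k'⁻¹ ∈ (Subgroup.zpowers g').map (MulAut.conj k').toMonoidHom := by
        rw [heq]; exact hz'
      obtain ⟨w, hw, e⟩ := this
      have e' : k' * w * k'⁻¹ = k' * z * k'⁻¹ := e
      have : w = z := by simpa using e'
      exact this ▸ hw
  obtain ⟨d, hd, hN⟩ := norm_card (Subgroup.zpowers g') hcard hcH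
  have h4 : 4 ∣ 17 * d := by
    rw [← hN, ← ok']
    have : orderOf (⟨k', kN⟩ : Subgroup.normalizer ((Subgroup.zpowers g' : Subgroup H) : Set H))
        = orderOf k' := by rw [← Subgroup.orderOf_coe]
    rw [← this]
    exact orderOf_dvd_natCard _
  have h5 : 4 ∣ d := Nat.Coprime.dvd_of_dvd_mul_left (by norm_num) h4
  have h6 := (Subgroup.normalizer ((Subgroup.zpowers g' : Subgroup H) : Set H)).card_mul_index
  have h7 := P.card_eq_index_normalizer
  rw [nH] at h7
  have h8 : (Subgroup.normalizer ((Subgroup.zpowers g' : Subgroup H) : Set H)).index = 14400 :=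
    h7.symm
  rw [h8, hN] at h6
  rw [← h6]
  obtain ⟨e, rfl⟩ := h5
  exact ⟨e, by ring⟩

end Abs

def itr (N : Nat) : Nat → Nat → Nat
  | 0, x => x
  | n+1, x => pf N (itr N n x)

theorem itr_spec {N : Nat} {σ : Equiv.Perm (Fin 85)} (h : ∀ i : Fin 85, (σ i : Nat) = pf N i)
    (n : Nat) (i : Fin 85) : (((σ ^ n) i : Fin 85) : Nat) = itr N n i := by
  induction n with
  | zero => rfl
  | succ n ih => rw [pow_succ', Equiv.Perm.mul_apply, h, ih, itr]

theorem pow_one' {N : Nat} {σ : Equiv.Perm (Fin 85)} (h : ∀ i : Fin 85, (σ i : Nat) = pf N i)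
    {n : Nat} (hn : allB 85 (fun i => itr N n i == i) = true) : σ ^ n = 1 := by
  ext i
  rw [itr_spec h]
  simpa using allB_spec hn i i.2

theorem ne_one' {N : Nat} {σ : Equiv.Perm (Fin 85)} (h : ∀ i : Fin 85, (σ i : Nat) = pf N i)
    {n : Nat} (hn : (itr N n 0 == 0) = false) : σ ^ n ≠ 1 := by
  intro h1
  have := itr_spec h n 0
  rw [h1] at this
  simp at hn
  exact hn this.symm

theorem order17 {N : Nat} {σ : Equiv.Perm (Fin 85)} (h : ∀ i : Fin 85, (σ i : Nat) = pf N i)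
    (h1 : allB 85 (fun i => itr N 17 i == i) = true) (h2 : (itr N 1 0 == 0) = false) :
    orderOf σ = 17 :=
  orderOf_eq_prime (pow_one' h h1) (by simpa using ne_one' h h2)

def rdB : List Nat := (List.range 85).drop 17

theorem cent_c : ∀ c < 5, c ≠ 0 →
    allB 85 (fun w => (List.range 17).any fun i => adjb w (17 * c + i) != adjb 0 i) = true := by
  decide +kernel

theorem itr_block : ∀ c < 5, ∀ i < 17, itr gN i (17 * c) = 17 * c + i := by decide +kernel

theorem cent_block {γ τ : Equiv.Perm (Fin 85)} (hγ : ∀ i : Fin 85, (γ i : Nat) = pf gN i)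
    (hτ : τ ∈ A) (hc : γ * τ = τ * γ) {c : Nat} (hc5 : c < 5) (h0 : (τ 0 : Nat) = 17 * c) :
    τ = 1 := by
  have key : ∀ i (hi : i < 17), (τ ⟨i, by omega⟩ : Nat) = 17 * c + i := by
    intro i hi
    have h1 : (γ ^ i) 0 = (⟨i, by omega⟩ : Fin 85) := by
      apply Fin.ext
      rw [itr_spec hγ]
      simpa using itr_block 0 (by norm_num) i hi
    have h2 : γ ^ i * τ = τ * γ ^ i := (Commute.pow_left (show Commute γ τ from hc) i).eq
    rw [← h1, ← Equiv.Perm.mul_apply, ← h2, Equiv.Perm.mul_apply, itr_spec hγ, h0,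
      itr_block c hc5 i hi]
  by_cases hcz : c = 0
  · subst hcz
    have : τ ∈ St (List.range 17) := by
      refine ⟨hτ, fun b hb => ?_⟩
      have hb' : (b : Nat) < 17 := by simpa using hb
      apply Fin.ext
      simpa using key b hb'
    exact St_all (by decide +kernel) (rd_spec (rd := rdB) (by decide +kernel) (by decide +kernel) this)
  · exfalso
    have h1 := allB_spec (cent_c c hc5 hcz) (τ 0) (τ 0).2
    simp only [List.any_eq_true, List.mem_range, bne_iff_ne] at h1
    obtain ⟨i, hi, hne⟩ := h1
    have h2 := hτ 0 ⟨i, by omega⟩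
    simp only [adj] at h2
    rw [key i hi] at h2
    exact hne h2

theorem cent {γ σ : Equiv.Perm (Fin 85)} (hγA : γ ∈ A) (hγ : ∀ i : Fin 85, (γ i : Nat) = pf gN i)
    (hσ : σ ∈ A) (hc : γ * σ = σ * γ) : ∃ j : ℕ, σ = γ ^ j := by
  have h85 := (σ 0).2
  have hj : (σ 0 : Nat) % 17 < 17 := Nat.mod_lt _ (by norm_num)
  have hc5 : (σ 0 : Nat) / 17 < 5 := by omega
  refine ⟨(σ 0 : Nat) % 17, ?_⟩
  have h1 : (γ ^ ((σ 0 : Nat) % 17)) ⟨17 * ((σ 0 : Nat) / 17), by omega⟩ = σ 0 := by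
    apply Fin.ext
    rw [itr_spec hγ, itr_block _ hc5 _ hj]
    omega
  have h2 : (γ ^ ((σ 0 : Nat) % 17))⁻¹ * σ = 1 := by
    apply cent_block hγ (A.mul_mem (A.inv_mem (A.pow_mem hγA _)) hσ) _ hc5
    · rw [Equiv.Perm.mul_apply]
      have : (γ ^ ((σ 0 : Nat) % 17))⁻¹ (σ 0) = ⟨17 * ((σ 0 : Nat) / 17), by omega⟩ := by
        rw [Equiv.Perm.inv_eq_iff_eq, h1]
      rw [this]
    · have c1 : Commute γ σ := hc
      have c2 : Commute γ (γ ^ ((σ 0 : Nat) % 17))⁻¹ := ((Commute.refl γ).pow_right _).inv_right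
      exact (c2.mul_right c1).eq
  exact (inv_mul_eq_one.mp h2).symm

theorem group_main (H : Subgroup (Equiv.Perm (Fin 85))) (hHA : H ≤ A) (h1 : 1275 ∣ Nat.card H)
    (hodd : ∃ σ ∈ H, Equiv.Perm.sign σ = -1) : Nat.card H = 1958400 := by
  obtain ⟨g, hgA, hg, -⟩ := exists_perm aut_g
  obtain ⟨k, hkA, hk, -⟩ := exists_perm aut_k
  obtain ⟨ga, hgaA, hga, -⟩ := exists_perm aut_ga
  obtain ⟨gb, hgbA, hgb, -⟩ := exists_perm aut_gb
  have ok : orderOf k = 2 ^ (1 + 1) := by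
    apply orderOf_eq_prime_pow
    · exact ne_one' (n := 2) hk (by decide +kernel)
    · exact pow_one' (n := 4) hk (by decide +kernel)
  have hkab : k = ga * gb := by
    ext i
    rw [Equiv.Perm.mul_apply, hga, hgb, hk]
    have : allB 85 (fun i => pf kN i == pf gaN (pf gbN i)) = true := by decide +kernel
    simpa using allB_spec this i i.2
  have hkg : k * g = g ^ 4 * k := by
    ext i
    rw [Equiv.Perm.mul_apply, Equiv.Perm.mul_apply, itr_spec hg, hk, hg, hk]
    have : allB 85 (fun i => pf kN (pf gN i) == itr gN 4 (pf kN i)) = true := by decide +kernel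
    simpa using allB_spec this i i.2
  let ψ : H →* ℤˣ := Equiv.Perm.sign.comp H.subtype
  have hr : Nat.card ψ.range = 2 := by
    have : ψ.range = ⊤ := by
      rw [eq_top_iff]
      intro u _
      rcases Int.units_eq_one_or u with rfl | rfl
      · exact Subgroup.one_mem _
      · obtain ⟨σ, hσ, e⟩ := hodd
        exact ⟨⟨σ, hσ⟩, e⟩
    rw [this, Subgroup.card_top, Nat.card_eq_fintype_card]
    rfl
  have h2 := ψ.ker.card_mul_index
  rw [Subgroup.index_ker, hr] at h2
  have hker : 1275 ∣ Nat.card ψ.ker := by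
    rw [← h2] at h1
    exact Nat.Coprime.dvd_of_dvd_mul_right (by norm_num) h1
  let K : Subgroup A := ψ.ker.map (Subgroup.inclusion hHA)
  have hK : Nat.card K = Nat.card ψ.ker :=
    Subgroup.card_map_of_injective (Subgroup.inclusion_injective hHA)
  have h3 : 979200 ∣ Nat.card K := by
    apply abs_main (G := A) card_A ⟨g, hgA⟩ ⟨k, hkA⟩ ⟨ga, hgaA⟩ ⟨gb, hgbA⟩
    · rw [← Subgroup.orderOf_coe]; exact order17 hg (by decide +kernel) (by decide +kernel)
    · rw [← Subgroup.orderOf_coe]; exact ok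
    · rw [← Subgroup.orderOf_coe]; exact order17 hga (by decide +kernel) (by decide +kernel)
    · rw [← Subgroup.orderOf_coe]; exact order17 hgb (by decide +kernel) (by decide +kernel)
    · exact Subtype.ext hkab
    · rw [mul_inv_eq_iff_eq_mul]; exact Subtype.ext hkg
    · intro y hy
      obtain ⟨j, hj⟩ := cent hgA hg y.2 (congrArg Subtype.val hy)
      exact ⟨j, Subtype.ext (by simpa using hj.symm)⟩
    · rw [hK]; exact hker
  rw [hK] at h3
  have h4 : 1958400 ∣ Nat.card H := by
    rw [← h2]; exact mul_dvd_mul h3 (dvd_refl 2)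
  have h5 : Nat.card H ∣ 1958400 := card_A ▸ Subgroup.card_dvd_of_le hHA
  exact Nat.dvd_antisymm h5 h4

section PlaceAbs
open scoped Pointwise

attribute [local instance] Ideal.Quotient.field in
theorem place_abs (A K L : Type) [CommRing A] [IsDomain A] [IsIntegrallyClosed A] [Field K]
    [Algebra A K] [IsFractionRing A K] [Field L] [Algebra K L] [Algebra A L]
    [IsScalarTower A K L] [FiniteDimensional K L] [IsGalois K L] (l : ℕ) [Fact l.Prime]
    (φ : A →+* ZMod l) :
    ∃ (κ : Type) (_ : Field κ) (π : integralClosure A L →+* κ) (e : ZMod l →+* κ),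
      (∀ a, π (algebraMap A _ a) = e (φ a)) ∧
      ∃ σ : L ≃ₐ[K] L, ∀ x y : integralClosure A L, (y : L) = σ x → π y = π x ^ l := by
  have hsurj : Function.Surjective φ := ZMod.ringHom_surjective φ
  let B := integralClosure A L
  have : IsFractionRing B L := integralClosure.isFractionRing_of_finite_extension K L
  let P : Ideal A := RingHom.ker φ
  have hPm : P.IsMaximal := RingHom.ker_isMaximal_of_surjective φ hsurj
  let := IsIntegralClosure.MulSemiringAction A K L B
  have hinv := Algebra.isInvariant_of_isGalois A K L B
  have hcomm : SMulCommClass (L ≃ₐ[K] L) A B := ⟨fun g a b => by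
    change galRestrict A K L B g (a • b) = a • galRestrict A K L B g b
    rw [map_smul]⟩
  have hinj : Function.Injective (algebraMap A B) := by
    have h1 : Function.Injective (algebraMap A L) := by
      rw [IsScalarTower.algebraMap_eq A K L]
      exact (algebraMap K L).injective.comp (IsFractionRing.injective A K)
    intro a b h
    apply h1
    rw [IsScalarTower.algebraMap_apply A B L, h, ← IsScalarTower.algebraMap_apply A B L]
  obtain ⟨Q, hQm, hQP⟩ := Ideal.exists_ideal_over_maximal_of_isIntegral (S := B) P
    (by rw [(RingHom.injective_iff_ker_eq_bot _).mp hinj]; exact bot_le)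
  have hover : Q.LiesOver P := ⟨hQP.symm⟩
  let eqv : A ⧸ P ≃+* ZMod l := RingHom.quotientKerEquivOfSurjective hsurj
  have hfin : Finite (A ⧸ P) := Finite.of_equiv _ eqv.symm.toEquiv
  have : Algebra.IsIntegral (A ⧸ P) (B ⧸ Q) := inferInstance
  have hsep : Algebra.IsSeparable (A ⧸ P) (B ⧸ Q) := inferInstance
  have hmf : Module.Finite (A ⧸ P) (B ⧸ Q) :=
    Ideal.Quotient.finite_of_isInvariant (L ≃ₐ[K] L) P Q
  have hfB : Finite (B ⧸ Q) := Module.finite_of_finite (A ⧸ P)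
  obtain ⟨σ, hσ⟩ := IsArithFrobAt.exists_of_isInvariant A (L ≃ₐ[K] L) Q
  refine ⟨B ⧸ Q, inferInstance, Ideal.Quotient.mk Q,
    (algebraMap (A ⧸ P) (B ⧸ Q)).comp eqv.symm.toRingHom, ?_, σ, ?_⟩
  · intro a
    have : eqv.symm (φ a) = Ideal.Quotient.mk P a := by
      rw [RingEquiv.symm_apply_eq]
      rfl
    simp only [RingHom.comp_apply, RingEquiv.toRingHom_eq_coe, RingHom.coe_coe, this]
    rfl
  · intro x y h
    have h1 : y = σ • x := by
      apply Subtype.ext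
      rw [h]
      exact (algebraMap_galRestrict_apply A σ x).symm
    have h2 := AlgHom.IsArithFrobAt.mk_apply hσ x
    rw [h1]
    have hu : Q.under A = P := hQP
    have h3 : Nat.card (A ⧸ Q.under A) = l := by
      rw [hu, Nat.card_congr eqv.toEquiv, Nat.card_zmod]
    rw [h3] at h2
    exact h2

end PlaceAbs

section Lists

def evL {R : Type*} [CommRing R] : List Int → R → R
  | [], _ => 0
  | a :: l, x => (a : R) + x * evL l x

def addL : List Int → List Int → List Int
  | [], b => b
  | a :: as, [] => a :: as
  | a :: as, b :: bs => (a + b) :: addL as bs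

def smulL (c : Int) : List Int → List Int
  | [] => []
  | a :: as => (c * a) :: smulL c as

def mulL : List Int → List Int → List Int
  | [], _ => []
  | a :: as, b => addL (smulL a b) (0 :: mulL as b)

def norm1 : List Int → Int
  | [] => 0
  | a :: as => |a| + norm1 as

section
variable {R : Type*} [CommRing R]

theorem ev_addL (a b : List Int) (x : R) : evL (addL a b) x = evL a x + evL b x := by
  induction a generalizing b with
  | nil => simp [addL, evL]
  | cons a as ih =>
    cases b with
    | nil => simp [addL, evL]
    | cons b bs => simp only [addL, evL, ih]; push_cast; ring

theorem ev_smulL (c : Int) (a : List Int) (x : R) : evL (smulL c a) x = (c : R) * evL a x := by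
  induction a with
  | nil => simp [smulL, evL]
  | cons a as ih => simp only [smulL, evL, ih]; push_cast; ring

theorem ev_mulL (a b : List Int) (x : R) : evL (mulL a b) x = evL a x * evL b x := by
  induction a with
  | nil => simp [mulL, evL]
  | cons a as ih => simp only [mulL, ev_addL, ev_smulL, evL, ih]; push_cast; ring

theorem map_evL {R' : Type*} [CommRing R'] (f : R →+* R') (l : List Int) (x : R) :
    f (evL l x) = evL l (f x) := by
  induction l with
  | nil => simp [evL]
  | cons a l ih => simp [evL, ih]

def ev2 : List (List Int) → R → R → R
  | [], _, _ => 0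
  | r :: L, x, y => evL r x + y * ev2 L x y

def addLL : List (List Int) → List (List Int) → List (List Int)
  | [], b => b
  | a :: as, [] => a :: as
  | a :: as, b :: bs => addL a b :: addLL as bs

def smulLL (c : List Int) : List (List Int) → List (List Int)
  | [] => []
  | a :: as => mulL c a :: smulLL c as

def mulLL : List (List Int) → List (List Int) → List (List Int)
  | [], _ => []
  | a :: as, b => addLL (smulLL a b) ([] :: mulLL as b)

def outL (r : List Int) : List Int → List (List Int)
  | [] => []
  | c :: cs => smulL c r :: outL r cs

def negL (a : List Int) : List Int := smulL (-1) a

def negLL : List (List Int) → List (List Int)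
  | [] => []
  | a :: as => negL a :: negLL as

theorem ev2_addLL (a b : List (List Int)) (x y : R) :
    ev2 (addLL a b) x y = ev2 a x y + ev2 b x y := by
  induction a generalizing b with
  | nil => simp [addLL, ev2]
  | cons a as ih =>
    cases b with
    | nil => simp [addLL, ev2]
    | cons b bs => simp only [addLL, ev2, ih, ev_addL]; ring

theorem ev2_smulLL (c : List Int) (a : List (List Int)) (x y : R) :
    ev2 (smulLL c a) x y = evL c x * ev2 a x y := by
  induction a with
  | nil => simp [smulLL, ev2]
  | cons a as ih => simp only [smulLL, ev2, ih, ev_mulL]; ring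

theorem ev2_mulLL (a b : List (List Int)) (x y : R) :
    ev2 (mulLL a b) x y = ev2 a x y * ev2 b x y := by
  induction a with
  | nil => simp [mulLL, ev2]
  | cons a as ih => simp only [mulLL, ev2_addLL, ev2_smulLL, ev2, evL, ih]; ring

theorem ev2_outL (r c : List Int) (x y : R) : ev2 (outL r c) x y = evL r x * evL c y := by
  induction c with
  | nil => simp [outL, ev2, evL]
  | cons c cs ih => simp only [outL, ev2, ev_smulL, evL, ih]; ring

theorem ev2_negLL (a : List (List Int)) (x y : R) : ev2 (negLL a) x y = - ev2 a x y := by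
  induction a with
  | nil => simp [negLL, ev2]
  | cons a as ih => simp only [negLL, negL, ev2, ev_smulL, ih]; push_cast; ring

theorem map_ev2 {R' : Type*} [CommRing R'] (f : R →+* R') (l : List (List Int)) (x y : R) :
    f (ev2 l x y) = ev2 l (f x) (f y) := by
  induction l with
  | nil => simp [ev2]
  | cons a l ih => simp [ev2, ih, map_evL]

end

theorem norm1_nonneg (a : List Int) : 0 ≤ norm1 a := by
  induction a with
  | nil => simp [norm1]
  | cons a as ih => simp only [norm1]; positivity

theorem norm1_addL (a b : List Int) : norm1 (addL a b) ≤ norm1 a + norm1 b := by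
  induction a generalizing b with
  | nil => simp [addL, norm1]
  | cons a as ih =>
    cases b with
    | nil => simp [addL, norm1]
    | cons b bs =>
      simp only [addL, norm1]
      have := ih bs
      have := abs_add_le a b
      linarith

theorem norm1_smulL (c : Int) (a : List Int) : norm1 (smulL c a) = |c| * norm1 a := by
  induction a with
  | nil => simp [smulL, norm1]
  | cons a as ih => simp only [smulL, norm1, ih, abs_mul]; ring

theorem norm1_mulL (a b : List Int) : norm1 (mulL a b) ≤ norm1 a * norm1 b := by
  induction a with
  | nil => simp [mulL, norm1]
  | cons a as ih =>
    simp only [mulL, norm1]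
    have h1 := norm1_addL (smulL a b) (0 :: mulL as b)
    simp only [norm1_smulL, norm1, abs_zero, zero_add] at h1
    linarith

def norm2 : List (List Int) → Int
  | [] => 0
  | a :: as => norm1 a + norm2 as

theorem norm2_addLL (a b : List (List Int)) : norm2 (addLL a b) ≤ norm2 a + norm2 b := by
  induction a generalizing b with
  | nil => simp [addLL, norm2]
  | cons a as ih =>
    cases b with
    | nil => simp [addLL, norm2]
    | cons b bs =>
      simp only [addLL, norm2]
      have := ih bs
      have := norm1_addL a b
      linarith

theorem norm2_smulLL (c : List Int) (a : List (List Int)) :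
    norm2 (smulLL c a) ≤ norm1 c * norm2 a := by
  induction a with
  | nil => simp [smulLL, norm2]
  | cons a as ih =>
    simp only [smulLL, norm2]
    have := norm1_mulL c a
    linarith

theorem norm2_mulLL (a b : List (List Int)) : norm2 (mulLL a b) ≤ norm2 a * norm2 b := by
  induction a with
  | nil => simp [mulLL, norm2]
  | cons a as ih =>
    simp only [mulLL, norm2]
    have h1 := norm2_addLL (smulLL a b) ([] :: mulLL as b)
    have h2 := norm2_smulLL a b
    simp only [norm2, norm1, zero_add] at h1
    linarith

theorem norm2_outL (r c : List Int) : norm2 (outL r c) = norm1 r * norm1 c := by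
  induction c with
  | nil => simp [outL, norm2, norm1]
  | cons c cs ih => simp only [outL, norm2, norm1_smulL, norm1, ih]; ring

theorem norm2_negLL (a : List (List Int)) : norm2 (negLL a) = norm2 a := by
  induction a with
  | nil => simp [negLL, norm2]
  | cons a as ih => simp [negLL, norm2, negL, norm1_smulL, ih]

theorem kron1 {b : Int} (l : List Int) (h0 : evL l b = 0) (hn : norm1 l < b)
    {R : Type*} [CommRing R] (x : R) : evL l x = 0 := by
  induction l with
  | nil => simp [evL]
  | cons a l ih =>
    simp only [evL, norm1, Int.cast_id] at *
    have h1 := norm1_nonneg l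
    have ha : |a| < b := by linarith
    have hb : 0 < b := lt_of_le_of_lt (abs_nonneg a) ha
    have hd : b ∣ a := ⟨-evL l b, by linarith⟩
    have ha0 : a = 0 := Int.eq_zero_of_abs_lt_dvd hd ha
    subst ha0
    have h2 : evL l b = 0 := by
      rcases mul_eq_zero.mp (by linarith : b * evL l b = 0) with h | h
      · omega
      · exact h
    rw [ih h2 (by simpa using hn)]
    simp

def pk (b : Int) (L : List (List Int)) : List Int := L.map fun r => evL r b

theorem pk_addLL (b : Int) (A B : List (List Int)) : pk b (addLL A B) = addL (pk b A) (pk b B) := by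
  induction A generalizing B with
  | nil => simp [addLL, pk, addL]
  | cons a as ih =>
    cases B with
    | nil => simp [addLL, pk, addL]
    | cons c cs =>
      have := ih cs
      simp only [pk] at this
      simp [addLL, pk, addL, this, ev_addL]

theorem pk_smulLL (b : Int) (c : List Int) (A : List (List Int)) :
    pk b (smulLL c A) = smulL (evL c b) (pk b A) := by
  induction A with
  | nil => simp [smulLL, pk, smulL]
  | cons a as ih =>
    simp only [pk] at ih
    simp [smulLL, pk, smulL, ih, ev_mulL]

theorem pk_mulLL (b : Int) (A B : List (List Int)) :
    pk b (mulLL A B) = mulL (pk b A) (pk b B) := by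
  induction A with
  | nil => simp [mulLL, pk, mulL]
  | cons a as ih =>
    have : pk b ([] :: mulLL as B) = 0 :: pk b (mulLL as B) := by simp [pk, evL]
    simp only [mulLL, pk_addLL, pk_smulLL, this, ih]
    simp [pk, mulL]

theorem pk_negLL (b : Int) (A : List (List Int)) : pk b (negLL A) = negL (pk b A) := by
  induction A with
  | nil => simp [negLL, pk, negL, smulL]
  | cons a as ih =>
    simp only [pk, negL] at ih
    simp [negLL, pk, negL, smulL, ih, ev_smulL]

theorem pk_outL (b : Int) (r c : List Int) : pk b (outL r c) = smulL (evL r b) c := by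
  induction c with
  | nil => simp [outL, pk, smulL]
  | cons c cs ih =>
    simp only [pk] at ih
    simp [outL, pk, smulL, ih, ev_smulL, mul_comm]

theorem kron2 {b : Int} (L : List (List Int)) (h0 : ∀ z ∈ pk b L, z = 0) (hn : norm2 L < b)
    {R : Type*} [CommRing R] (x y : R) : ev2 L x y = 0 := by
  induction L with
  | nil => simp [ev2]
  | cons r L ih =>
    have hr := norm1_nonneg r
    have hL : 0 ≤ norm2 L := by
      clear ih h0 hn
      induction L with
      | nil => simp [norm2]
      | cons a as ih => simp only [norm2]; have := norm1_nonneg a; linarith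
    simp only [norm2] at hn
    simp only [ev2]
    have e0 : evL r b = 0 := h0 _ (by simp [pk])
    rw [kron1 r e0 (by linarith),
      ih (fun z hz => h0 z (by simp only [pk] at hz ⊢; simp [hz])) (by linarith)]
    simp

def zeroL : List Int → Bool
  | [] => true
  | a :: as => a == 0 && zeroL as

theorem zeroL_spec {l : List Int} (h : zeroL l = true) : ∀ z ∈ l, z = 0 := by
  induction l with
  | nil => simp
  | cons a as ih =>
    simp only [zeroL, Bool.and_eq_true, beq_iff_eq] at h
    intro z hz
    rcases List.mem_cons.mp hz with rfl | hz
    · exact h.1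
    · exact ih h.2 z hz

/-- Kernel-friendly evaluation helpers. -/
def forceN {β : Type} (n : Nat) (f : Nat → β) : β :=
  match n with
  | Nat.zero => f Nat.zero
  | Nat.succ k => f (Nat.succ k)

theorem forceN_eq {β : Type} (n : Nat) (f : Nat → β) : forceN n f = f n := by
  cases n <;> rfl

def forceI {β : Type} (z : Int) (f : Int → β) : β :=
  match z with
  | Int.ofNat n => forceN n fun n => f (Int.ofNat n)
  | Int.negSucc n => forceN n fun n => f (Int.negSucc n)

theorem forceI_eq {β : Type} (z : Int) (f : Int → β) : forceI z f = f z := by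
  cases z <;> simp [forceI, forceN_eq]

def forceL {β : Type} : List Int → (List Int → β) → β
  | [], f => f []
  | a :: as, f => forceI a fun a => forceL as fun l => f (a :: l)

theorem forceL_eq {β : Type} (l : List Int) (f : List Int → β) : forceL l f = f l := by
  induction l generalizing f with
  | nil => rfl
  | cons a as ih => simp [forceL, forceI_eq, ih]

def evI : List Int → Int → Int
  | [], _ => 0
  | a :: l, x => a + x * evI l x

theorem evI_eq (l : List Int) (x : Int) : evI l x = evL l x := by
  induction l with
  | nil => rfl
  | cons a l ih => simp [evI, evL, ih]

end Lists

section GH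

def nA1 : List Int := [6, 20, 20, 5]
def nA2 : List Int := [-10, -14, 0, 10, 5]
def nA3 : List Int := [-4, -8, 0, 10, 5]
def nA4 : List Int := [-4, -24, -48, 8, 60, 30, 5]
def nA5 : List Int := [-8, 0, 240, 1040, 2100, 3000, 2700, -1500, -3750, 3500, 7500, 3750, 625]
def nB1 : List Int := [2, 5, 5]
def nB2 : List Int := [-1, -5, 0, 10, 5]

def powL (l : List Int) : Nat → List Int
  | 0 => [1]
  | n + 1 => mulL l (powL l n)

theorem ev_powL {R : Type*} [CommRing R] (l : List Int) (n : Nat) (x : R) :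
    evL (powL l n) x = evL l x ^ n := by
  induction n with
  | zero => simp [powL, evL]
  | succ n ih => rw [powL, ev_mulL, ih]; ring

def qL : List Int :=
  0 :: mulL (powL nA1 2) (mulL (powL nA2 4) (mulL (powL nA3 2) (mulL nA4 (powL nA5 4))))

def rL : List Int := smulL (-16777216) (mulL (powL nB1 5) (powL nB2 15))

def Gpl : List (List Int) := [
  [4608, 76800, 573440, 2457600, 6370560, 8990976, 1257600, -21141120, -41080800, -29160000, 15820800, 52935200, 46632000, 10386000, -17364000, -20910000, -11940000, -4155000, -900000, -112500, -6250],
  [76800, 1253120, 9229440, 39484000, 104152400, 157402400, 62207840, -267112320, -612156000, -536773200, 55222800, 648848800, 696380000, 271969000, -132011000, -241079000, -156345000, -59332500, -13837500, -1850000, -109375],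
  [573440, 9229440, 67066720, 284467600, 752080000, 1173359680, 634062480, -1491566160, -3909691800, -3862253600, -511543600, 3277348800, 4146239000, 2124809000, -180638500, -1046748000, -781522500, -321495000, -80175000, -11421875, -718750],
  [2457600, 39484000, 284467600, 1193424000, 3127437600, 4895160000, 2945412000, -5051179800, -14255667000, -14794957800, -3852971000, 8974324000, 12913473000, 7874391000, 1332345000, -1680322500, -1605172500, -724781250, -193790625, -29562500, -2000000],
  [6370560, 104152400, 752080000, 3127437600, 8056196400, 12304424400, 7113295800, -12217314600, -32990608800, -33274480200, -9983764000, 14915569000, 22441372500, 15602847000, 6899812500, 2173140000, 518231250, 76246875, -5250000, -5031250, -687500],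
  [8990976, 157402400, 1173359680, 4895160000, 12304424400, 17527710600, 6976326000, -23454717600, -50381364000, -43630998000, -8835412000, 18489422500, 22432372500, 17775345000, 16364418750, 14583817500, 9301153125, 3858487500, 992718750, 144265625, 9062500],
  [1257600, 62207840, 634062480, 2945412000, 7113295800, 6976326000, -8452001400, -36824095200, -50860684500, -28064277000, 11812953500, 30697969500, 25692075000, 21862923750, 26370611250, 26313590625, 17316806250, 7317656250, 1932421875, 292343750, 19453125],
  [-21141120, -267112320, -1491566160, -5051179800, -12217314600, -23454717600, -36824095200, -44443684500, -33901083000, -439821000, 42845157000, 72901035000, 75875883750, 56836721250, 31885528125, 13596656250, 4525518750, 1241296875, 286218750, 48046875, 3984375],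
  [-41080800, -612156000, -3909691800, -14255667000, -32990608800, -50381364000, -50860684500, -33901083000, -14906230500, 9237049500, 64984110000, 140865101250, 167652202500, 108528609375, 18164100000, -31328175000, -31050984375, -14438625000, -3865078125, -573515625, -36796875],
  [-29160000, -536773200, -3862253600, -14794957800, -33274480200, -43630998000, -28064277000, -439821000, 9237049500, 20556956250, 85557296250, 176769955000, 188111615625, 88427990625, -27343846875, -70945593750, -51637921875, -21361968750, -5372578125, -771093750, -48828125],
  [15820800, 55222800, -511543600, -3852971000, -9983764000, -8835412000, 11812953500, 42845157000, 64984110000, 85557296250, 113571835000, 112535203125, 50350971875, -31517440625, -67829328125, -52402109375, -23668078125, -6709921875, -1181953125, -119921875, -5468750],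
  [52935200, 648848800, 3277348800, 8974324000, 14915569000, 18489422500, 30697969500, 72901035000, 140865101250, 176769955000, 112535203125, -32263028125, -138151403125, -122625578125, -36832843750, 22563328125, 29088750000, 14372109375, 3935156250, 589062500, 37890625],
  [46632000, 696380000, 4146239000, 12913473000, 22441372500, 22432372500, 25692075000, 75875883750, 167652202500, 188111615625, 50350971875, -138151403125, -185139609375, -69789843750, 56315062500, 88808906250, 56041875000, 20808281250, 4744921875, 620703125, 35937500],
  [10386000, 271969000, 2124809000, 7874391000, 15602847000, 17775345000, 21862923750, 56836721250, 108528609375, 88427990625, -31517440625, -122625578125, -69789843750, 57428203125, 121384218750, 95968828125, 44872031250, 13380468750, 2521875000, 276953125, 13671875],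
  [-17364000, -132011000, -180638500, 1332345000, 6899812500, 16364418750, 26370611250, 31885528125, 18164100000, -27343846875, -67829328125, -36832843750, 56315062500, 121384218750, 110059453125, 60197812500, 21338671875, 4917187500, 705468750, 56640625, 1953125],
  [-20910000, -241079000, -1046748000, -1680322500, 2173140000, 14583817500, 26313590625, 13596656250, -31328175000, -70945593750, -52402109375, 22563328125, 88808906250, 95968828125, 60197812500, 24258984375, 6369140625, 1055859375, 99609375, 3906250],
  [-11940000, -156345000, -781522500, -1605172500, 518231250, 9301153125, 17316806250, 4525518750, -31050984375, -51637921875, -23668078125, 29088750000, 56041875000, 44872031250, 21338671875, 6369140625, 1171875000, 123046875, 5859375],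
  [-4155000, -59332500, -321495000, -724781250, 76246875, 3858487500, 7317656250, 1241296875, -14438625000, -21361968750, -6709921875, 14372109375, 20808281250, 13380468750, 4917187500, 1055859375, 123046875, 5859375],
  [-900000, -13837500, -80175000, -193790625, -5250000, 992718750, 1932421875, 286218750, -3865078125, -5372578125, -1181953125, 3935156250, 4744921875, 2521875000, 705468750, 99609375, 5859375],
  [-112500, -1850000, -11421875, -29562500, -5031250, 144265625, 292343750, 48046875, -573515625, -771093750, -119921875, 589062500, 620703125, 276953125, 56640625, 3906250],
  [-6250, -109375, -718750, -2000000, -687500, 9062500, 19453125, 3984375, -36796875, -48828125, -5468750, 37890625, 35937500, 13671875, 1953125]]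

def dotI : List Int → List Int → Int
  | a :: as, b :: bs => a * b + dotI as bs
  | _, _ => 0

def hrec (R Q g : Int) (gr : List Int) :
    List Int → List Int → List Int → (List Int → Bool) → Bool
  | a :: as, b :: bs, prev, k =>
    forceI ((R * a - Q * b - dotI gr prev) / g) fun z => hrec R Q g gr as bs (z :: prev) k
  | [], _, prev, k => k prev
  | _ :: _, [], prev, k => k prev

theorem hrec_spec (R Q g : Int) (gr as bs prev : List Int) (k : List Int → Bool)
    (h : hrec R Q g gr as bs prev k = true) : ∃ z, k z = true := by
  induction as generalizing bs prev with
  | nil => exact ⟨_, by simpa [hrec] using h⟩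
  | cons a as ih =>
    cases bs with
    | nil => exact ⟨_, by simpa [hrec] using h⟩
    | cons b bs =>
      rw [hrec, forceI_eq] at h
      exact ih _ _ h

def bB : Int := 2 ^ 256

def unpK : Nat → Int → (List Int → Bool) → Bool
  | 0, _, k => k []
  | n + 1, z, k =>
    forceI ((z + 2 ^ 255) % 2 ^ 256 - 2 ^ 255) fun c =>
      forceI ((z - c) / 2 ^ 256) fun z' => unpK n z' fun l => k (c :: l)

theorem unpK_spec (n : Nat) (z : Int) (k : List Int → Bool) (h : unpK n z k = true) :
    ∃ l, k l = true := by
  induction n generalizing z k with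
  | zero => exact ⟨_, h⟩
  | succ n ih =>
    rw [unpK, forceI_eq, forceI_eq] at h
    obtain ⟨l, hl⟩ := ih _ _ h
    exact ⟨_, hl⟩

def unpA : List Int → (List (List Int) → Bool) → Bool
  | [], k => k []
  | z :: zs, k => unpK 66 z fun l => unpA zs fun L => k (l :: L)

theorem unpA_spec (zs : List Int) (k : List (List Int) → Bool) (h : unpA zs k = true) :
    ∃ L, k L = true := by
  induction zs generalizing k with
  | nil => exact ⟨_, h⟩
  | cons z zs ih =>
    rw [unpA] at h
    obtain ⟨l, hl⟩ := unpK_spec _ _ _ h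
    obtain ⟨L, hL⟩ := ih _ hl
    exact ⟨_, hL⟩

def norm1N : List Int → Nat
  | [] => 0
  | a :: as => a.natAbs + norm1N as

theorem norm1N_eq (l : List Int) : (norm1N l : Int) = norm1 l := by
  induction l with
  | nil => rfl
  | cons a as ih => simp [norm1N, norm1, ih]

def norm2N : List (List Int) → Nat
  | [] => 0
  | a :: as => norm1N a + norm2N as

theorem norm2N_eq (l : List (List Int)) : (norm2N l : Int) = norm2 l := by
  induction l with
  | nil => rfl
  | cons a as ih => simp [norm2N, norm2, ih, norm1N_eq]

def pkI (L : List (List Int)) : List Int :=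
  match L with
  | [] => []
  | r :: L => evI r bB :: pkI L

theorem pkI_eq (L : List (List Int)) : pkI L = pk bB L := by
  induction L with
  | nil => rfl
  | cons r L ih => simp only [pkI, ih, evI_eq]; rfl

def finChk (ql rl gs : List Int) (Q R : Int) (H : List (List Int)) : Bool :=
  forceL (pkI H) fun hs =>
    zeroL (addL (addL (smulL R ql) (negL (smulL Q rl))) (negL (mulL gs hs))) &&
    Nat.ble H.length 66 && Nat.ble (2 * (norm1N rl * norm1N ql) + norm2N Gpl * norm2N H + 1) (2 ^ 256)

def bigChk : Bool :=
  forceL qL fun ql => forceL rL fun rl => forceL (pkI Gpl) fun gs =>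
    forceI (evI ql bB) fun Q => forceI (evI rl bB) fun R =>
      hrec R Q (gs.getD 20 0) ((gs.take 20).reverse) (ql.reverse.take 66)
        ((rl ++ List.replicate 15 0).reverse.take 66) [] fun zs =>
          unpA zs fun H => finChk ql rl gs Q R H

theorem bigChk_true : bigChk = true := by decide +kernel

theorem GH_main : ∃ H : List (List Int), H.length ≤ 66 ∧ ∀ {R : Type} [CommRing R] (x y : R),
    evL rL x * evL qL y - evL qL x * evL rL y = ev2 Gpl x y * ev2 H x y := by
  have h := bigChk_true
  simp only [bigChk, forceL_eq, forceI_eq] at h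
  obtain ⟨zs, h⟩ := hrec_spec _ _ _ _ _ _ _ _ h
  obtain ⟨H, h⟩ := unpA_spec _ _ h
  simp only [finChk, forceL_eq, Bool.and_eq_true, pkI_eq, evI_eq] at h
  obtain ⟨⟨h0, hlen⟩, hn⟩ := h
  refine ⟨H, Nat.le_of_ble_eq_true hlen, fun {R} _ x y => ?_⟩
  have h1 : pk bB (addLL (addLL (outL rL qL) (negLL (outL qL rL))) (negLL (mulLL Gpl H))) =
      addL (addL (smulL (evL rL bB) qL) (negL (smulL (evL qL bB) rL)))
        (negL (mulL (pk bB Gpl) (pk bB H))) := by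
    simp only [pk_addLL, pk_negLL, pk_mulLL, pk_outL]
  rw [← h1] at h0
  have h2 := kron2 (R := R) (b := bB) _ (zeroL_spec h0) (by
    have e1 := norm2_addLL (addLL (outL rL qL) (negLL (outL qL rL))) (negLL (mulLL Gpl H))
    have e2 := norm2_addLL (outL rL qL) (negLL (outL qL rL))
    have e3 := norm2_mulLL Gpl H
    rw [norm2_negLL] at e1 e2
    rw [norm2_outL, norm2_outL] at e2
    have hn' := Nat.le_of_ble_eq_true hn
    have hn2 := Int.ofNat_le.mpr hn'
    rw [show ((2 ^ 256 : Nat) : Int) = bB from rfl] at hn2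
    generalize bB = M at hn2 ⊢
    push_cast at hn2
    rw [norm2N_eq, norm2N_eq, norm1N_eq, norm1N_eq] at hn2
    rw [mul_comm (norm1 qL)] at e2
    linarith) x y
  simp only [ev2_addLL, ev2_negLL, ev2_outL, ev2_mulLL] at h2
  linear_combination h2

end GH

section Irred
open Polynomial

theorem coeff_evL {R : Type*} [CommRing R] (l : List Int) (n : ℕ) :
    (evL l (X : R[X])).coeff n = ((l.getD n 0 : Int) : R) := by
  induction l generalizing n with
  | nil => simp [evL]
  | cons a l ih =>
    simp only [evL]
    cases n with
    | zero => simp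
    | succ n =>
      rw [← map_intCast (C : R →+* R[X]), coeff_add, coeff_C_succ, coeff_X_mul, ih]
      simp

theorem q_eq : _root_.q = evL qL (X : ℚ[X]) := by
  simp only [_root_.q, qL, evL, ev_mulL, ev_powL, nA1, nA2, nA3, nA4, nA5]
  push_cast
  ring

theorem r_eq : _root_.r = evL rL (X : ℚ[X]) := by
  simp only [_root_.r, rL, evL, ev_mulL, ev_powL, ev_smulL, nB1, nB2]
  push_cast
  ring

theorem F_eq : _root_.F = (1 - C RatFunc.X) * evL qL X + evL rL X := by
  rw [_root_.F, _root_.p, q_eq, r_eq]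
  rw [Polynomial.map_add, ← coe_mapRingHom, map_evL, map_evL, coe_mapRingHom, map_X]
  ring

theorem qL_len : qL.length = 86 := by decide +kernel
theorem rL_len : rL.length = 71 := by decide +kernel
theorem qL_lc : qL.getD 85 0 = 5 ^ 25 := by decide +kernel

theorem s_ne : (1 - RatFunc.X : RatFunc ℚ) ≠ 0 := by
  intro h
  have h1 : (RatFunc.X : RatFunc ℚ) = algebraMap ℚ[X] (RatFunc ℚ) X := by simp
  have h2 : algebraMap ℚ[X] (RatFunc ℚ) (1 - X) = 0 := by rw [map_sub, ← h1, map_one, h]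
  have h3 := (map_eq_zero_iff _ (IsFractionRing.injective ℚ[X] (RatFunc ℚ))).mp h2
  have h4 := congrArg (Polynomial.eval 0) h3
  simp at h4

theorem F_deg : _root_.F.natDegree = 85 := by
  apply natDegree_eq_of_le_of_coeff_ne_zero
  · rw [natDegree_le_iff_coeff_eq_zero]
    intro n hn
    rw [F_eq, ← C_1, ← C_sub, coeff_add, coeff_C_mul, coeff_evL, coeff_evL,
      List.getD_eq_default _ _ (by rw [qL_len]; omega),
      List.getD_eq_default _ _ (by rw [rL_len]; omega)]
    simp
  · rw [F_eq, ← C_1, ← C_sub, coeff_add, coeff_C_mul, coeff_evL, coeff_evL,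
      List.getD_eq_default rL _ (by rw [rL_len]; omega), qL_lc]
    have := s_ne
    simp [this]

theorem bez_cop (a b u v : List Int) (c : Int) (hc : c ≠ 0)
    (h : addL (mulL a u) (mulL b v) = addL [c] (smulL 0 (addL (mulL a u) (mulL b v)))) :
    IsCoprime (evL a (X : ℚ[X])) (evL b X) := by
  have h1 := congrArg (fun l => evL l (X : ℚ[X])) h
  simp only [ev_addL, ev_mulL, ev_smulL, evL] at h1
  have hc' : (c : ℚ) ≠ 0 := by exact_mod_cast hc
  have h2 : (C (c : ℚ)⁻¹ : ℚ[X]) * (c : ℚ[X]) = 1 := by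
    rw [← map_intCast (C : ℚ →+* ℚ[X]), ← C_mul, inv_mul_cancel₀ hc', C_1]
  refine ⟨C (c : ℚ)⁻¹ * evL u X, C (c : ℚ)⁻¹ * evL v X, ?_⟩
  push_cast at h1
  linear_combination C (c : ℚ)⁻¹ * h1 + h2

theorem cop_of (a : List Int) (h1 : IsCoprime (evL a (X : ℚ[X])) (evL nB1 X))
    (h2 : IsCoprime (evL a (X : ℚ[X])) (evL nB2 X)) : IsCoprime (evL a (X : ℚ[X])) (evL rL X) := by
  simp only [rL, ev_mulL, ev_powL, ev_smulL]
  apply IsCoprime.mul_right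
  · have : IsUnit (((-16777216 : Int) : ℚ[X])) := by
      rw [← map_intCast (C : ℚ →+* ℚ[X])]
      exact isUnit_C.mpr (IsUnit.mk0 _ (by norm_num))
    exact (isCoprime_of_isUnit this)
  · exact IsCoprime.mul_right h1.pow_right h2.pow_right
where
  isCoprime_of_isUnit {x y : ℚ[X]} (h : IsUnit y) : IsCoprime x y := by
    obtain ⟨z, hz⟩ := h.exists_left_inv
    exact ⟨0, z, by simp [hz]⟩

theorem cop_qr : IsCoprime (evL qL (X : ℚ[X])) (evL rL X) := by
  have h0 : evL qL (X : ℚ[X]) = evL [0, 1] X * (evL nA1 X ^ 2 * (evL nA2 X ^ 4 *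
      (evL nA3 X ^ 2 * (evL nA4 X * evL nA5 X ^ 4)))) := by
    simp only [qL, evL, ev_mulL, ev_powL]
    push_cast
    ring
  rw [h0]
  refine IsCoprime.mul_left (cop_of _ ?_ ?_) (IsCoprime.mul_left (IsCoprime.pow_left (cop_of _ ?_ ?_))
    (IsCoprime.mul_left (IsCoprime.pow_left (cop_of _ ?_ ?_)) (IsCoprime.mul_left
      (IsCoprime.pow_left (cop_of _ ?_ ?_)) (IsCoprime.mul_left (cop_of _ ?_ ?_)
        (IsCoprime.pow_left (cop_of _ ?_ ?_))))))
  · exact bez_cop _ _ [-5, -5] [1] 2 (by decide) (by decide +kernel)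
  · exact bez_cop _ _ [-5, 0, 10, 5] [-1] 1 (by decide) (by decide +kernel)
  · exact bez_cop _ _ [-5, -5] [18, 20, 5] 6 (by decide) (by decide +kernel)
  · exact bez_cop _ _ [-11, -55, 65, 55] [-75, -175, -55] 9 (by decide) (by decide +kernel)
  · exact bez_cop _ _ [5, 25] [52, 30, -30, -25] 54 (by decide) (by decide +kernel)
  · exact bez_cop _ _ [0, 5, -5, -5] [-9, -5, 5, 5] 9 (by decide) (by decide +kernel)
  · exact bez_cop _ _ [15, 25] [36, 20, -40, -25] 12 (by decide) (by decide +kernel)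
  · exact bez_cop _ _ [0, 5, -5, -5] [-3, -5, 5, 5] 3 (by decide) (by decide +kernel)
  · exact bez_cop _ _ [-75, -125] [12, -1180, -380, 1200, 700, 125] 324 (by decide)
      (by decide +kernel)
  · exact bez_cop _ _ [-30, -5, 50, 25] [93, 275, -15, -295, -150, -25] 27 (by decide)
      (by decide +kernel)
  · exact bez_cop _ _ [-175, -125] [2216, -6040, 30560, 44700, 60600, 130500, -54000, -153750,
      97500, 212500, 100000, 15625] 5832 (by decide) (by decide +kernel)
  · exact bez_cop _ _ [-228, -80, 430, 235] [1095, -4835, -33985, -77325, -115050, -137175, 34500,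
      199875, -105375, -322500, -171250, -29375] 729 (by decide) (by decide +kernel)

theorem q_ne : evL qL (X : ℚ[X]) ≠ 0 := by
  intro h
  have := congrArg (fun f => f.coeff 85) h
  simp only [coeff_evL, qL_lc] at this
  norm_num at this

theorem lin_irred (a b : ℚ[X]) (ha : a ≠ 0) (h : IsCoprime a b) :
    Irreducible ((1 - C X) * a.map C + b.map C : ℚ[X][X]) := by
  have h1 : Bivariate.swap (R := ℚ) ((1 - C X) * a.map C + b.map C : ℚ[X][X]) =
      C (-a) * X + C (a + b) := by
    rw [map_add, map_mul, map_sub, map_one, Bivariate.swap_map_C, Bivariate.swap_map_C,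
      Bivariate.swap_X, C_neg, C_add]
    ring
  rw [← MulEquiv.irreducible_iff (Bivariate.swap (R := ℚ)), h1]
  apply irreducible_C_mul_X_add_C (neg_ne_zero.mpr ha)
  apply IsCoprime.isRelPrime
  apply IsCoprime.neg_left
  have := h.mul_add_left_right 1
  simpa using this

theorem F_irred : Irreducible _root_.F := by
  let P : ℚ[X][X] := (1 - C X) * (evL qL (X : ℚ[X])).map C + (evL rL (X : ℚ[X])).map C
  have hP : P.map (algebraMap ℚ[X] (RatFunc ℚ)) = _root_.F := by
    rw [F_eq]
    simp only [P, Polynomial.map_add, Polynomial.map_mul, Polynomial.map_sub, Polynomial.map_one,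
      Polynomial.map_map, map_C, RatFunc.algebraMap_X]
    simp only [← coe_mapRingHom, map_evL]
    simp
  have hi : Irreducible P := lin_irred _ _ q_ne cop_qr
  have hd : P.natDegree ≠ 0 := by
    intro h
    have := natDegree_map_le (f := algebraMap ℚ[X] (RatFunc ℚ)) (p := P)
    rw [hP, F_deg] at this
    omega
  rw [← hP]
  exact (hi.isPrimitive hd).irreducible_iff_irreducible_map_fraction_map.mp hi

end Irred

section Place
open Polynomial

def PlaceData (L : Type) [Field L] [Algebra (RatFunc ℚ) L] (l : ℕ) (u0 : ZMod l) : Prop :=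
  ∃ (κ : Type) (_ : Field κ) (B : Subring L) (π : B →+* κ) (e : ZMod l →+* κ) (uB : B),
    (uB : L) = algebraMap (RatFunc ℚ) L (1 - RatFunc.X)⁻¹ ∧ π uB = e u0 ∧
    (∃ j : B, 5 * j = 1) ∧
    (∀ x : L, evL qL x + uB * evL rL x = 0 → x ∈ B) ∧
    ∃ σ : L ≃ₐ[RatFunc ℚ] L, ∀ x y : B, (y : L) = σ x → π y = π x ^ l

theorem place_gen (L : Type) [Field L] [Algebra (RatFunc ℚ) L] [FiniteDimensional (RatFunc ℚ) L]
    [IsGalois (RatFunc ℚ) L] (l : ℕ) [Fact l.Prime]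
    (A : Type) [CommRing A] [IsDomain A] [IsIntegrallyClosed A] (f : A →+* RatFunc ℚ)
    (hf : Function.Injective f) (w : A) (hw : f w = (1 - RatFunc.X)⁻¹) (i5 : A) (hi : 5 * i5 = 1)
    (φ : A →+* ZMod l) : PlaceData L l (φ w) := by
  let : Algebra A (RatFunc ℚ) := f.toAlgebra
  let : Algebra A L := ((algebraMap (RatFunc ℚ) L).comp f).toAlgebra
  have : IsScalarTower A (RatFunc ℚ) L := IsScalarTower.of_algebraMap_eq fun _ => rfl
  have : FaithfulSMul A (RatFunc ℚ) := (faithfulSMul_iff_algebraMap_injective _ _).mpr hf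
  have : IsFractionRing A (RatFunc ℚ) := by
    apply IsFractionRing.of_field
    let g : FractionRing A →+* RatFunc ℚ := IsFractionRing.lift (A := A) (g := f) hf
    have hg : ∀ a, g (algebraMap A _ a) = f a := fun a => IsFractionRing.lift_algebraMap hf a
    have hu : (1 - RatFunc.X : RatFunc ℚ)⁻¹ ∈ g.fieldRange := ⟨algebraMap A _ w, by rw [hg, hw]⟩
    have ht : (RatFunc.X : RatFunc ℚ) ∈ g.fieldRange := by
      have := g.fieldRange.sub_mem g.fieldRange.one_mem (g.fieldRange.inv_mem hu)
      rwa [inv_inv, sub_sub_cancel] at this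
    have hp : ∀ a : ℚ[X], algebraMap ℚ[X] (RatFunc ℚ) a ∈ g.fieldRange := by
      intro a
      induction a using Polynomial.induction_on' with
      | add a b ha hb => rw [map_add]; exact g.fieldRange.add_mem ha hb
      | monomial n c =>
        rw [← C_mul_X_pow_eq_monomial, map_mul, map_pow, RatFunc.algebraMap_X, RatFunc.algebraMap_C]
        refine g.fieldRange.mul_mem ?_ (g.fieldRange.pow_mem ht n)
        rw [show (RatFunc.C c : RatFunc ℚ) = (c : RatFunc ℚ) by simp]
        exact SubfieldClass.ratCast_mem _ c
    intro z
    have hz : z ∈ g.fieldRange := by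
      rw [← RatFunc.num_div_denom z]
      exact g.fieldRange.div_mem (hp _) (hp _)
    obtain ⟨y, hy⟩ := hz
    obtain ⟨a, b, -, rfl⟩ := IsFractionRing.div_surjective (A := A) y
    refine ⟨a, b, ?_⟩
    rw [← hy, map_div₀, hg, hg]
    rfl
  obtain ⟨κ, _, π, e, h1, σ, h2⟩ := place_abs A (RatFunc ℚ) L l φ
  refine ⟨κ, inferInstance, (integralClosure A L).toSubring, π, e,
    algebraMap A (integralClosure A L) w, ?_, h1 w, ?_, ?_, σ, h2⟩
  · change algebraMap (RatFunc ℚ) L (f w) = _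
    rw [hw]
  · refine ⟨algebraMap A (integralClosure A L) i5, ?_⟩
    change (5 : integralClosure A L) * algebraMap A (integralClosure A L) i5 = 1
    rw [← map_ofNat (algebraMap A (integralClosure A L)) 5, ← map_mul, hi, map_one]
  · intro x hx
    change IsIntegral A x
    refine ⟨C (i5 ^ 25) * (evL qL X + C w * evL rL X), ?_, ?_⟩
    · apply monic_of_natDegree_le_of_coeff_eq_one 85
      · rw [natDegree_le_iff_coeff_eq_zero]
        intro n hn
        rw [coeff_C_mul, coeff_add, coeff_C_mul, coeff_evL, coeff_evL,
          List.getD_eq_default _ _ (by rw [qL_len]; omega),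
          List.getD_eq_default _ _ (by rw [rL_len]; omega)]
        simp
      · rw [coeff_C_mul, coeff_add, coeff_C_mul, coeff_evL, coeff_evL,
          List.getD_eq_default rL _ (by rw [rL_len]; omega), qL_lc]
        rw [Int.cast_pow, Int.cast_ofNat, Int.cast_zero, mul_zero, add_zero, ← mul_pow, mul_comm, hi, one_pow]
    · rw [← aeval_def, map_mul, map_add, map_mul, aeval_C, aeval_C]
      rw [← AlgHom.coe_toRingHom, map_evL, map_evL, AlgHom.coe_toRingHom, aeval_X]
      have : algebraMap A L w = ((algebraMap A (integralClosure A L) w : integralClosure A L) : L) :=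
        rfl
      rw [this]
      exact mul_eq_zero_of_right _ hx

theorem place (L : Type) [Field L] [Algebra (RatFunc ℚ) L] [FiniteDimensional (RatFunc ℚ) L]
    [IsGalois (RatFunc ℚ) L] (l : ℕ) [Fact l.Prime] (h5 : (5 : ZMod l) ≠ 0) (u0 : ZMod l) :
    PlaceData L l u0 := by
  let R5 := Localization.Away (5 : ℤ)
  have hle : Submonoid.powers (5 : ℤ) ≤ nonZeroDivisors ℤ :=
    powers_le_nonZeroDivisors_of_noZeroDivisors (by norm_num)
  have : IsDomain R5 := IsLocalization.isDomain_localization hle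
  have : IsIntegrallyClosed R5 := isIntegrallyClosed_of_isLocalization R5 _ hle
  have hq : IsUnit (Int.castRingHom ℚ 5) := IsUnit.mk0 _ (by norm_num)
  have hz : IsUnit (Int.castRingHom (ZMod l) 5) := IsUnit.mk0 _ (by simpa using h5)
  let fq : R5 →+* ℚ := IsLocalization.Away.lift (5 : ℤ) hq
  let fz : R5 →+* ZMod l := IsLocalization.Away.lift (5 : ℤ) hz
  have hfq : Function.Injective fq := by
    have : Function.Injective (Int.castRingHom ℚ) := Int.cast_injective
    refine IsLocalization.lift_injective_iff _ |>.mpr fun x y => ?_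
    rw [this.eq_iff, (IsLocalization.injective R5 hle).eq_iff]
  let u : RatFunc ℚ := (1 - RatFunc.X)⁻¹
  have hu : Function.Injective (aeval u : ℚ[X] →ₐ[ℚ] RatFunc ℚ) := by
    rw [← transcendental_iff_injective]
    intro h
    have h1 : IsAlgebraic ℚ (1 - u⁻¹) := (isAlgebraic_one).sub h.inv
    have h2 : (1 - u⁻¹ : RatFunc ℚ) = RatFunc.X := by simp [u]
    rw [h2] at h1
    refine RatFunc.transcendental_X (K := ℚ) ?_
    convert h1
    exact Subsingleton.elim _ _
  let f : R5[X] →+* RatFunc ℚ := (aeval u : ℚ[X] →ₐ[ℚ] RatFunc ℚ).toRingHom.comp (mapRingHom fq)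
  have hf : Function.Injective f := hu.comp (map_injective fq hfq)
  have hw : f X = (1 - RatFunc.X)⁻¹ := by simp [f, u]
  have h55 : algebraMap ℤ R5 5 * IsLocalization.Away.invSelf (5 : ℤ) = 1 :=
    IsLocalization.Away.mul_invSelf (S := R5) (5 : ℤ)
  have := place_gen L l R5[X] f hf X hw (C (IsLocalization.Away.invSelf (5 : ℤ))) (by
    rw [← map_ofNat C 5, ← C_mul, ← C_1, ← h55]
    simp) (eval₂RingHom fz u0)
  simpa using this

end Place

section Red
open Polynomial

attribute [local irreducible] qL rL

abbrev S : Type := _root_.F.SplittingField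
abbrev Om : Set S := _root_.F.rootSet S

noncomputable def uS : S := algebraMap (RatFunc ℚ) S (1 - RatFunc.X)⁻¹

theorem F_sep : _root_.F.Separable := F_irred.separable

instance galS : IsGalois (RatFunc ℚ) S := IsGalois.of_separable_splitting_field F_sep

theorem F_map0 {L : Type} [Field L] (f : RatFunc ℚ →+* L) : _root_.F.map f =
    C (f (1 - RatFunc.X)) * (evL qL X + C (f (1 - RatFunc.X)⁻¹) * evL rL X) := by
  have h : f (1 - RatFunc.X) * f (1 - RatFunc.X)⁻¹ = 1 := by
    rw [← map_mul, mul_inv_cancel₀ s_ne, map_one]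
  rw [F_eq, Polynomial.map_add, Polynomial.map_mul, Polynomial.map_sub, Polynomial.map_one, map_C]
  simp only [← coe_mapRingHom, map_evL]
  rw [coe_mapRingHom, map_X, mul_add, ← mul_assoc, ← C_mul, h, map_sub, map_one, C_sub, C_1, one_mul]

theorem F_map : (_root_.F.map (algebraMap (RatFunc ℚ) S)) =
    C (algebraMap (RatFunc ℚ) S (1 - RatFunc.X)) * (evL qL X + C uS * evL rL X) := F_map0 _

theorem map_lhs {ι B R : Type} [Fintype ι] [CommRing B] [CommRing R] (f : B →+* R) (z : ι → B) :
    (C (5 ^ 25 : B) * ∏ x, (X - C (z x))).map f = C (5 ^ 25 : R) * ∏ x, (X - C (f (z x))) := by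
  rw [Polynomial.map_mul, Polynomial.map_prod, map_C, map_pow, map_ofNat]
  simp only [Polynomial.map_sub, map_X, map_C]

theorem map_rhs {B R : Type} [CommRing B] [CommRing R] (f : B →+* R) (u : B) :
    (evL qL X + C u * evL rL X).map f = evL qL X + C (f u) * evL rL X := by
  rw [Polynomial.map_add, Polynomial.map_mul, map_C, ← coe_mapRingHom, map_evL, map_evL,
    coe_mapRingHom, map_X]

theorem mem_Om (x : S) : x ∈ Om ↔ evL qL x + uS * evL rL x = 0 := by
  rw [mem_rootSet_of_ne F_irred.ne_zero, ← eval_map_algebraMap, F_map, eval_mul, eval_C]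
  have h : algebraMap (RatFunc ℚ) S (1 - RatFunc.X) ≠ 0 := by
    rw [Ne, map_eq_zero_iff _ (algebraMap (RatFunc ℚ) S).injective]
    exact s_ne
  rw [mul_eq_zero, or_iff_right h]
  simp only [← coe_evalRingHom, map_add, map_mul, map_evL]
  simp

theorem card_Om : Fintype.card Om = 85 := by
  rw [card_rootSet_eq_natDegree F_sep (SplittingField.splits _), F_deg]

theorem prod_Om : C (5 ^ 25 : S) * ∏ x : Om, (X - C (x : S)) = evL qL X + C uS * evL rL X := by
  have h : algebraMap (RatFunc ℚ) S (1 - RatFunc.X) ≠ 0 := by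
    rw [Ne, map_eq_zero_iff _ (algebraMap (RatFunc ℚ) S).injective]
    exact s_ne
  have h1 := (SplittingField.splits _root_.F).eq_prod_roots
  have hlc : (_root_.F.map (algebraMap (RatFunc ℚ) S)).leadingCoeff =
      algebraMap (RatFunc ℚ) S (1 - RatFunc.X) * 5 ^ 25 := by
    rw [leadingCoeff, natDegree_map, F_deg, F_map, coeff_C_mul, coeff_add, coeff_C_mul, coeff_evL,
      coeff_evL, List.getD_eq_default rL _ (by rw [rL_len]; omega), qL_lc]
    rw [Int.cast_pow, Int.cast_ofNat, Int.cast_zero, mul_zero, add_zero]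
  have h2 : ((_root_.F.map (algebraMap (RatFunc ℚ) S)).roots.map fun a => X - C a).prod =
      ∏ x : Om, (X - C (x : S)) := by
    have hn : (_root_.F.map (algebraMap (RatFunc ℚ) S)).roots.Nodup :=
      nodup_roots F_sep.map
    exact Finset.prod_subtype (⟨_, hn⟩ : Finset S) (fun x => by
      rw [Finset.mem_mk, mem_roots', mem_rootSet', IsRoot.def, eval_map_algebraMap]) _
  rw [h2, hlc, F_map, C_mul, mul_assoc] at h1
  exact (mul_left_cancel₀ (C_ne_zero.mpr h) h1).symm

noncomputable def act (g : _root_.F.Gal) : Equiv.Perm Om where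
  toFun x := ⟨g x, (mem_rootSet_of_ne F_irred.ne_zero).mpr (by
    have := (mem_rootSet_of_ne F_irred.ne_zero).mp x.2
    rw [aeval_algHom_apply, this, map_zero])⟩
  invFun x := ⟨g.symm x, (mem_rootSet_of_ne F_irred.ne_zero).mpr (by
    have := (mem_rootSet_of_ne F_irred.ne_zero).mp x.2
    rw [aeval_algHom_apply, this, map_zero])⟩
  left_inv x := Subtype.ext (AlgEquiv.symm_apply_apply g _)
  right_inv x := Subtype.ext (AlgEquiv.apply_symm_apply g _)

theorem act_coe (g : _root_.F.Gal) (x : Om) : ((act g x : Om) : S) = g x := rfl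

noncomputable def actHom : _root_.F.Gal →* Equiv.Perm Om where
  toFun := act
  map_one' := by ext x; rfl
  map_mul' a b := by ext x; rfl

theorem actHom_inj : Function.Injective actHom := by
  intro a b h
  apply Gal.ext
  intro x hx
  have := congrArg (fun f => ((f ⟨x, hx⟩ : Om) : S)) h
  exact this

theorem act_trans (x y : Om) : ∃ g, act g x = y := by
  have hx := (mem_rootSet_of_ne F_irred.ne_zero).mp x.2
  have hy := (mem_rootSet_of_ne F_irred.ne_zero).mp y.2
  have hm := minpoly.eq_of_irreducible F_irred hx
  obtain ⟨g, hg⟩ := minpoly.exists_algEquiv_of_root' (K := RatFunc ℚ) (L := S)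
    (Algebra.IsAlgebraic.isAlgebraic (x : S)) (x := (y : S)) (by rw [← hm, map_mul, hy, zero_mul])
  exact ⟨g, Subtype.ext hg⟩

theorem red (l : ℕ) [Fact l.Prime] (h5 : (5 : ZMod l) ≠ 0) (u0 : ZMod l) :
    ∃ (κ : Type) (_ : Field κ) (e : ZMod l →+* κ) (ρ : Om → κ) (σ : _root_.F.Gal),
      C (5 ^ 25 : κ) * ∏ x : Om, (X - C (ρ x)) = evL qL X + C (e u0) * evL rL X ∧
      (∀ x, ρ (act σ x) = ρ x ^ l) ∧
      ∀ (G : List (List Int)) (x y : Om), ev2 G (x : S) (y : S) = 0 → ev2 G (ρ x) (ρ y) = 0 := by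
  obtain ⟨κ, _, B, π, e, uB, hu, hu0, -, hB, σ, hσ⟩ := place S l h5 u0
  have hB' : ∀ x : Om, (x : S) ∈ B := fun x => hB x (by rw [hu]; exact (mem_Om _).mp x.2)
  refine ⟨κ, inferInstance, e, fun x => π ⟨x, hB' x⟩, σ, ?_, fun x => hσ _ _ rfl, ?_⟩
  · have h1 : C (5 ^ 25 : B) * ∏ x : Om, (X - C (⟨x, hB' x⟩ : B)) =
        evL qL X + C uB * evL rL X := by
      apply map_injective B.subtype Subtype.val_injective
      rw [map_lhs, map_rhs]
      simp only [Subring.subtype_apply, hu]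
      exact prod_Om
    have h2 := congrArg (Polynomial.map π) h1
    rwa [map_lhs, map_rhs, hu0] at h2
  · intro G x y h
    have h1 : ev2 G (⟨x, hB' x⟩ : B) (⟨y, hB' y⟩ : B) = 0 := by
      apply Subtype.val_injective
      have := map_ev2 B.subtype G (⟨x, hB' x⟩ : B) (⟨y, hB' y⟩ : B)
      exact this.trans h
    have := map_ev2 π G (⟨x, hB' x⟩ : B) (⟨y, hB' y⟩ : B)
    rw [← this, h1, map_zero]

end Red

def cL : List Nat := [9, 440, 63, 1233, 1139, 465, 1063, 273, 389, 1135, 495, 305, 220, 1337, 1234, 2152, 592, 14, 284, 1154, 1408, 1466, 1294, 1124, 680, 1687, 1024, 759, 1823, 2209, 2041, 266, 2148, 2093, 102, 514, 1896, 234, 1002, 1317, 801, 670, 1277, 344, 1178, 838, 261, 1159, 2053, 605, 784, 108, 1954, 1168, 723, 2115, 1940, 420, 1297, 1977, 565, 1839, 725, 1712, 1041, 567, 1052, 2276, 156, 579, 992, 442, 1119, 2143, 455, 1837, 2016, 1599, 606, 1311, 1443, 1944, 1957, 607, 341]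

def evN (m : Nat) : List Nat → Nat → Nat
  | [], _ => 0
  | a :: l, x => (a + x * evN m l x) % m

def redM (m : Nat) : List Int → List Nat
  | [] => []
  | a :: l => (a % (m : Int)).toNat :: redM m l

theorem redM_cast (m : Nat) [NeZero m] (a : Int) :
    ((((a % (m : Int)).toNat : ℕ) : ZMod m)) = (a : ZMod m) := by
  have h : (0 : Int) ≤ a % (m : Int) := Int.emod_nonneg _ (by exact_mod_cast NeZero.ne m)
  have h1 : ((((a % (m : Int)).toNat : ℕ) : Int) : ZMod m) = ((a % (m : Int) : Int) : ZMod m) := by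
    rw [Int.toNat_of_nonneg h]
  rw [Int.cast_natCast] at h1
  rw [h1, ZMod.intCast_mod]

theorem evN_red (m : Nat) [NeZero m] (l : List Int) (x : Nat) :
    ((evN m (redM m l) x : ℕ) : ZMod m) = evL l (x : ZMod m) := by
  induction l with
  | nil => simp [redM, evN, evL]
  | cons a l ih =>
    rw [redM, evN, ZMod.natCast_mod, Nat.cast_add, Nat.cast_mul, ih, redM_cast, evL]

def redMM (m : Nat) : List (List Int) → List (List Nat)
  | [] => []
  | a :: l => redM m a :: redMM m l

def rowN (m : Nat) : List (List Nat) → Nat → List Nat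
  | [], _ => []
  | a :: l, x => evN m a x :: rowN m l x

theorem evN_row (m : Nat) [NeZero m] (L : List (List Int)) (x y : Nat) :
    ((evN m (rowN m (redMM m L) x) y : ℕ) : ZMod m) = ev2 L (x : ZMod m) (y : ZMod m) := by
  induction L with
  | nil => simp [redMM, rowN, evN, ev2]
  | cons a l ih =>
    rw [redMM, rowN, evN, ZMod.natCast_mod, Nat.cast_add, Nat.cast_mul, ih, evN_red, ev2]

def forceNL {β : Type} : List Nat → (List Nat → β) → β
  | [], f => f []
  | a :: as, f => forceN a fun a => forceNL as fun l => f (a :: l)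

theorem forceNL_eq {β : Type} (l : List Nat) (f : List Nat → β) : forceNL l f = f l := by
  induction l generalizing f with
  | nil => rfl
  | cons a as ih => simp [forceNL, forceN_eq, ih]

def forceNLL {β : Type} : List (List Nat) → (List (List Nat) → β) → β
  | [], f => f []
  | a :: as, f => forceNL a fun a => forceNLL as fun l => f (a :: l)

theorem forceNLL_eq {β : Type} (l : List (List Nat)) (f : List (List Nat) → β) :
    forceNLL l f = f l := by
  induction l generalizing f with
  | nil => rfl
  | cons a as ih => simp [forceNLL, forceNL_eq, ih]

def allJ (m : Nat) (row : List Nat) : List Nat → Nat → Bool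
  | [], _ => true
  | c :: cs, k => forceN k fun k =>
    (adjN.testBit k || !(Nat.beq (evN m row c) 0)) && allJ m row cs (k + 1)

theorem allJ_spec {m : Nat} {row cs : List Nat} {k : Nat} (h : allJ m row cs k = true) (j : Nat)
    (hj : j < cs.length) (h0 : evN m row (cs.getD j 0) = 0) : adjN.testBit (k + j) = true := by
  induction cs generalizing k j with
  | nil => simp at hj
  | cons c cs ih =>
    rw [allJ, forceN_eq, Bool.and_eq_true] at h
    cases j with
    | zero =>
      simp only [List.getD_cons_zero] at h0
      rw [h0] at h
      simpa using h.1
    | succ j =>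
      have := ih h.2 j (by simpa using hj) (by simpa using h0)
      rwa [Nat.add_assoc, Nat.add_comm 1] at this

def allI (m : Nat) (GM : List (List Nat)) (ds : List Nat) : List Nat → Nat → Bool
  | [], _ => true
  | c :: cs, k => forceN k fun k =>
    (forceNL (rowN m GM c) fun row => allJ m row ds k) && allI m GM ds cs (k + 85)

theorem allI_spec {m : Nat} {GM : List (List Nat)} {ds cs : List Nat} {k : Nat}
    (h : allI m GM ds cs k = true) (i : Nat) (hi : i < cs.length) (j : Nat) (hj : j < ds.length)
    (h0 : evN m (rowN m GM (cs.getD i 0)) (ds.getD j 0) = 0) :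
    adjN.testBit (k + 85 * i + j) = true := by
  induction cs generalizing k i with
  | nil => simp at hi
  | cons c cs ih =>
    rw [allI, forceN_eq, Bool.and_eq_true, forceNL_eq] at h
    cases i with
    | zero => exact allJ_spec h.1 j hj (by simpa using h0)
    | succ i =>
      have := ih h.2 i (by simpa using hi) (by simpa using h0)
      rwa [show k + 85 + 85 * i + j = k + 85 * (i + 1) + j by ring] at this

def chkG : Bool := forceNLL (redMM 2311 Gpl) fun GM => allI 2311 GM cL cL 0

theorem chkG_true : chkG = true := by decide +kernel

theorem adj_of_zero (i j : Fin 85)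
    (h : ev2 Gpl ((cL.getD i 0 : ℕ) : ZMod 2311) ((cL.getD j 0 : ℕ) : ZMod 2311) = 0) :
    adj i j = true := by
  have h1 := chkG_true
  rw [chkG, forceNLL_eq] at h1
  have hl : cL.length = 85 := rfl
  have := allI_spec h1 i (by rw [hl]; exact i.2) j (by rw [hl]; exact j.2) (by
    rw [← evN_row, ZMod.natCast_eq_zero_iff] at h
    refine Nat.eq_zero_of_dvd_of_lt h ?_
    have : redMM 2311 Gpl = redM 2311 (Gpl.headD []) :: redMM 2311 Gpl.tail := rfl
    rw [this, rowN, evN]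
    exact Nat.mod_lt _ (by norm_num))
  rw [Nat.zero_add] at this
  exact this

def rootChk (m u : Nat) (ql rl : List Nat) : List Nat → Bool
  | [] => true
  | c :: cs => Nat.beq ((evN m ql c + u * evN m rl c) % m) 0 && rootChk m u ql rl cs

theorem rootChk_spec {m u : Nat} [NeZero m] {cs : List Nat}
    (h : rootChk m u (redM m qL) (redM m rL) cs = true) (c : Nat) (hc : c ∈ cs) :
    evL qL (c : ZMod m) + (u : ZMod m) * evL rL (c : ZMod m) = 0 := by
  induction cs with
  | nil => simp at hc
  | cons d cs ih =>
    rw [rootChk, Bool.and_eq_true] at h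
    rcases List.mem_cons.mp hc with rfl | hc
    · have := Nat.eq_of_beq_eq_true h.1
      rw [← evN_red, ← evN_red, ← Nat.cast_mul, ← Nat.cast_add, ← ZMod.natCast_mod, this]
      simp
    · exact ih h.2 hc

def chkR (m u : Nat) (cs : List Nat) : Bool :=
  forceL qL fun ql => forceL rL fun rl => forceNL (redM m ql) fun qm => forceNL (redM m rl) fun rm =>
    rootChk m u qm rm cs

theorem chkR_spec {m u : Nat} [NeZero m] {cs : List Nat} (h : chkR m u cs = true)
    (c : Nat) (hc : c ∈ cs) :
    evL qL (c : ZMod m) + (u : ZMod m) * evL rL (c : ZMod m) = 0 := by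
  rw [chkR, forceL_eq, forceL_eq, forceNL_eq, forceNL_eq] at h
  exact rootChk_spec h c hc

theorem c_root (i : Fin 85) : evL qL ((cL.getD i 0 : ℕ) : ZMod 2311) +
    ((364 : ℕ) : ZMod 2311) * evL rL ((cL.getD i 0 : ℕ) : ZMod 2311) = 0 := by
  have h : chkR 2311 364 cL = true := by decide +kernel
  refine chkR_spec h _ ?_
  have hl : cL.length = 85 := rfl
  rw [List.getD_eq_getElem _ _ (by rw [hl]; exact i.2)]
  exact List.getElem_mem _

theorem c_inj (i j : Fin 85)
    (h : ((cL.getD i 0 : ℕ) : ZMod 2311) = ((cL.getD j 0 : ℕ) : ZMod 2311)) : i = j := by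
  have h1 : ∀ i j : Fin 85, cL.getD i 0 % 2311 = cL.getD j 0 % 2311 → i = j := by decide +kernel
  exact h1 i j ((ZMod.natCast_eq_natCast_iff' _ _ _).mp h)

theorem adj_card (i : Fin 85) : (Finset.univ.filter fun j => adj i j = true).card = 20 := by
  revert i
  decide +kernel

section Split
open Polynomial

attribute [local irreducible] qL rL Gpl

theorem r_ne_zero (x : Om) : evL rL (x : S) ≠ 0 := by
  intro h
  have h1 := (mem_Om _).mp x.2
  rw [h, mul_zero, add_zero] at h1
  obtain ⟨a, b, hab⟩ := cop_qr
  have h2 := congrArg (eval₂RingHom (algebraMap ℚ S) (x : S)) hab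
  rw [map_add, map_mul, map_mul, map_evL, map_evL, map_one] at h2
  simp only [coe_eval₂RingHom, eval₂_X, h, h1, mul_zero, add_zero] at h2
  exact zero_ne_one h2

theorem natDegree_ev2 {R : Type} [CommRing R] (L : List (List Int)) (x : R) :
    (ev2 L (C x) (X : R[X])).natDegree ≤ L.length - 1 := by
  induction L with
  | nil => simp [ev2]
  | cons a L ih =>
    rw [ev2, ← map_evL]
    refine natDegree_add_le_of_degree_le (by simp) ?_
    cases L with
    | nil => simp [ev2]
    | cons b L =>
      refine natDegree_mul_le.trans ?_
      have := natDegree_X_le (R := R)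
      simp only [List.length_cons] at ih ⊢
      omega

open Classical in
theorem nbr_card (x : Om) :
    20 ≤ (Finset.univ.filter fun y : Om => ev2 Gpl (x : S) (y : S) = 0).card := by
  obtain ⟨H, hl, hH⟩ := GH_main
  have h1 := hH (C (x : S)) X
  have hq : evL qL (C (x : S)) = - (C uS * evL rL (C (x : S))) := by
    have := (mem_Om _).mp x.2
    rw [← map_evL, ← map_evL, ← C_mul, ← C_neg]
    congr 1
    linear_combination this
  have h2 : evL rL (C (x : S)) * (C (5 ^ 25 : S) * ∏ y : Om, (X - C (y : S))) =
      ev2 Gpl (C (x : S)) X * ev2 H (C (x : S)) X := by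
    rw [prod_Om, ← h1, hq]
    ring
  have hne : ev2 H (C (x : S)) X ≠ 0 := by
    intro h0
    rw [h0, mul_zero, ← map_evL] at h2
    have h3 : (∏ y : Om, (X - C (y : S))) ≠ 0 := Finset.prod_ne_zero_iff.mpr fun y _ => X_sub_C_ne_zero _
    have h4 : (5 ^ 25 : S) ≠ 0 := by
      have : CharZero S := algebraRat.charZero S
      exact pow_ne_zero _ (by norm_num)
    exact mul_ne_zero (C_ne_zero.mpr (r_ne_zero x)) (mul_ne_zero (C_ne_zero.mpr h4) h3) h2
  have hev : ∀ (L : List (List Int)) (y : S), (ev2 L (C (x : S)) X).eval y = ev2 L (x : S) y := by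
    intro L y
    rw [← coe_evalRingHom, map_ev2]
    simp
  have hor : ∀ y : Om, ev2 Gpl (x : S) (y : S) = 0 ∨ ev2 H (x : S) (y : S) = 0 := by
    intro y
    rw [← mul_eq_zero, ← hev, ← hev, ← eval_mul, ← h2, eval_mul, eval_mul, eval_prod,
      Finset.prod_eq_zero (Finset.mem_univ y) (by simp), mul_zero, mul_zero]
  have hc : (Finset.univ.filter fun y : Om => ev2 H (x : S) (y : S) = 0).card ≤ 65 := by
    have hd : (ev2 H (C (x : S)) X).natDegree ≤ 65 := (natDegree_ev2 H _).trans (by omega)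
    have h5 := (Multiset.toFinset_card_le _).trans ((card_roots' (ev2 H (C (x : S)) X)).trans hd)
    rw [← Finset.card_image_of_injective _ Subtype.val_injective]
    refine (Finset.card_le_card ?_).trans h5
    intro y hy
    obtain ⟨z, hz, rfl⟩ := Finset.mem_image.mp hy
    rw [Multiset.mem_toFinset, mem_roots hne, IsRoot.def, hev]
    exact (Finset.mem_filter.mp hz).2
  have hu : (Finset.univ.filter fun y : Om => ev2 Gpl (x : S) (y : S) = 0) ∪
      (Finset.univ.filter fun y : Om => ev2 H (x : S) (y : S) = 0) = Finset.univ := by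
    ext y
    simpa using hor y
  have h6 := Finset.card_union_le (Finset.univ.filter fun y : Om => ev2 Gpl (x : S) (y : S) = 0)
    (Finset.univ.filter fun y : Om => ev2 H (x : S) (y : S) = 0)
  rw [hu, Finset.card_univ, card_Om] at h6
  omega

theorem exists_root_of {κ : Type} [Field κ] {ρ : Om → κ} {f : κ[X]}
    (h : C (5 ^ 25 : κ) * ∏ x : Om, (X - C (ρ x)) = f) (h5 : (5 : κ) ≠ 0) (c : κ)
    (hc : f.eval c = 0) : ∃ x, ρ x = c := by
  rw [← h, eval_mul, eval_C, eval_prod, mul_eq_zero, or_iff_right (pow_ne_zero _ h5),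
    Finset.prod_eq_zero_iff] at hc
  obtain ⟨x, -, hx⟩ := hc
  refine ⟨x, ?_⟩
  rw [eval_sub, eval_X, eval_C, sub_eq_zero] at hx
  exact hx.symm

theorem eval_Fbar {R : Type} [CommRing R] (u c : R) :
    (evL qL X + C u * evL rL X).eval c = evL qL c + u * evL rL c := by
  rw [eval_add, eval_mul, eval_C, ← coe_evalRingHom, map_evL, map_evL, coe_evalRingHom, eval_X]

instance fact2311 : Fact (Nat.Prime 2311) := ⟨by norm_num⟩

theorem labelling : ∃ lam : Fin 85 ≃ Om, ∀ i j,
    ev2 Gpl (lam i : S) (lam j : S) = 0 ↔ adj i j = true := by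
  classical
  have h5 : (5 : ZMod 2311) ≠ 0 := by decide
  obtain ⟨κ, _, e, ρ, σ, h1, -, h3⟩ := red 2311 h5 ((364 : ℕ) : ZMod 2311)
  have h5' : (5 : κ) ≠ 0 := by
    rw [← map_ofNat e 5, Ne, map_eq_zero_iff e e.injective]
    exact h5
  have hx : ∀ i : Fin 85, ∃ x : Om, ρ x = e ((cL.getD i 0 : ℕ) : ZMod 2311) := by
    intro i
    refine exists_root_of h1 h5' _ ?_
    rw [eval_Fbar, ← map_evL, ← map_evL, ← map_mul, ← map_add, c_root, map_zero]
  choose lam hlam using hx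
  have hinj : Function.Injective lam := by
    intro i j hij
    apply c_inj
    apply e.injective
    rw [← hlam, ← hlam, hij]
  have hbij : Function.Bijective lam := by
    rw [Fintype.bijective_iff_injective_and_card]
    exact ⟨hinj, by rw [card_Om, Fintype.card_fin]⟩
  refine ⟨Equiv.ofBijective lam hbij, ?_⟩
  have hsub : ∀ i j, ev2 Gpl (lam i : S) (lam j : S) = 0 → adj i j = true := by
    intro i j h
    apply adj_of_zero
    have := h3 Gpl _ _ h
    rw [hlam, hlam, ← map_ev2] at this
    exact (map_eq_zero_iff e e.injective).mp this
  intro i j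
  change ev2 Gpl (lam i : S) (lam j : S) = 0 ↔ adj i j = true
  refine ⟨hsub i j, fun h => ?_⟩
  have hss : (Finset.univ.filter fun j => ev2 Gpl (lam i : S) (lam j : S) = 0) ⊆
      (Finset.univ.filter fun j => adj i j = true) := by
    intro k hk
    rw [Finset.mem_filter] at hk ⊢
    exact ⟨hk.1, hsub i k hk.2⟩
  have hcard : (Finset.univ.filter fun j => ev2 Gpl (lam i : S) (lam j : S) = 0).card =
      (Finset.univ.filter fun y : Om => ev2 Gpl (lam i : S) (y : S) = 0).card := by
    rw [← Finset.card_image_of_injective _ hinj]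
    congr 1
    ext y
    simp only [Finset.mem_image, Finset.mem_filter, Finset.mem_univ, true_and]
    constructor
    · rintro ⟨k, hk, rfl⟩
      exact hk
    · intro hy
      obtain ⟨k, rfl⟩ := hbij.2 y
      exact ⟨k, hy, rfl⟩
  have hle := nbr_card (lam i)
  have heq := Finset.eq_of_subset_of_card_le hss (by
    rw [adj_card, hcard]
    convert hle)
  have : j ∈ (Finset.univ.filter fun j => adj i j = true) := by simpa using h
  rw [← heq, Finset.mem_filter] at this
  exact this.2

end Split

def aM : List Int := [4, 6, 4, 4, 7, 4, 1, 5, 7, 3, 7, 1, 3, 2, 1, 2, 6, 0, 2, 3, 9, 2, 3, 10, 1, 8, 6, 7, 6, 4, 0, 7, 0, 6, 5, 7, 4, 11, 9, 1, 0, 2, 10, 12, 5, 7, 0, 9, 9, 6, 12, 8, 12, 12, 8, 8, 0, 9, 9, 2, 6, 1, 7, 2, 3, 2, 5, 1, 12, 0, 9, 12, 2, 2, 7, 9, 5]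
def tH : List Int := [5, 1, 3, 1]
def tN : List Int := [9, 6, 2]
def tQ : List Int := [6, 8, 10, 5, 7, 4, 7, 0, 8, 10, 1]
def tC : List (List Int × List Int) := [([1, 6, 11], [11, 8]), ([0, 1], [2, 5])]
def tU : List Int := [0, 4]
def tV : List Int := [3, 12, 11]
def fH : List Int := [6, 12, 10, 0, 3, 1]
def fN : List Int := [5, 8, 11, 1, 11]
def fQ : List Int := [10, 9, 9, 8, 12, 2, 9, 10, 1]
def fC : List (List Int × List Int) := [([7, 7, 1, 7, 10], [12, 6, 3, 1, 8, 1, 8, 12, 5, 7, 4, 7]), ([4, 2, 8, 6, 11], [2, 1, 6, 2, 8, 3, 2, 0, 1, 4, 6, 4]), ([7, 8, 6, 12, 7], [1, 1, 3, 8, 2, 0, 6, 11, 5, 7, 4, 7]), ([0, 1], [11, 5, 1, 2, 8, 9, 10, 3, 2, 8, 12, 8])]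
def fU : List Int := [1, 10, 7, 12]
def fV : List Int := [12, 0, 12, 5, 6]

section PlaceA
open Polynomial

def zeroM (m : Int) : List Int → Bool
  | [] => true
  | a :: as => a % m == 0 && zeroM m as

theorem zeroM_spec {R : Type*} [CommRing R] {m : Int} (hm : (m : R) = 0) {l : List Int}
    (h : zeroM m l = true) (x : R) : evL l x = 0 := by
  induction l with
  | nil => rfl
  | cons a as ih =>
    simp only [zeroM, Bool.and_eq_true, beq_iff_eq] at h
    rw [evL, ih h.2, mul_zero, add_zero]
    obtain ⟨k, rfl⟩ := Int.dvd_of_emod_eq_zero h.1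
    rw [Int.cast_mul, hm, zero_mul]

def eqM (m : Int) (a b : List Int) : Bool :=
  forceL a fun a => forceL b fun b => zeroM m (addL a (negL b))

theorem eqM_spec {R : Type*} [CommRing R] {m : Int} (hm : (m : R) = 0) {a b : List Int}
    (h : eqM m a b = true) (x : R) : evL a x = evL b x := by
  rw [eqM, forceL_eq, forceL_eq] at h
  have := zeroM_spec hm h x
  rw [ev_addL, negL, ev_smulL] at this
  push_cast at this
  linear_combination this

def FL (u : Int) : List Int := forceL qL fun a => forceL rL fun b => addL a (smulL u b)

def prodF : List (List Int) → List Int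
  | [] => [1]
  | f :: fs => forceL (prodF fs) fun p => mulL f p

def derL : List Int → List Int
  | [] => []
  | _ :: l => forceL (derL l) fun d => addL l (0 :: d)

def compL (N : List Int) : List Int → List Int
  | [] => []
  | a :: l => forceL (compL N l) fun d => addL [a] (mulL N d)

theorem ev_FL {R : Type*} [CommRing R] (u : Int) (x : R) :
    evL (FL u) x = evL qL x + (u : R) * evL rL x := by
  rw [FL, forceL_eq, forceL_eq, ev_addL, ev_smulL]

theorem ev_prodF {R : Type*} [CommRing R] (fs : List (List Int)) (x : R) :
    evL (prodF fs) x = (fs.map fun f => evL f x).prod := by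
  induction fs with
  | nil => simp [prodF, evL]
  | cons f fs ih => rw [prodF, forceL_eq, ev_mulL, ih, List.map_cons, List.prod_cons]

theorem ev_derL {R : Type*} [CommRing R] (l : List Int) :
    derivative (evL l (X : R[X])) = evL (derL l) X := by
  induction l with
  | nil => simp [derL, evL]
  | cons a l ih =>
    rw [derL, forceL_eq, ev_addL, evL, evL, derivative_add, derivative_mul, ih, derivative_X,
      derivative_intCast]
    push_cast
    ring

theorem ev_compL {R : Type*} [CommRing R] (N l : List Int) (x : R) :
    evL (compL N l) x = evL l (evL N x) := by
  induction l with
  | nil => simp [compL, evL]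
  | cons a l ih =>
    rw [compL, forceL_eq, ev_addL, ev_mulL, ih]
    simp [evL]

theorem eval_evL {R : Type*} [CommRing R] (l : List Int) (c : R) :
    (evL l (X : R[X])).eval c = evL l c := by
  rw [← coe_evalRingHom, map_evL, coe_evalRingHom, eval_X]

theorem der_zero {κ : Type} [Field κ] {ρ : Om → κ} {f : κ[X]}
    (h : C (5 ^ 25 : κ) * ∏ x : Om, (X - C (ρ x)) = f) {x y : Om} (hxy : x ≠ y) (he : ρ x = ρ y) :
    f.derivative.eval (ρ x) = 0 := by
  classical
  have h1 : (X - C (ρ x)) * (X - C (ρ x)) ∣ f := by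
    rw [← h, ← Finset.mul_prod_erase _ _ (Finset.mem_univ x),
      ← Finset.mul_prod_erase _ _ (Finset.mem_erase.mpr ⟨hxy.symm, Finset.mem_univ y⟩), ← he]
    exact ⟨C (5 ^ 25 : κ) * ∏ z ∈ (Finset.univ.erase x).erase y, (X - C (ρ z)), by ring⟩
  obtain ⟨g, rfl⟩ := h1
  simp

theorem root_of_dvd {κ : Type} [Field κ] {ρ : Om → κ} {f h : κ[X]}
    (hf : C (5 ^ 25 : κ) * ∏ x : Om, (X - C (ρ x)) = f) (h5 : (5 : κ) ≠ 0) (hd : h ∣ f)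
    (hdeg : h.natDegree ≠ 0) : ∃ x, h.eval (ρ x) = 0 := by
  by_contra hc
  push Not at hc
  have hcop : IsCoprime h f := by
    rw [← hf]
    refine IsCoprime.mul_right ?_ (IsCoprime.prod_right fun x _ => ?_)
    · exact (isCoprime_one_right (x := h)).of_isCoprime_of_dvd_right
        ((isUnit_C.mpr (pow_ne_zero 25 h5).isUnit).dvd)
    · refine (((irreducible_X_sub_C (ρ x)).coprime_iff_not_dvd).mpr fun hx => ?_).symm
      exact hc x (dvd_iff_isRoot.mp hx)
  have := hcop.isUnit_of_dvd' dvd_rfl hd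
  exact hdeg (natDegree_eq_zero_of_isUnit this)

theorem frob_evL {κ : Type} [Field κ] (l : ℕ) [Fact l.Prime] [CharP κ l] (a : List Int) (y : κ) :
    evL a y ^ l = evL a (y ^ l) := map_evL (frobenius κ l) a y

def chkC (m : Int) (h N : List Int) : List Int → List (List Int × List Int) → Bool
  | A, [] => eqM m A [0, 1]
  | A, (B, Q) :: cs => eqM m (compL N A) (addL B (mulL h Q)) && chkC m h N B cs

theorem chkC_spec {κ : Type} [Field κ] (l : ℕ) [Fact l.Prime] [CharP κ l] {h N A : List Int}
    {cs : List (List Int × List Int)} (hc : chkC l h N A cs = true) (y : κ) (hy : evL h y = 0)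
    (hN : y ^ l = evL N y) : ((fun z : κ => z ^ l)^[cs.length]) (evL A y) = y := by
  have hl : (((l : ℕ) : Int) : κ) = 0 := by rw [Int.cast_natCast, CharP.cast_eq_zero]
  induction cs generalizing A with
  | nil =>
    rw [chkC] at hc
    have := eqM_spec hl hc y
    rw [List.length_nil, Function.iterate_zero, id, this]
    simp [evL]
  | cons BQ cs ih =>
    obtain ⟨B, Q⟩ := BQ
    rw [chkC, Bool.and_eq_true] at hc
    have := eqM_spec hl hc.1 y
    rw [ev_compL, ev_addL, ev_mulL, hy, zero_mul, add_zero] at this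
    rw [List.length_cons, Function.iterate_succ_apply, frob_evL, hN, this]
    exact ih hc.2

/-- All the checks for one irreducible factor. -/
def chkF (m : Nat) (h N Q U V : List Int) (cs : List (List Int × List Int)) : Bool :=
  eqM m (List.replicate m 0 ++ [1]) (addL N (mulL h Q)) && chkC m h N N cs &&
    eqM m (addL (mulL U h) (mulL V (addL N [0, -1]))) [1]

theorem ev_rep {R : Type*} [CommRing R] (m : Nat) (x : R) :
    evL (List.replicate m 0 ++ [1]) x = x ^ m := by
  induction m with
  | zero => simp [evL]
  | succ m ih => rw [List.replicate_succ, List.cons_append, evL, ih]; push_cast; ring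

theorem chkF_spec {κ : Type} [Field κ] (l : ℕ) [Fact l.Prime] [CharP κ l] {h N Q U V : List Int}
    {cs : List (List Int × List Int)} (hc : chkF l h N Q U V cs = true) (y : κ)
    (hy : evL h y = 0) :
    ((fun z : κ => z ^ l)^[cs.length + 1]) y = y ∧ y ^ l ≠ y := by
  have hl : (((l : ℕ) : Int) : κ) = 0 := by rw [Int.cast_natCast, CharP.cast_eq_zero]
  rw [chkF, Bool.and_eq_true, Bool.and_eq_true] at hc
  obtain ⟨⟨h1, h2⟩, h3⟩ := hc
  have hN : y ^ l = evL N y := by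
    have := eqM_spec hl h1 y
    rwa [ev_rep, ev_addL, ev_mulL, hy, zero_mul, add_zero] at this
  refine ⟨?_, fun he => ?_⟩
  · rw [Function.iterate_succ_apply, hN]
    exact chkC_spec l h2 y hy hN
  · have := eqM_spec hl h3 y
    rw [ev_addL, ev_mulL, ev_mulL, ev_addL, hy, ← hN, he] at this
    simp [evL] at this

theorem dvd_order {κ : Type} [Field κ] {l : ℕ} {ρ : Om → κ} {σ : _root_.F.Gal}
    (hσ : ∀ x, ρ (act σ x) = ρ x ^ l) (x : Om) (n : ℕ) (hn : n.Prime)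
    (hp : ((fun z : κ => z ^ l)^[n]) (ρ x) = ρ x) (hne : ρ x ^ l ≠ ρ x) :
    n ∣ orderOf (actHom σ) := by
  have hit : ∀ (k : ℕ) (x : Om), ρ ((actHom σ ^ k) x) = ((fun z : κ => z ^ l)^[k]) (ρ x) := by
    intro k
    induction k with
    | zero => intro x; rfl
    | succ k ih =>
      intro x
      rw [pow_succ, Equiv.Perm.mul_apply, ih, Function.iterate_succ_apply]
      congr 1
      exact hσ x
  by_contra hc
  have h1 : Function.IsPeriodicPt (fun z : κ => z ^ l) (orderOf (actHom σ)) (ρ x) := by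
    have := hit (orderOf (actHom σ)) x
    rw [pow_orderOf_eq_one] at this
    exact this.symm
  have h2 := Function.IsPeriodicPt.gcd (show Function.IsPeriodicPt (fun z : κ => z ^ l) n (ρ x) from hp) h1
  rw [(hn.coprime_iff_not_dvd.mpr hc).gcd_eq_one] at h2
  exact hne h2

def chkA : Bool := eqM 13 (FL 12) (prodF [[-2, 1], tH, fH, aM])

theorem chkA_true : chkA = true := by decide +kernel

theorem chkA2 : chkF 13 tH tN tQ tU tV tC = true := by decide +kernel
theorem chkA3 : chkF 13 fH fN fQ fU fV fC = true := by decide +kernel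
theorem chkA4 : (evI (derL (FL 12)) 2 % 13 == 0) = false := by decide +kernel

instance fact13 : Fact (Nat.Prime 13) := ⟨by norm_num⟩

attribute [local irreducible] qL rL FL

theorem tdeg {κ : Type} [Field κ] : (evL tH (X : κ[X])).natDegree = 3 := by
  have : evL tH (X : κ[X]) = X ^ 3 + 3 * X ^ 2 + X + 5 := by
    simp only [tH, evL]
    push_cast
    ring
  rw [this]
  compute_degree!

theorem fdeg {κ : Type} [Field κ] : (evL fH (X : κ[X])).natDegree = 5 := by
  have : evL fH (X : κ[X]) = X ^ 5 + 3 * X ^ 4 + 10 * X ^ 2 + 12 * X + 6 := by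
    simp only [fH, evL]
    push_cast
    ring
  rw [this]
  compute_degree!

attribute [local irreducible] tH fH aM

theorem placeA : 1275 ∣ Nat.card actHom.range := by
  classical
  have h5 : (5 : ZMod 13) ≠ 0 := by decide
  obtain ⟨κ, _, e, ρ, σ, h1, h2, -⟩ := red 13 h5 ((12 : ℕ) : ZMod 13)
  have h5' : (5 : κ) ≠ 0 := by
    rw [← map_ofNat e 5, Ne, map_eq_zero_iff e e.injective]
    exact h5
  have : CharP κ 13 := charP_of_injective_ringHom e.injective 13
  have hl : ((13 : Int) : κ) = 0 := by exact_mod_cast CharP.cast_eq_zero κ 13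
  have hlX : ((13 : Int) : κ[X]) = 0 := by
    rw [← map_intCast (C : κ →+* κ[X]), hl, map_zero]
  have hF : evL qL X + C (e ((12 : ℕ) : ZMod 13)) * evL rL X = evL (FL 12) (X : κ[X]) := by
    rw [ev_FL, map_natCast, map_natCast, Int.cast_ofNat, Nat.cast_ofNat]
  rw [hF] at h1
  have hfac := eqM_spec hlX chkA_true (X : κ[X])
  rw [ev_prodF] at hfac
  simp only [List.map_cons, List.map_nil, List.prod_cons, List.prod_nil] at hfac
  obtain ⟨x3, hx3⟩ := root_of_dvd h1 h5' (h := evL tH X)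
    (((dvd_mul_right _ _).mul_left _).trans hfac.symm.dvd) (by rw [tdeg]; norm_num)
  obtain ⟨x5, hx5⟩ := root_of_dvd h1 h5' (h := evL fH X)
    ((((dvd_mul_right _ _).mul_left _).mul_left _).trans hfac.symm.dvd) (by rw [fdeg]; norm_num)
  rw [eval_evL] at hx3 hx5
  obtain ⟨x0, hx0⟩ := exists_root_of h1 h5' ((2 : Int) : κ) (by
    rw [hfac, eval_mul, eval_evL]
    simp [evL])
  have hs0 : act σ x0 = x0 := by
    by_contra hc
    have h3 : ρ (act σ x0) = ρ x0 := by
      rw [h2, hx0, ← frobenius_def, map_intCast]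
    have h4 := der_zero h1 (Ne.symm hc) h3.symm
    rw [ev_derL, eval_evL, hx0, ← eq_intCast (Int.castRingHom κ) 2, ← map_evL, ← evI_eq,
      eq_intCast, CharP.intCast_eq_zero_iff κ 13] at h4
    have h6 := chkA4
    rw [beq_eq_false_iff_ne] at h6
    exact h6 (Int.emod_eq_zero_of_dvd (by exact_mod_cast h4))
  obtain ⟨p3, n3⟩ := chkF_spec 13 chkA2 _ hx3
  obtain ⟨p5, n5⟩ := chkF_spec 13 chkA3 _ hx5
  have d3 := dvd_order h2 x3 3 (by norm_num) p3 n3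
  have d5 := dvd_order h2 x5 5 (by norm_num) p5 n5
  have d15 : 15 ∣ orderOf (actHom σ) :=
    (show (15 : ℕ) = 3 * 5 from rfl) ▸ Nat.Coprime.mul_dvd_of_dvd_of_dvd (by norm_num) d3 d5
  let g : actHom.range := ⟨actHom σ, σ, rfl⟩
  let s : MulAction.stabilizer actHom.range x0 := ⟨g, hs0⟩
  have ho : orderOf s = orderOf (actHom σ) := by
    rw [← Subgroup.orderOf_coe, ← Subgroup.orderOf_coe]
  have hst : 15 ∣ Nat.card (MulAction.stabilizer actHom.range x0) :=
    (ho ▸ d15).trans (orderOf_dvd_natCard s)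
  have horb : MulAction.orbit actHom.range x0 = Set.univ := by
    refine Set.eq_univ_of_forall fun y => ?_
    obtain ⟨g, hg⟩ := act_trans x0 y
    exact ⟨⟨actHom g, g, rfl⟩, hg⟩
  have hcard := Nat.card_congr (MulAction.orbitProdStabilizerEquivGroup actHom.range x0)
  rw [Nat.card_prod, horb, Nat.card_univ, Nat.card_eq_fintype_card, card_Om] at hcard
  rw [← hcard]
  exact Nat.mul_dvd_mul_left 85 hst

end PlaceA

def bC : List Nat := [10, 19, 24, 34, 43, 72, 93, 94, 103, 113, 127, 135, 141, 164, 176]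
def bQ : List (Nat × Nat) := [(5, 97), (7, 47), (10, 164), (12, 17), (16, 20), (27, 30), (31, 7), (35, 125), (37, 11), (41, 135), (43, 114), (53, 169), (54, 139), (58, 104), (59, 167), (61, 137), (63, 173), (65, 96), (78, 33), (78, 144), (82, 39), (83, 73), (84, 79), (91, 112), (113, 6), (114, 178), (115, 73), (118, 29), (141, 96), (144, 3), (148, 34), (151, 142), (157, 177), (171, 174), (174, 43)]
def bU : List Int := [40, 20, 76, 7, 157, 22, 97, 10, 41, 146, 69, 71, 133, 85, 148, 130, 129, 2, 163, 16, 142, 61, 77, 3, 74, 148, 44, 82, 172, 55, 164, 119, 36, 82, 110, 62, 150, 143, 165, 115, 126, 11, 146, 88, 20, 36, 85, 168, 171, 38, 3, 13, 147, 114, 120, 162, 29, 83, 99, 123, 147, 46, 109, 14, 164, 32, 125, 155, 39, 78, 126, 53, 43, 82, 141, 49, 125, 109, 54, 84, 141, 105, 24, 37]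
def bV : List Int := [48, 23, 73, 80, 1, 136, 96, 69, 120, 52, 157, 121, 83, 102, 63, 11, 56, 124, 172, 103, 59, 86, 13, 103, 121, 33, 153, 57, 25, 113, 107, 67, 59, 159, 144, 39, 24, 178, 105, 172, 90, 4, 145, 159, 22, 74, 94, 102, 131, 38, 46, 110, 141, 63, 132, 144, 0, 115, 175, 7, 19, 127, 66, 70, 94, 7, 9, 63, 31, 158, 57, 61, 133, 169, 63, 159, 109, 93, 58, 108, 174, 166, 95, 9, 48]

section PlaceB
open Polynomial

def linB (c : Nat) : List Int := [-(c : Int), 1]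
def quadB (t : Nat × Nat) : List Int := [-(t.2 : Int), -(t.1 : Int), 1]

def chkB : Bool := eqM 179 (FL 90) (prodF ([5 ^ 25] :: (bC.map linB ++ bQ.map quadB)))
theorem chkB_true : chkB = true := by decide +kernel

def chkB2 : Bool := forceL (FL 90) fun f => forceL (derL f) fun d =>
  eqM 179 (addL (mulL bU f) (mulL bV d)) [1]
theorem chkB2_true : chkB2 = true := by decide +kernel

theorem chkB3 : ∀ t ∈ bQ, (t.1 ^ 2 + 4 * t.2) ^ 89 % 179 = 178 := by decide +kernel
theorem chkB4 : ∀ i j : Fin 15, bC.getD i 0 % 179 = bC.getD j 0 % 179 → i = j := by decide +kernel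
theorem bC_len : bC.length = 15 := rfl

instance fact179 : Fact (Nat.Prime 179) := ⟨by norm_num⟩

attribute [local irreducible] qL rL FL bC bQ bU bV

theorem quad_frob {κ : Type} [Field κ] [CharP κ 179] (t : Nat × Nat)
    (ht : (t.1 ^ 2 + 4 * t.2) ^ 89 % 179 = 178) (y : κ) (hy : evL (quadB t) y = 0) :
    y ^ 179 ≠ y ∧ (y ^ 179) ^ 179 = y := by
  obtain ⟨a, b⟩ := t
  have h2 : (2 : κ) ≠ 0 := by
    intro h
    have : ((2 : ℕ) : κ) = 0 := by exact_mod_cast h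
    rw [CharP.cast_eq_zero_iff κ 179] at this
    exact absurd (Nat.le_of_dvd (by norm_num) this) (by norm_num)
  have hy' : y ^ 2 = (a : κ) * y + b := by
    simp only [quadB, evL] at hy
    push_cast at hy
    linear_combination hy
  have hD : ((a : κ) ^ 2 + 4 * b) ^ 89 = -1 := by
    have h1 : (((a ^ 2 + 4 * b) ^ 89 + 1 : ℕ) : κ) = 0 := by
      rw [CharP.cast_eq_zero_iff κ 179]
      simp only at ht
      omega
    rw [Nat.cast_add, Nat.cast_pow, Nat.cast_one] at h1
    have h3 := eq_neg_of_add_eq_zero_left h1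
    rw [Nat.cast_add, Nat.cast_pow, Nat.cast_mul, Nat.cast_ofNat] at h3
    exact h3
  have hw2 : (2 * y - a) ^ 2 = (a : κ) ^ 2 + 4 * b := by linear_combination 4 * hy'
  have hw : (2 * y - a) ^ 179 = -(2 * y - (a : κ)) := by
    rw [show 179 = 2 * 89 + 1 from rfl, pow_succ, pow_mul, hw2, hD, neg_one_mul]
  have hfr : (2 * y - a) ^ 179 = 2 * y ^ 179 - (a : κ) := by
    have := map_sub (frobenius κ 179) (2 * y) (a : κ)
    rw [map_mul, map_natCast, map_ofNat] at this
    exact this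
  have hy1 : y ^ 179 = a - y := by
    apply mul_left_cancel₀ h2
    rw [hw] at hfr
    generalize y ^ 179 = z at hfr ⊢
    linear_combination -hfr
  refine ⟨fun he => ?_, ?_⟩
  · have h0 : 2 * y - (a : κ) = 0 := by
      rw [he] at hy1
      linear_combination hy1
    rw [h0] at hw2
    rw [← hw2] at hD
    norm_num at hD
  · rw [hy1]
    have := map_sub (frobenius κ 179) (a : κ) y
    rw [map_natCast, frobenius_def, frobenius_def, hy1] at this
    rw [this]
    ring

open Classical in
theorem placeB : ∃ σ ∈ actHom.range, Equiv.Perm.sign σ = -1 := by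
  classical
  have h5 : (5 : ZMod 179) ≠ 0 := by decide
  obtain ⟨κ, _, e, ρ, σ, h1, h2, -⟩ := red 179 h5 ((90 : ℕ) : ZMod 179)
  have h5' : (5 : κ) ≠ 0 := by
    rw [← map_ofNat e 5, Ne, map_eq_zero_iff e e.injective]
    exact h5
  have : CharP κ 179 := charP_of_injective_ringHom e.injective 179
  have hl : ((179 : Int) : κ) = 0 := by exact_mod_cast CharP.cast_eq_zero κ 179
  have hF : evL qL X + C (e ((90 : ℕ) : ZMod 179)) * evL rL X = evL (FL 90) (X : κ[X]) := by
    rw [ev_FL, map_natCast, map_natCast, Int.cast_ofNat, Nat.cast_ofNat]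
  rw [hF] at h1
  have hroot : ∀ x, evL (FL 90) (ρ x) = 0 := by
    intro x
    rw [← eval_evL, ← h1, eval_mul, eval_prod, Finset.prod_eq_zero (Finset.mem_univ x) (by simp),
      mul_zero]
  have hinj : Function.Injective ρ := by
    intro x y hxy
    by_contra hc
    have h4 := der_zero h1 hc hxy
    rw [ev_derL, eval_evL] at h4
    have h6 := chkB2_true
    rw [chkB2, forceL_eq, forceL_eq] at h6
    have := eqM_spec hl h6 (ρ x)
    rw [ev_addL, ev_mulL, ev_mulL, h4, hroot] at this
    simp [evL] at this
  have hfac : ∀ y : κ, evL (FL 90) y = 5 ^ 25 *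
      ((bC.map fun c => evL (linB c) y).prod * (bQ.map fun t => evL (quadB t) y).prod) := by
    intro y
    have := eqM_spec hl chkB_true y
    rw [ev_prodF, List.map_cons, List.prod_cons, List.map_append, List.prod_append, List.map_map,
      List.map_map] at this
    have h7 : evL [5 ^ 25] y = (5 : κ) ^ 25 := by
      rw [evL, evL, mul_zero, add_zero, Int.cast_pow, Int.cast_ofNat]
    rw [this, h7]
    rfl
  have hlin : ∀ (c : ℕ) (y : κ), evL (linB c) y = 0 ↔ y = c := by
    intro c y
    simp only [linB, evL]
    push_cast
    rw [mul_zero, add_zero, mul_one, neg_add_eq_zero, eq_comm]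
  have hcase : ∀ x, (∃ c ∈ bC, ρ x = (c : κ)) ∨ ∃ t ∈ bQ, evL (quadB t) (ρ x) = 0 := by
    intro x
    have h := hroot x
    rw [hfac, mul_eq_zero, or_iff_right (pow_ne_zero _ h5'), mul_eq_zero, List.prod_eq_zero_iff,
      List.prod_eq_zero_iff, List.mem_map, List.mem_map] at h
    rcases h with ⟨c, hc, h⟩ | ⟨t, ht, h⟩
    · exact Or.inl ⟨c, hc, (hlin _ _).mp h⟩
    · exact Or.inr ⟨t, ht, h⟩
  have hcl : ∀ c : ℕ, (c : κ) ^ 179 = c := by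
    intro c
    rw [← frobenius_def, map_natCast]
  have hsq : actHom σ ^ 2 = 1 := by
    ext1 x
    apply hinj
    rw [pow_two, Equiv.Perm.mul_apply, Equiv.Perm.one_apply]
    change ρ (act σ (act σ x)) = ρ x
    rw [h2, h2]
    rcases hcase x with ⟨c, -, hc⟩ | ⟨t, ht, h⟩
    · rw [hc, hcl, hcl]
    · exact (quad_frob t (chkB3 t ht) _ h).2
  have hex : ∀ i : Fin 15, ∃ x, ρ x = ((bC.getD i 0 : ℕ) : κ) := by
    intro i
    refine exists_root_of h1 h5' _ ?_
    rw [eval_evL, hfac, List.prod_eq_zero (l := bC.map _), zero_mul, mul_zero]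
    rw [List.mem_map]
    refine ⟨bC.getD i 0, ?_, (hlin _ _).mpr rfl⟩
    rw [List.getD_eq_getElem _ _ (by rw [bC_len]; exact i.2)]
    exact List.getElem_mem _
  choose z hz using hex
  have hfix : ∀ x, act σ x = x ↔ ∃ i, z i = x := by
    intro x
    constructor
    · intro hx
      have hx' : ρ x ^ 179 = ρ x := by rw [← h2, hx]
      rcases hcase x with ⟨c, hc, hcx⟩ | ⟨t, ht, h⟩
      · obtain ⟨n, hn, rfl⟩ := List.getElem_of_mem hc
        refine ⟨⟨n, by rwa [bC_len] at hn⟩, hinj ?_⟩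
        rw [hz, hcx, List.getD_eq_getElem _ _ hn]
      · exact absurd hx' (quad_frob t (chkB3 t ht) _ h).1
    · rintro ⟨i, rfl⟩
      apply hinj
      rw [h2, hz, hcl]
  have hzinj : Function.Injective z := by
    intro i j hij
    apply chkB4
    have h : ((bC.getD i 0 : ℕ) : κ) = ((bC.getD j 0 : ℕ) : κ) := by rw [← hz, ← hz, hij]
    exact (CharP.natCast_eq_natCast κ 179).mp h
  have hcard : Fintype.card (Function.fixedPoints (actHom σ)) = 15 := by
    rw [← Fintype.card_fin 15]
    symm
    refine Fintype.card_of_bijective (f := fun i => ⟨z i, (hfix _).mpr ⟨i, rfl⟩⟩) ⟨?_, ?_⟩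
    · intro i j hij
      exact hzinj (congrArg Subtype.val hij)
    · rintro ⟨x, hx⟩
      obtain ⟨i, rfl⟩ := (hfix x).mp hx
      exact ⟨i, rfl⟩
  refine ⟨actHom σ, ⟨σ, rfl⟩, ?_⟩
  rw [Equiv.Perm.sign_of_pow_two_eq_one hsq, hcard, card_Om]
  rfl

end PlaceB

section Final

theorem gal_card : Nat.card _root_.F.Gal = 1958400 := by
  classical
  obtain ⟨lam, hlam⟩ := labelling
  let c : Equiv.Perm Om ≃* Equiv.Perm (Fin 85) := lam.symm.permCongrHom
  have hc : ∀ (s : Equiv.Perm Om) i, c s i = lam.symm (s (lam i)) := fun s i => rfl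
  let H : Subgroup (Equiv.Perm (Fin 85)) := actHom.range.map c.toMonoidHom
  have hcard : Nat.card H = Nat.card actHom.range :=
    (Nat.card_congr (actHom.range.equivMapOfInjective c.toMonoidHom c.injective).toEquiv).symm
  have hcard2 : Nat.card actHom.range = Nat.card _root_.F.Gal :=
    (Nat.card_congr (MonoidHom.ofInjective actHom_inj).toEquiv).symm
  rw [← hcard2, ← hcard]
  apply group_main
  · rintro _ ⟨_, ⟨g, rfl⟩, rfl⟩
    change ∀ i j, adj (c (actHom g) i) (c (actHom g) j) = adj i j
    intro i j
    rw [Bool.eq_iff_iff, ← hlam, ← hlam, hc, hc, Equiv.apply_symm_apply, Equiv.apply_symm_apply]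
    change ev2 Gpl (g (lam i : S)) (g (lam j : S)) = 0 ↔ _
    have := map_ev2 (g : S →+* S) Gpl (lam i : S) (lam j : S)
    change g _ = ev2 Gpl (g (lam i : S)) (g (lam j : S)) at this
    rw [← this]
    exact map_eq_zero_iff (g : S →+* S) (RingHom.injective _)
  · rw [hcard]
    exact placeA
  · obtain ⟨s, hs, h⟩ := placeB
    refine ⟨c s, ⟨s, hs, rfl⟩, ?_⟩
    rw [← h]
    convert Equiv.Perm.sign_permCongr lam.symm s
    rfl

end Final

end B85

theorem belyi_deg85_stmt17 :
    F.natDegree = 85 ∧ Irreducible F ∧ Nat.card F.Gal = 1958400 := by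
  exact ⟨B85.F_deg, B85.F_irred, B85.gal_card⟩
end
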